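/- Let Q be a bipartite recurrent quiver on a finite vertex set V such that G(Q) is an admissible ADE bigraph, in which every connected component of Γ has Coxeter number h and every connected component of Δ has Coxeter number h'. Let Y(t,v), defined for v ∈ V and t ∈ ℤ with t + ε(v) even, be a family of elements of the field of fractions of ℚ[x_v : v ∈ V] satisfying the Y-system recurrence Y(t+1,v)·Y(t−1,v) = Π_u (1 + Y(t,u))^{B(v,u)} / Π_w (1 + Y(t,w)^{−1})^{A(v,w)} whenever t + ε(v) is odd, with initial conditions Y(ε(v), v) = x_v. Then Y(t + 2(h+h'), v) = Y(t, v) for all v ∈ V and t ∈ ℤ with t + ε(v) even. -/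

import Mathlib

/-!
Write `η = log Y` and `L = log (1 + Y)`.  The `Y`-system becomes a linear recurrence for `η` with
source `L`, built from the wave operators `s² - A s + 1` and `s² - B s + 1`, where `s` is the time
shift and the matrices `A` and `B` commute.  An ADE diagram with Coxeter number `h` has a positive
eigenvector with eigenvalue `2 cos (π / h)` (`exists_perron`), and this forces the Chebyshev
matrices `cheb A n` to be nonnegative for `n ≤ h` and to vanish at `n = h`
(`cheb_nonneg_and_eq_zero`); the same holds for `B` and `h'`.  Green functions truncated with these
matrices produce a multiplicative defect `E` (`exists_defect`, `exists_E`), which measures the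
failure of a solution to be periodic with period `2 (h + h')`.  It remains to show `E 0 = E 1 = 1`.

Two facts about the defect are needed.

* `E 0` and `E 1` are monomials in the initial variables times `F`-polynomials `FF`, and these are
  Laurent polynomials (`laur_FF`).  The `F`-polynomials have at most poles along the divisors
  `1 + y 1 v₀ = 0`.  Such poles are excluded by a valuation along the divisor for which the solution
  is regular again at times `3` and `4` (`exists_special`).
* In a valuation where the initial variables `(y 0 v)⁻¹` and `y 1 v` are positive, the values of
  `y` are positive for `h` steps, negative for `h'` steps, and so on alternately (`phase`).  As `E 0`
  and `E 1` are products of powers of `1 + y` at positive and `1 + y⁻¹` at negative times, they are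
  congruent to `1` modulo the maximal ideal (`positive_chart`).

Let `S` be the finite set of exponents occurring in the Laurent polynomials `E 0 - 1` and
`E 1 - 1`.  By the second fact they have positive weight on the whole positive orthant, so their
entries are nonnegative.  Weigh the time `0` variables by a positive eigenvector `ξ` of `B` and the
time `1` variables infinitesimally.  The congruence of `E` to `1` to the order of the least weight
in `S` propagates one step forward and one step backward in time, and comparing weights there gives
`a ≤ b` and `a ≤ ρ a - b` for the `ξ`-weighted sums `a` and `b` of the two halves of a least
exponent, where `ρ = 2 cos (π / h') < 2`.  Hence `a = b = 0` and the least exponent is zero, which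
contradicts its positive weight.  So `S` is empty (`periodic`).

All this concerns solutions indexed by natural numbers without a parity restriction.  A solution of
the bipartite `Y`-system consists of subtraction-free expressions (`ysystem_pos`), and it is the
restriction of such a solution to the sites of the right parity (`exists_sol_of_pos`).
-/

open scoped BigOperators

/-- A bipartite quiver on a finite vertex set `V`, encoded by a bipartition `eps`
and the two symmetric edge-multiplicity matrices `A` (arrows from `eps = 0` to `eps = 1`)
and `B` (arrows from `eps = 1` to `eps = 0`). -/
def BipartiteData {V : Type} [Fintype V] (eps : V → ℤ) (A B : V → V → ℕ) : Prop :=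
  (∀ v, eps v = 0 ∨ eps v = 1) ∧
  (∀ u v, A u v = A v u) ∧
  (∀ u v, B u v = B v u) ∧
  (∀ v, A v v = 0) ∧
  (∀ v, B v v = 0) ∧
  (∀ u v, eps u = eps v → A u v = 0 ∧ B u v = 0) ∧
  (∀ u v, A u v * B u v = 0)

/-- A bipartite quiver is recurrent iff the matrices `A` and `B` commute. -/
def RecurrentQuiver {V : Type} [Fintype V] (A B : V → V → ℕ) : Prop :=
  ∀ u v, (∑ w, A u w * B w v) = ∑ w, B u w * A w v

/-- The Dynkin diagram `A_n`: vertices `0, …, n-1` with edges `{i, i+1}`. -/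
def adeA (n : ℕ) : SimpleGraph (Fin n) :=
  SimpleGraph.fromRel (fun i j => (i : ℕ) + 1 = (j : ℕ))

/-- The Dynkin diagram `D_n` (`n ≥ 4`): a path on vertices `0, …, n-2`
together with the edge `{n-3, n-1}`. -/
def adeD (n : ℕ) : SimpleGraph (Fin n) :=
  SimpleGraph.fromRel (fun i j =>
    ((i : ℕ) + 1 = (j : ℕ) ∧ (j : ℕ) ≤ n - 2) ∨ ((i : ℕ) = n - 3 ∧ (j : ℕ) = n - 1))

/-- The Dynkin diagram `E_n` (`n = 6, 7, 8`): a path on vertices `0, …, n-2`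
together with the edge `{2, n-1}`. -/
def adeE (n : ℕ) : SimpleGraph (Fin n) :=
  SimpleGraph.fromRel (fun i j =>
    ((i : ℕ) + 1 = (j : ℕ) ∧ (j : ℕ) ≤ n - 2) ∨ ((i : ℕ) = 2 ∧ (j : ℕ) = n - 1))

/-- A graph is an ADE Dynkin diagram if it is isomorphic to some `A_n` (`n ≥ 1`),
`D_n` (`n ≥ 4`), or `E_n` (`n = 6, 7, 8`). -/
def IsADE {W : Type*} (G : SimpleGraph W) : Prop :=
  (∃ n : ℕ, 1 ≤ n ∧ Nonempty (G ≃g adeA n)) ∨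
  (∃ n : ℕ, 4 ≤ n ∧ Nonempty (G ≃g adeD n)) ∨
  (∃ n : ℕ, (n = 6 ∨ n = 7 ∨ n = 8) ∧ Nonempty (G ≃g adeE n))

/-- `G` is an ADE Dynkin diagram with Coxeter number `h`:
`h(A_n) = n+1`, `h(D_n) = 2n-2`, `h(E_6) = 12`, `h(E_7) = 18`, `h(E_8) = 30`. -/
def HasCoxeterNumber {W : Type*} (G : SimpleGraph W) (h : ℕ) : Prop :=
  (∃ n : ℕ, 1 ≤ n ∧ h = n + 1 ∧ Nonempty (G ≃g adeA n)) ∨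
  (∃ n : ℕ, 4 ≤ n ∧ h = 2 * n - 2 ∧ Nonempty (G ≃g adeD n)) ∨
  ((h = 12 ∧ Nonempty (G ≃g adeE 6)) ∨ (h = 18 ∧ Nonempty (G ≃g adeE 7)) ∨
    (h = 30 ∧ Nonempty (G ≃g adeE 8)))

/-- The simple graph on `V` whose edges are the pairs `{u, v}` with `A u v = 1`. -/
def graphOf {V : Type} (A : V → V → ℕ) : SimpleGraph V :=
  SimpleGraph.fromRel (fun u v => A u v = 1)

/-- `G(Q)` is an admissible ADE bigraph: `A` and `B` take values in `{0, 1}` and every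
connected component of `Γ` and of `Δ` is an ADE Dynkin diagram. -/
def AdmissibleADE {V : Type} [Fintype V] (A B : V → V → ℕ) : Prop :=
  (∀ u v, A u v ≤ 1) ∧ (∀ u v, B u v ≤ 1) ∧
  (∀ c : (graphOf A).ConnectedComponent, IsADE ((graphOf A).induce c.supp)) ∧
  (∀ c : (graphOf B).ConnectedComponent, IsADE ((graphOf B).induce c.supp))

/-- The `Y`-system associated with a bipartite quiver. -/
def IsYSystem {V : Type} [Fintype V] (eps : V → ℤ) (A B : V → V → ℕ)
    (Y : ℤ → V → FractionRing (MvPolynomial V ℚ)) : Prop :=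
  (∀ v, Y (eps v) v =
      algebraMap (MvPolynomial V ℚ) (FractionRing (MvPolynomial V ℚ)) (MvPolynomial.X v)) ∧
  (∀ (t : ℤ) (v : V), Odd (t + eps v) →
    Y (t + 1) v * Y (t - 1) v =
      (∏ u, (1 + Y t u) ^ B v u) / (∏ u, (1 + (Y t u)⁻¹) ^ A v u))

/-! ### Chebyshev sequences and Green functions -/

namespace ADEPeriodicity
open Finset

/-- The sequence `K 0 = 0`, `K 1 = 1`, `K (n+2) = a K (n+1) - K n` (a rescaled Chebyshev
polynomial of the second kind), evaluated at an element `a` of an arbitrary ring. -/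
def cheb {R : Type*} [Ring R] (a : R) : ℕ → R
  | 0 => 0
  | 1 => 1
  | n + 2 => a * cheb a (n + 1) - cheb a n

theorem cheb_zero {R : Type*} [Ring R] (a : R) : cheb a 0 = 0 := rfl
theorem cheb_one {R : Type*} [Ring R] (a : R) : cheb a 1 = 1 := rfl
theorem cheb_add_two {R : Type*} [Ring R] (a : R) (n : ℕ) :
    cheb a (n + 2) = a * cheb a (n + 1) - cheb a n := rfl

theorem map_cheb {R S : Type*} [Ring R] [Ring S] (f : R →+* S) (a : R) (n : ℕ) :
    f (cheb a n) = cheb (f a) n := by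
  induction n using Nat.twoStepInduction with
  | zero => simp [cheb]
  | one => simp [cheb]
  | more n ih1 ih2 => simp [cheb_add_two, ih1, ih2]

theorem commute_cheb {R : Type*} [Ring R] {a b : R} (hab : Commute b a) (n : ℕ) :
    Commute b (cheb a n) := by
  induction n using Nat.twoStepInduction with
  | zero => simp [cheb]
  | one => simp [cheb]
  | more n ih1 ih2 => exact (hab.mul_right ih2).sub_right ih1

/-- Cassini identity for the Chebyshev sequence. -/
theorem cheb_cassini {R : Type*} [Ring R] (a : R) (n : ℕ) :
    cheb a (n + 1) * cheb a (n + 1) - cheb a (n + 2) * cheb a n = 1 := by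
  induction n with
  | zero => simp [cheb]
  | succ n ih =>
    have hc : a * cheb a (n + 1) = cheb a (n + 1) * a := commute_cheb (Commute.refl a) (n + 1)
    have e : cheb a (n + 3) = a * cheb a (n + 2) - cheb a (n + 1) := rfl
    have e2 : cheb a (n + 2) = a * cheb a (n + 1) - cheb a n := rfl
    have hc2 : cheb a (n + 2) * cheb a (n+1) = cheb a (n + 1) * cheb a (n+2) := 
      (commute_cheb (commute_cheb (Commute.refl a) (n + 2)).symm (n+1)).eq
    have hc3 : cheb a (n + 2) * cheb a n = cheb a n * cheb a (n+2) := 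
      (commute_cheb (commute_cheb (Commute.refl a) (n + 2)).symm n).eq
    rw [← ih, e, sub_mul, mul_assoc, hc2, ← mul_assoc, hc, hc3]
    have : cheb a n = cheb a (n+1) * a - cheb a (n+2) := by rw [e2, ← hc]; abel
    rw [this]; noncomm_ring

/-- The truncated Green function `∑_{j<k} K(j+1) s^j` of the operator `s² - a s + 1`. -/
def green {R : Type*} [CommRing R] (a s : R) (k : ℕ) : R :=
  ∑ j ∈ range k, cheb a (j + 1) * s ^ j

theorem green_mul {R : Type*} [CommRing R] (a s : R) (k : ℕ) :
    green a s k * (s ^ 2 - a * s + 1) = 1 - cheb a (k + 1) * s ^ k + cheb a k * s ^ (k + 1) := by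
  induction k with
  | zero => simp [green, cheb]
  | succ k ih =>
    have : green a s (k + 1) = green a s k + cheb a (k + 1) * s ^ k := by
      simp [green, sum_range_succ]
    rw [this, add_mul, ih, cheb_add_two]
    ring

/-- When the Chebyshev sequence vanishes at `k + 1`, the truncated Green function inverts
`s² - a s + 1` up to the unit `cheb a k`. -/
theorem green_mul_of_cheb_eq_zero {R : Type*} [CommRing R] (a s : R) (k : ℕ)
    (hk : cheb a (k + 1) = 0) :
    green a s k * (s ^ 2 - a * s + 1) = 1 + cheb a k * s ^ (k + 1) := by
  rw [green_mul, hk]; ring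

theorem cheb_sq_of_eq_zero {R : Type*} [Ring R] (a : R) (k : ℕ)
    (hk : cheb a (k + 1) = 0) : cheb a k * cheb a k = 1 := by
  have h := cheb_cassini a k
  rw [cheb_add_two, hk] at h
  simpa using h

section abstract
variable {R M : Type*} [CommRing R] [AddCommGroup M] [Module R M]

/-- Half of the periodicity defect.  Write `h = k + 1`, `h' = k' + 1`, `w = cheb a k` and
`w' = cheb b k'`, and suppose `cheb a h = 0`, `cheb b h' = 0` and
`(s² - b s + 1) P = (s² - a s + 1) Q`.  Then `s² - a s + 1` sends this element to
`(w w' s^(h+h') - 1) P`, and `s² - b s + 1` sends it to `(w w' s^(h+h') - 1) Q`; both operators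
are inverted by explicit polynomials in `s`, so that only finitely many translates of `P` and `Q`
occur. -/
def halfDefect (a b s : R) (k k' : ℕ) (P Q : M) : M :=
  (cheb a k * green b s k' * s ^ (k + 1)) • Q - green a s k • P

/-- The periodicity defect.  Since `(w w')² = 1`, under the hypotheses described at `halfDefect`
the operators `s² - a s + 1` and `s² - b s + 1` send it to `(s^(2(h+h')) - 1) P` and to
`(s^(2(h+h')) - 1) Q`. -/
def defect (a b s : R) (k k' : ℕ) (P Q : M) : M :=
  halfDefect a b s k k' P Q +
    (cheb a k * cheb b k' * s ^ (k + 1 + (k' + 1))) • halfDefect a b s k k' P Q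

theorem halfDefect_A {a b s : R} {k k' : ℕ} {P Q : M}
    (hk : cheb a (k + 1) = 0) (hk' : cheb b (k' + 1) = 0)
    (hPQ : (s ^ 2 - b * s + 1) • P = (s ^ 2 - a * s + 1) • Q) :
    (s ^ 2 - a * s + 1) • halfDefect a b s k k' P Q =
      (cheb a k * cheb b k' * s ^ (k + 1 + (k' + 1)) - 1) • P := by
  have gA := green_mul_of_cheb_eq_zero a s k hk
  have gB := green_mul_of_cheb_eq_zero b s k' hk'
  unfold halfDefect
  linear_combination (norm := module) (-(cheb a k * green b s k' * s ^ (k + 1))) • hPQ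
    + (cheb a k * s ^ (k + 1)) • congrArg (· • P) gB - congrArg (· • P) gA

theorem halfDefect_B {a b s : R} {k k' : ℕ} {P Q : M}
    (hk : cheb a (k + 1) = 0) (hk' : cheb b (k' + 1) = 0)
    (hPQ : (s ^ 2 - b * s + 1) • P = (s ^ 2 - a * s + 1) • Q) :
    (s ^ 2 - b * s + 1) • halfDefect a b s k k' P Q =
      (cheb a k * cheb b k' * s ^ (k + 1 + (k' + 1)) - 1) • Q := by
  have gA := green_mul_of_cheb_eq_zero a s k hk
  have gB := green_mul_of_cheb_eq_zero b s k' hk'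
  unfold halfDefect
  linear_combination (norm := module) (-(green a s k)) • hPQ
    + (cheb a k * s ^ (k + 1)) • congrArg (· • Q) gB - congrArg (· • Q) gA

theorem ww_sq {a b s : R} {k k' : ℕ}
    (hk : cheb a (k + 1) = 0) (hk' : cheb b (k' + 1) = 0) : (cheb a k * cheb b k' * s ^ (k + 1 + (k' + 1))) ^ 2 =
    s ^ (2 * (k + 1 + (k' + 1))) := by
  have h1 := cheb_sq_of_eq_zero a k hk
  have h2 := cheb_sq_of_eq_zero b k' hk'
  linear_combination (cheb b k' * cheb b k' * (s ^ (k + 1 + (k' + 1))) ^ 2) * h1 +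
    (s ^ (k + 1 + (k' + 1))) ^ 2 * h2

theorem defect_A {a b s : R} {k k' : ℕ} {P Q : M}
    (hk : cheb a (k + 1) = 0) (hk' : cheb b (k' + 1) = 0)
    (hPQ : (s ^ 2 - b * s + 1) • P = (s ^ 2 - a * s + 1) • Q) :
    (s ^ 2 - a * s + 1) • defect a b s k k' P Q = (s ^ (2 * (k + 1 + (k' + 1))) - 1) • P := by
  have h1 := halfDefect_A hk hk' hPQ
  have h2 := ww_sq (s := s) hk hk'
  unfold defect
  rw [← h2]
  linear_combination (norm := module) (1 + cheb a k * cheb b k' * s ^ (k + 1 + (k' + 1))) • h1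

theorem defect_B {a b s : R} {k k' : ℕ} {P Q : M}
    (hk : cheb a (k + 1) = 0) (hk' : cheb b (k' + 1) = 0)
    (hPQ : (s ^ 2 - b * s + 1) • P = (s ^ 2 - a * s + 1) • Q) :
    (s ^ 2 - b * s + 1) • defect a b s k k' P Q = (s ^ (2 * (k + 1 + (k' + 1))) - 1) • Q := by
  have h1 := halfDefect_B hk hk' hPQ
  have h2 := ww_sq (s := s) hk hk'
  unfold defect
  rw [← h2]
  linear_combination (norm := module) (1 + cheb a k * cheb b k' * s ^ (k + 1 + (k' + 1))) • h1

/-- If `P` is itself the image of some `φ` under `s² - a s + 1`, the defect is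
`(s^(2(h+h')) - 1) φ` up to a multiple of `β`, which measures how far `φ` is from solving the
second wave equation with source `Q`. -/
theorem defect_eq {a b s : R} {k k' : ℕ} {P Q : M}
    (hk : cheb a (k + 1) = 0) (hk' : cheb b (k' + 1) = 0)
    {φ β : M} (hφ : (s ^ 2 - a * s + 1) • φ = P)
    (hφ' : (s ^ 2 - b * s + 1) • φ = Q + s • β) :
    defect a b s k k' P Q = (s ^ (2 * (k + 1 + (k' + 1))) - 1) • φ -
      ((1 + cheb a k * cheb b k' * s ^ (k + 1 + (k' + 1))) *
        (cheb a k * green b s k' * s ^ (k + 2))) • β := by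
  have h2 := ww_sq (s := s) hk hk'
  have gA := green_mul_of_cheb_eq_zero a s k hk
  have gB := green_mul_of_cheb_eq_zero b s k' hk'
  have hh : halfDefect a b s k k' P Q =
      (cheb a k * cheb b k' * s ^ (k + 1 + (k' + 1)) - 1) • φ
        - (cheb a k * green b s k' * s ^ (k + 2)) • β := by
    unfold halfDefect
    linear_combination (norm := module) (-(cheb a k * green b s k' * s ^ (k + 1))) • hφ'
      + (green a s k) • hφ + (cheb a k * s ^ (k + 1)) • congrArg (· • φ) gB
      - congrArg (· • φ) gA
  unfold defect
  rw [hh, ← h2]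
  module

end abstract

end ADEPeriodicity

/-! ### Wave operators and the additive defect -/

namespace ADEPeriodicity
open Finset
universe u v

/-- An integer matrix acting on families `ℕ → V → G`, time by time. -/
def matOp {V : Type*} [Fintype V] [DecidableEq V] (G : Type*) [AddCommGroup G] : Matrix V V ℤ →+* Module.End ℤ (ℕ → V → G) where
  toFun X :=
    { toFun := fun f t v => ∑ u, X v u • f t u
      map_add' := fun f g => by
        funext t v; simp [sum_add_distrib]
      map_smul' := fun n f => by
        funext t v; simp [smul_sum, smul_comm n] }
  map_one' := by
    ext f t v; simp [Matrix.one_apply, ite_smul]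
  map_mul' X Y := by
    ext f t v
    simp only [Matrix.mul_apply, sum_smul, LinearMap.coe_mk, AddHom.coe_mk, Module.End.mul_apply,
      smul_sum, mul_smul]
    rw [sum_comm]
  map_zero' := by ext f t v; simp
  map_add' X Y := by ext f t v; simp [add_smul, sum_add_distrib]

@[simp] theorem matOp_apply {V G : Type*} [Fintype V] [DecidableEq V] [AddCommGroup G]
    (X : Matrix V V ℤ) (f : ℕ → V → G) (t : ℕ) (v : V) :
    matOp G X f t v = ∑ u, X v u • f t u := rfl

/-- The time shift on families `ℕ → V → G`. -/
def shiftOp (V G : Type*) [AddCommGroup G] : Module.End ℤ (ℕ → V → G) where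
  toFun f t := f (t + 1)
  map_add' _ _ := rfl
  map_smul' _ _ := rfl

theorem shiftOp_pow_apply {V G : Type*} [AddCommGroup G] (f : ℕ → V → G) (n t : ℕ) (v : V) :
    (shiftOp V G ^ n) f t v = f (t + n) v := by
  induction n generalizing t with
  | zero => simp
  | succ n ih =>
    rw [pow_succ', Module.End.mul_apply]
    change (shiftOp V G ^ n) f (t + 1) v = _
    rw [ih, add_right_comm, add_assoc]

/-- An additive endomorphism of `G` acting pointwise on families `ℕ → V → G`. -/
def mapOp (V : Type*) {G : Type*} [AddCommGroup G] (T : G →+ G) :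
    Module.End ℤ (ℕ → V → G) where
  toFun f t v := T (f t v)
  map_add' f g := by funext t v; simp
  map_smul' n f := by funext t v; simp

/-- Commuting matrices, the shift and a pointwise endomorphism generate a commutative ring of
operators; this packages that ring abstractly. -/
theorem exists_operator_ring {V : Type u} {G : Type v} [Fintype V] [DecidableEq V] [AddCommGroup G]
    (A B : Matrix V V ℤ) (hAB : A * B = B * A) (T : G →+ G) {n m : ℕ}
    (hA : cheb A n = 0) (hB : cheb B m = 0) :
    ∃ (R : Type (max u v)) (_ : CommRing R) (_ : Module R (ℕ → V → G)) (a b s t : R),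
      (∀ n, ∀ f : ℕ → V → G, s ^ n • f = (shiftOp V G ^ n) f) ∧
      (∀ f : ℕ → V → G, t • f = mapOp V T f) ∧
      (∀ n, ∀ f : ℕ → V → G, cheb a n • f = matOp G (cheb A n) f) ∧
      (∀ n, ∀ f : ℕ → V → G, cheb b n • f = matOp G (cheb B n) f) ∧
      (∀ f : ℕ → V → G, a • f = matOp G A f) ∧ (∀ f : ℕ → V → G, b • f = matOp G B f) ∧
      cheb a n = 0 ∧ cheb b m = 0 := by
  classical
  let S : Set (Module.End ℤ (ℕ → V → G)) := {matOp G A, matOp G B, shiftOp V G, mapOp V T}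
  have hS : ∀ x ∈ S, ∀ y ∈ S, x * y = y * x := by
    have c1 : matOp G A * matOp G B = matOp G B * matOp G A := by
      rw [← map_mul, ← map_mul, hAB]
    have c2 : ∀ X : Matrix V V ℤ, matOp G X * shiftOp V G = shiftOp V G * matOp G X := fun X => rfl
    have c3 : ∀ X : Matrix V V ℤ, matOp G X * mapOp V T = mapOp V T * matOp G X := fun X => by
      ext f t v
      simp [mapOp]
    have c4 : shiftOp V G * mapOp V T = mapOp V T * shiftOp V G := rfl
    rintro x (rfl | rfl | rfl | rfl) y (rfl | rfl | rfl | rfl)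
    all_goals
      first
      | rfl
      | exact c1
      | exact c1.symm
      | exact c2 _
      | exact (c2 _).symm
      | exact c3 _
      | exact (c3 _).symm
  have hcomm := Algebra.isMulCommutative_adjoin ℤ hS
  let R := Algebra.adjoin ℤ S
  let _ : CommRing R := { (inferInstance : Ring R) with
    mul_comm := fun x y => hcomm.is_comm.comm x y }
  have sub : ∀ x ∈ S, x ∈ R := fun x hx => Algebra.subset_adjoin hx
  let a : R := ⟨matOp G A, sub _ (by simp [S])⟩
  let b : R := ⟨matOp G B, sub _ (by simp [S])⟩
  let s : R := ⟨shiftOp V G, sub _ (by simp [S])⟩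
  let t : R := ⟨mapOp V T, sub _ (by simp [S])⟩
  have ka : ∀ n, R.val (cheb a n) = matOp G (cheb A n) := fun n => by
    rw [map_cheb (matOp G) A n]
    exact map_cheb R.val.toRingHom a n
  have kb : ∀ n, R.val (cheb b n) = matOp G (cheb B n) := fun n => by
    rw [map_cheb (matOp G) B n]
    exact map_cheb R.val.toRingHom b n
  refine ⟨R, inferInstance, (inferInstance : Module R (ℕ → V → G)), a, b, s, t, ?_, fun f => rfl,
    ?_, ?_, fun f => rfl, fun f => rfl, ?_, ?_⟩
  · intro n f
    change R.val (s ^ n) f = _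
    rw [map_pow]; rfl
  · intro n f; exact congrArg (fun x => x f) (ka n)
  · intro n f; exact congrArg (fun x => x f) (kb n)
  · exact Subtype.ext ((ka n).trans (by rw [hA, map_zero]; rfl))
  · exact Subtype.ext ((kb m).trans (by rw [hB, map_zero]; rfl))

theorem sum_zsmul_mem {V G : Type*} [Fintype V] [AddCommGroup G] (U : AddSubgroup G)
    (c : V → ℤ) (f : V → G) (hf : ∀ u, f u ∈ U) : ∑ u, c u • f u ∈ U :=
  sum_mem fun u _ => U.zsmul_mem (hf u) _

/-- The additive form of periodicity up to a defect.  `η = log Y`, `L = log (1 + Y)` and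
`φ` is a solution of the `A`-wave equation with source `L`; `N = h + h'`.  The defect `δ`
measures the failure of `L` (and `η`) to be `2N`-periodic; it only involves the values of `L`
and `L - η` in prescribed time windows, and it agrees with `φ (2N + ·)` up to a combination
of the initial values of `η`. -/
theorem exists_defect {V : Type u} {G : Type v} [Fintype V] [DecidableEq V] [AddCommGroup G]
    (A B : Matrix V V ℤ) (hAB : A * B = B * A) {h h' : ℕ} (hh : 1 ≤ h) (hh' : 1 ≤ h')
    (hA : cheb A h = 0) (hB : cheb B h' = 0)
    (η L φ : ℕ → V → G)
    (hη : ∀ t v, η (t + 2) v + η t v =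
      ∑ u, B v u • L (t + 1) u - ∑ u, A v u • (L (t + 1) u - η (t + 1) u))
    (hφ : ∀ t v, φ (t + 2) v + φ t v = ∑ u, A v u • φ (t + 1) u + L (t + 1) v)
    (hφ0 : ∀ v, φ 0 v = 0) (hφ1 : ∀ v, φ 1 v = 0)
    (T : G →+ G) (hTη : ∀ t v, T (η t v) = η (t + 1) v)
    (hTL : ∀ t v, T (L t v) = L (t + 1) v) :
    ∃ δ : ℕ → V → G,
      (∀ t v, δ (t + 2) v + δ t v =
        ∑ u, A v u • δ (t + 1) u + (L (t + 1 + 2 * (h + h')) v - L (t + 1) v)) ∧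
      (∀ t v, η (t + 1 + 2 * (h + h')) v - η (t + 1) v = ∑ u, (B v u - A v u) • δ (t + 1) u) ∧
      (∀ U : AddSubgroup G,
        (∀ t u, (0 < t ∧ t ≤ h) ∨ (h + h' < t ∧ t ≤ h + h' + h) → L t u ∈ U) →
        (∀ t u, (h < t ∧ t ≤ h + h') ∨ (h + h' + h < t ∧ t ≤ 2 * (h + h')) →
          L t u - η t u ∈ U) →
        ∀ v, δ 0 v ∈ U ∧ δ 1 v ∈ U) ∧
      (∀ U : AddSubgroup G, (∀ v, η 0 v ∈ U) → (∀ v, η 1 v ∈ U) →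
        ∀ v, δ 0 v - φ (2 * (h + h')) v ∈ U ∧ δ 1 v - φ (2 * (h + h') + 1) v ∈ U) ∧
      (∀ t v, T (δ t v) = δ (t + 1) v) := by
  obtain ⟨k, rfl⟩ : ∃ k, h = k + 1 := ⟨h - 1, by omega⟩
  obtain ⟨k', rfl⟩ : ∃ k, h' = k + 1 := ⟨h' - 1, by omega⟩
  obtain ⟨R, _, _, a, b, s, τ, hs, hτ, hca, hcb, ha, hb, hka, hkb⟩ :=
    exists_operator_ring A B hAB T hA hB
  have hs1 : ∀ f : ℕ → V → G, s • f = fun t => f (t + 1) := fun f => by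
    have := hs 1 f; simp only [pow_one] at this; exact this
  have hsn : ∀ n t v, ∀ f : ℕ → V → G, (s ^ n • f) t v = f (t + n) v := fun n t v f => by
    rw [hs, shiftOp_pow_apply]
  -- With `P = s L` and `Q = s (L - η)` the recurrence for `η` becomes the compatibility relation
  -- `(s² - b s + 1) P = (s² - a s + 1) Q` required of the two sources.
  set P : ℕ → V → G := fun t v => L (t + 1) v with hP
  set Q : ℕ → V → G := P - s • η with hQ
  have hQa : ∀ t v, Q t v = L (t + 1) v - η (t + 1) v := fun t v => by
    simp [hQ, hs1, hP]
  have hDη : (s ^ 2 - a * s + 1) • η = (b - a) • P := by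
    funext t v
    simp only [add_smul, sub_smul, one_smul, mul_smul, Pi.add_apply, Pi.sub_apply, hsn, ha, hb,
      matOp_apply, hs1, hP]
    have := hη t v
    simp only [smul_sub, sum_sub_distrib] at this
    rw [sub_add_eq_add_sub, this]; abel
  have hDφ : (s ^ 2 - a * s + 1) • φ = P := by
    funext t v
    simp only [add_smul, sub_smul, one_smul, mul_smul, Pi.add_apply, Pi.sub_apply, hsn, ha,
      matOp_apply, hs1, hP]
    rw [sub_add_eq_add_sub, hφ t v]; abel
  have hPQ : (s ^ 2 - b * s + 1) • P = (s ^ 2 - a * s + 1) • Q := by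
    rw [hQ]
    linear_combination (norm := module) s • hDη
  -- `β` solves the homogeneous `a`-wave equation, so all its values are integral combinations of
  -- those at times `0` and `1`, where it coincides with `η`.
  set β : ℕ → V → G := η - (b - a) • φ with hβ
  have hφ' : (s ^ 2 - b * s + 1) • φ = Q + s • β := by
    rw [hβ, hQ]
    linear_combination (norm := module) hDφ
  have hDβ : (s ^ 2 - a * s + 1) • β = 0 := by
    rw [hβ]
    linear_combination (norm := module) hDη - (b - a) • hDφ
  set N := k + 1 + (k' + 1) with hN
  set δ := defect a b s k k' P Q with hδ
  have dA := defect_A hka hkb hPQ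
  have dB := defect_B hka hkb hPQ
  have dE := defect_eq hka hkb hDφ hφ'
  have hU1 : ∀ (U : AddSubgroup G) (X : Matrix V V ℤ) (n : ℕ) (f : ℕ → V → G) (t : ℕ),
      (∀ u, f t u ∈ U) → ∀ v, matOp G (cheb X n) f t v ∈ U := fun U X n f t hf v =>
    sum_zsmul_mem U _ _ hf
  have hgreen : ∀ (c : R) (C : Matrix V V ℤ),
      (∀ n, ∀ f : ℕ → V → G, cheb c n • f = matOp G (cheb C n) f) →
      ∀ (U : AddSubgroup G) (n : ℕ) (f : ℕ → V → G) (t : ℕ),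
      (∀ j < n, ∀ u, f (t + j) u ∈ U) → ∀ v, (green c s n • f) t v ∈ U := by
    intro c C hc U n f t hf v
    rw [green, sum_smul, Finset.sum_apply, Finset.sum_apply]
    refine sum_mem fun j hj => ?_
    rw [mul_smul, hc]
    refine hU1 U C _ _ _ (fun u => ?_) v
    rw [hsn]
    exact hf j (mem_range.1 hj) u
  refine ⟨δ, ?_, ?_, ?_, ?_, ?_⟩
  · intro t v
    have := congrFun (congrFun dA t) v
    simp only [add_smul, sub_smul, one_smul, mul_smul, Pi.add_apply, Pi.sub_apply, hsn, ha,
      matOp_apply, hs1, hP] at this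
    rw [show t + 1 + 2 * N = t + 2 * N + 1 by ring, ← this]
    abel
  · intro t v
    have h1 : (s ^ (2 * N) - 1) • (s • η) = ((b - a) * s) • δ := by
      have e : s • η = P - Q := by rw [hQ]; abel
      rw [e]
      linear_combination (norm := module) dB - dA
    have := congrFun (congrFun h1 t) v
    simp only [sub_smul, one_smul, mul_smul, Pi.sub_apply, hsn, ha, hb, sub_mul,
      matOp_apply, hs1] at this
    rw [show t + 1 + 2 * N = t + 2 * N + 1 by ring, this]
    simp [sub_smul]
  · intro U hU hU'
    -- the half defect at time `t` only sees the windows of length `N` starting at `t`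
    have key : ∀ i ≤ 1, ∀ v, halfDefect a b s k k' P Q i v ∈ U ∧
        halfDefect a b s k k' P Q (i + N) v ∈ U := by
      intro i hi v
      have aux : ∀ t, (∀ j < k, ∀ u, L (t + j + 1) u ∈ U) →
          (∀ j < k', ∀ u, Q (t + (k + 1) + j) u ∈ U) →
          halfDefect a b s k k' P Q t v ∈ U := by
        intro t h1 h2
        unfold halfDefect
        refine U.sub_mem ?_ (hgreen a A hca U k P t h1 v)
        rw [mul_comm (cheb a k), mul_assoc, mul_comm (cheb a k), mul_smul]
        refine hgreen b B hcb U k' _ t (fun j hj u => ?_) v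
        rw [mul_comm, mul_smul, hca]
        refine hU1 U A _ _ _ (fun u => ?_) u
        rw [hsn]
        have := h2 j hj u
        rwa [show t + j + (k + 1) = t + (k + 1) + j by ring]
      constructor
      · refine aux _ (fun j hj u => hU _ u (by omega)) (fun j hj u => ?_)
        rw [hQa]; exact hU' _ u (by omega)
      · refine aux _ (fun j hj u => hU _ u (by omega)) (fun j hj u => ?_)
        rw [hQa]; exact hU' _ u (by omega)
    have key2 : ∀ i ≤ 1, ∀ v, δ i v ∈ U := by
      intro i hi v
      rw [hδ, defect]
      refine U.add_mem (key i hi v).1 ?_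
      rw [mul_assoc, mul_smul, mul_smul, hca, hcb]
      refine hU1 U A _ _ _ (fun u => hU1 U B _ _ _ (fun u => ?_) u) v
      rw [hsn]
      exact (key i hi u).2
    exact fun v => ⟨key2 0 (by omega) v, key2 1 (by omega) v⟩
  · intro U h0 h1
    have hβ01 : ∀ t v, β t v ∈ U ∧ β (t + 1) v ∈ U := by
      have hbase : ∀ i, (∀ v, φ i v = 0) → ∀ v, β i v = η i v := by
        intro i hi v
        simp [hβ, sub_smul, ha, hb, hi]
      intro t
      induction t with
      | zero =>
        intro v
        rw [hbase 0 hφ0, hbase 1 hφ1]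
        exact ⟨h0 v, h1 v⟩
      | succ t ih =>
        intro v
        refine ⟨(ih v).2, ?_⟩
        have := congrFun (congrFun hDβ t) v
        simp only [add_smul, sub_smul, one_smul, mul_smul, Pi.add_apply, Pi.sub_apply, hsn, ha,
          matOp_apply, hs1, Pi.zero_apply] at this
        have e : β (t + 2) v = ∑ u, A v u • β (t + 1) u - β t v := by
          rw [← sub_eq_zero, ← this]; abel
        rw [show t + 1 + 1 = t + 2 by ring, e]
        exact U.sub_mem (sum_zsmul_mem U _ _ fun u => (ih u).2) (ih v).1
    have key : ∀ i, ∀ v, δ i v - (φ (i + 2 * N) v - φ i v) ∈ U := by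
      intro i v
      rw [hδ, dE]
      simp only [sub_smul, one_smul, Pi.sub_apply, hsn, ← hN, sub_sub_cancel_left]
      refine U.neg_mem ?_
      have hg : ∀ t v, ((cheb a k * green b s k' * s ^ (k + 2)) • β) t v ∈ U := by
        intro t v
        rw [mul_assoc, mul_smul, hca]
        refine hU1 U A _ _ _ (fun u => ?_) v
        rw [mul_smul]
        refine hgreen b B hcb U k' _ t (fun j hj u => ?_) u
        rw [hsn]
        exact (hβ01 _ u).1
      rw [mul_smul, add_smul, one_smul]
      refine U.add_mem (hg i v) ?_
      rw [mul_assoc, mul_smul, mul_smul, hca, hcb]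
      refine hU1 U A _ _ _ (fun u => hU1 U B _ _ _ (fun u => ?_) u) v
      rw [hsn]
      exact hg _ u
    intro v
    have k0 := key 0 v
    have k1 := key 1 v
    rw [hφ0, sub_zero, zero_add] at k0
    rw [hφ1, sub_zero, add_comm 1] at k1
    exact ⟨k0, k1⟩
  · have hP' : τ • P = s • P := by
      rw [hτ, hs1]; funext t v; exact hTL (t + 1) v
    have hη' : τ • η = s • η := by
      rw [hτ, hs1]; funext t v; exact hTη t v
    have hδ' : τ • δ = s • δ := by
      have hQ' : τ • Q = s • Q := by
        rw [hQ]
        linear_combination (norm := module) hP' - s • hη'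
      have hh : τ • halfDefect a b s k k' P Q = s • halfDefect a b s k k' P Q := by
        unfold halfDefect
        linear_combination (norm := module)
          (cheb a k * green b s k' * s ^ (k + 1)) • hQ' - green a s k • hP'
      rw [hδ]
      unfold defect
      linear_combination (norm := module)
        (1 + cheb a k * cheb b k' * s ^ (k + 1 + (k' + 1))) • hh
    rw [hτ, hs1] at hδ'
    exact fun t v => congrFun (congrFun hδ' t) v

end ADEPeriodicity

/-! ### Nonnegativity of Chebyshev matrices -/

namespace ADEPeriodicity
open Finset

theorem cheb_transpose {V : Type*} [Fintype V] [DecidableEq V] (A : Matrix V V ℤ)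
    (hs : A.transpose = A) (n : ℕ) : (cheb A n).transpose = cheb A n := by
  induction n using Nat.twoStepInduction with
  | zero => simp [cheb]
  | one => simp [cheb]
  | more n ih1 ih2 =>
    rw [cheb_add_two, Matrix.transpose_sub, Matrix.transpose_mul, hs, ih1, ih2,
      (commute_cheb (Commute.refl A) (n + 1)).eq]

/-- The quadratic form `|x|² + |y|² - x·Ay` preserved by `(x, y) ↦ (A x - y, x)`. -/
def waveForm {V : Type*} [Fintype V] (A : V → V → ℤ) (x y : V → ℤ) : ℤ :=
  ∑ u, x u ^ 2 + ∑ u, y u ^ 2 - ∑ u, ∑ w, A u w * (x u * y w)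

/-- Schur test: a positive eigenvector with eigenvalue `ρ < 2` makes `waveForm` positive
definite. -/
theorem waveForm_pos {V : Type*} [Fintype V] (A : V → V → ℤ) (hsymm : ∀ u v, A u v = A v u)
    (hnn : ∀ u v, 0 ≤ A u v) (ξ : V → ℝ) (hξ : ∀ v, 0 < ξ v) (ρ : ℝ) (hρ : ρ < 2)
    (hev : ∀ v, ∑ u, (A v u : ℝ) * ξ u = ρ * ξ v) (x y : V → ℤ) :
    0 ≤ waveForm A x y ∧ (waveForm A x y = 0 → x = 0 ∧ y = 0) := by
  have key : ∑ u, ∑ w, (A u w : ℝ) * (x u * y w) ≤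
      ρ / 2 * (∑ u, (x u : ℝ) ^ 2 + ∑ u, (y u : ℝ) ^ 2) := by
    have h1 : ∀ u w, (A u w : ℝ) * (x u * y w) ≤
        (1 / 2 * ((x u : ℝ) ^ 2 / ξ u)) * (A u w * ξ w)
          + (1 / 2 * ((y w : ℝ) ^ 2 / ξ w)) * (A w u * ξ u) := by
      intro u w
      have ha : (0 : ℝ) ≤ A u w := by exact_mod_cast hnn u w
      have hu := hξ u
      have hw := hξ w
      have : (x u : ℝ) * y w ≤ 1 / 2 * ((x u : ℝ) ^ 2 / ξ u) * ξ w
          + 1 / 2 * ((y w : ℝ) ^ 2 / ξ w) * ξ u := by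
        rw [← sub_nonneg]
        have : 1 / 2 * ((x u : ℝ) ^ 2 / ξ u) * ξ w + 1 / 2 * ((y w : ℝ) ^ 2 / ξ w) * ξ u
            - x u * y w = (x u * ξ w - y w * ξ u) ^ 2 / (2 * ξ u * ξ w) := by
          field_simp; ring
        rw [this]; positivity
      rw [hsymm w u]
      calc _ ≤ (A u w : ℝ) * _ := mul_le_mul_of_nonneg_left this ha
        _ = _ := by ring
    calc _ ≤ ∑ u, ∑ w, ((1 / 2 * ((x u : ℝ) ^ 2 / ξ u)) * (A u w * ξ w)
          + (1 / 2 * ((y w : ℝ) ^ 2 / ξ w)) * (A w u * ξ u)) :=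
        sum_le_sum fun u _ => sum_le_sum fun w _ => h1 u w
      _ = _ := by
        simp only [sum_add_distrib]
        rw [sum_comm (f := fun u w => (1 / 2 * ((y w : ℝ) ^ 2 / ξ w)) * (A w u * ξ u))]
        simp only [← mul_sum, hev]
        rw [mul_add, mul_sum, mul_sum]
        congr 1 <;> refine sum_congr rfl fun u _ => ?_
        all_goals
          have := (hξ u).ne'
          field_simp
  have hcast : (waveForm A x y : ℝ) = ∑ u, (x u : ℝ) ^ 2 + ∑ u, (y u : ℝ) ^ 2
      - ∑ u, ∑ w, (A u w : ℝ) * (x u * y w) := by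
    simp [waveForm]
  have hx0 : 0 ≤ ∑ u, (x u : ℝ) ^ 2 := sum_nonneg fun u _ => sq_nonneg _
  have hy0 : 0 ≤ ∑ u, (y u : ℝ) ^ 2 := sum_nonneg fun u _ => sq_nonneg _
  constructor
  · have : (0 : ℝ) ≤ waveForm A x y := by rw [hcast]; nlinarith
    exact_mod_cast this
  · intro h0
    rw [h0, Int.cast_zero] at hcast
    have hxx : ∑ u, (x u : ℝ) ^ 2 = 0 := by nlinarith
    have hyy : ∑ u, (y u : ℝ) ^ 2 = 0 := by nlinarith
    rw [sum_eq_zero_iff_of_nonneg fun u _ => sq_nonneg _] at hxx hyy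
    constructor <;> funext u
    · simpa using hxx u (mem_univ u)
    · simpa using hyy u (mem_univ u)

/-- Vectors on which `waveForm` equals `1` are sign-coherent. -/
theorem waveForm_sign {V : Type*} [Fintype V] (A : V → V → ℤ)
    (hnn : ∀ u v, 0 ≤ A u v)
    (hpos : ∀ x y : V → ℤ, 0 ≤ waveForm A x y ∧ (waveForm A x y = 0 → x = 0 ∧ y = 0))
    (x y : V → ℤ) (h1 : waveForm A x y = 1) :
    ((∀ u, 0 ≤ x u) ∧ ∀ u, 0 ≤ y u) ∨ ((∀ u, x u ≤ 0) ∧ ∀ u, y u ≤ 0) := by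
  -- The forms of the positive and of the negative part are nonnegative integers with sum at most
  -- `1`; hence one of them is `0`, and that part vanishes.
  have hle : waveForm A (fun u => max (x u) 0) (fun u => max (y u) 0) +
      waveForm A (fun u => max (-x u) 0) (fun u => max (-y u) 0) ≤ waveForm A x y := by
    have hsq : ∀ a : ℤ, (max a 0) ^ 2 + (max (-a) 0) ^ 2 = a ^ 2 := by
      intro a
      rcases le_total a 0 with h | h
      · rw [max_eq_right h, max_eq_left (by omega : 0 ≤ -a)]; ring
      · rw [max_eq_left h, max_eq_right (by omega : -a ≤ 0)]; ring
    have hmul : ∀ a b : ℤ, a * b ≤ max a 0 * max b 0 + max (-a) 0 * max (-b) 0 := by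
      intro a b
      have ea : a = max a 0 - max (-a) 0 := by omega
      have eb : b = max b 0 - max (-b) 0 := by omega
      have ha := le_max_right a 0
      have ha' := le_max_right (-a) 0
      have hb := le_max_right b 0
      have hb' := le_max_right (-b) 0
      generalize max a 0 = p at *
      generalize max (-a) 0 = n at *
      generalize max b 0 = p' at *
      generalize max (-b) 0 = n' at *
      subst ea eb
      nlinarith [mul_nonneg ha hb', mul_nonneg ha' hb]
    have e3 : ∑ u, ∑ w, A u w * (x u * y w) ≤
        ∑ u, ∑ w, A u w * (max (x u) 0 * max (y w) 0)
        + ∑ u, ∑ w, A u w * (max (-x u) 0 * max (-y w) 0) := by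
      simp only [← sum_add_distrib]
      refine sum_le_sum fun u _ => sum_le_sum fun w _ => ?_
      rw [← mul_add]
      exact mul_le_mul_of_nonneg_left (hmul _ _) (hnn u w)
    have e1 : ∀ z : V → ℤ, ∑ u, (max (z u) 0) ^ 2 + ∑ u, (max (-z u) 0) ^ 2 = ∑ u, z u ^ 2 := by
      intro z
      rw [← sum_add_distrib]
      exact sum_congr rfl fun u _ => hsq _
    have e1x := e1 x
    have e1y := e1 y
    unfold waveForm
    linarith
  have p1 := hpos (fun u => max (x u) 0) (fun u => max (y u) 0)
  have p2 := hpos (fun u => max (-x u) 0) (fun u => max (-y u) 0)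
  have : waveForm A (fun u => max (x u) 0) (fun u => max (y u) 0) = 0 ∨
      waveForm A (fun u => max (-x u) 0) (fun u => max (-y u) 0) = 0 := by omega
  rcases this with h | h
  · right
    obtain ⟨a, b⟩ := p1.2 h
    exact ⟨fun u => by have := congrFun a u; simp at this; omega,
      fun u => by have := congrFun b u; simp at this; omega⟩
  · left
    obtain ⟨a, b⟩ := p2.2 h
    exact ⟨fun u => by have := congrFun a u; simp at this; omega,
      fun u => by have := congrFun b u; simp at this; omega⟩

/-- A nonnegative symmetric integer matrix with a positive eigenvector of eigenvalue
`2 cos (π / h)` has `cheb A n ≥ 0` for `n ≤ h` and `cheb A h = 0`. -/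
theorem cheb_nonneg_and_eq_zero {V : Type*} [Fintype V] [DecidableEq V] (A : Matrix V V ℤ)
    (hsymm : ∀ u v, A u v = A v u)
    (hnn : ∀ u v, 0 ≤ A u v) (ξ : V → ℝ) (hξ : ∀ v, 0 < ξ v) (h : ℕ) (hh : 2 ≤ h)
    (hev : ∀ v, ∑ u, (A v u : ℝ) * ξ u = 2 * Real.cos (Real.pi / h) * ξ v) :
    (∀ n ≤ h, ∀ u v, 0 ≤ cheb A n u v) ∧ cheb A h = 0 := by
  set θ := Real.pi / h with hθ
  have hh0 : (0 : ℝ) < h := by positivity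
  have hθ0 : 0 < θ := by positivity
  have hθh : h * θ = Real.pi := by rw [hθ]; field_simp
  have hsin : ∀ n : ℕ, 0 < n → n < h → 0 < Real.sin (n * θ) := by
    intro n h0 h1
    apply Real.sin_pos_of_pos_of_lt_pi
    · positivity
    · rw [← hθh]
      have : (n : ℝ) < h := by exact_mod_cast h1
      nlinarith
  have hsin1 : 0 < Real.sin θ := by simpa using hsin 1 (by omega) (by omega)
  have hρ : 2 * Real.cos θ < 2 := by
    have h1 := Real.sin_sq_add_cos_sq θ
    have : Real.cos θ < 1 := by nlinarith
    linarith
  have hT : A.transpose = A := by ext u v; exact hsymm v u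
  have hpos := waveForm_pos A hsymm hnn ξ hξ _ hρ hev
  -- the Cassini identity says that consecutive columns have `waveForm` equal to `1`
  have hone : ∀ n v, waveForm A (fun u => cheb A (n + 1) u v) (fun u => cheb A n u v) = 1 := by
    intro n v
    have hc := cheb_cassini A n
    rw [cheb_add_two] at hc
    have hc' := congrFun (congrFun hc v) v
    have hsy : ∀ m u, cheb A m v u = cheb A m u v := fun m u => by
      conv_lhs => rw [← cheb_transpose A hT m]
      rfl
    have e3 : (A * cheb A (n + 1) * cheb A n) v v =
        ∑ u, ∑ w, A u w * (cheb A (n + 1) u v * cheb A n w v) := by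
      rw [(commute_cheb (Commute.refl A) (n + 1)).eq, mul_assoc, Matrix.mul_apply]
      refine sum_congr rfl fun u _ => ?_
      rw [Matrix.mul_apply, mul_sum]
      refine sum_congr rfl fun w _ => ?_
      rw [hsy]; ring
    rw [sub_mul] at hc'
    simp only [Matrix.sub_apply, e3, Matrix.one_apply_eq] at hc'
    rw [Matrix.mul_apply, Matrix.mul_apply] at hc'
    simp only [hsy, ← sq] at hc'
    unfold waveForm
    linarith
  -- pairing the columns with the eigenvector
  have hpair : ∀ n v, (∑ u, ξ u * (cheb A n u v : ℝ)) * Real.sin θ = Real.sin (n * θ) * ξ v := by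
    intro n v
    induction n using Nat.twoStepInduction with
    | zero => simp [cheb]
    | one =>
      simp [cheb, Matrix.one_apply, mul_comm]
    | more n ih1 ih2 =>
      have e : ∑ u, ξ u * (cheb A (n + 2) u v : ℝ) =
          2 * Real.cos θ * ∑ u, ξ u * (cheb A (n + 1) u v : ℝ) - ∑ u, ξ u * (cheb A n u v : ℝ) := by
        simp only [cheb_add_two, Matrix.sub_apply, Matrix.mul_apply, Int.cast_sub, Int.cast_sum,
          Int.cast_mul, mul_sub, sum_sub_distrib, mul_sum]
        congr 1
        rw [sum_comm]
        refine sum_congr rfl fun u _ => ?_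
        have := hev u
        rw [← mul_assoc, ← this, sum_mul]
        refine sum_congr rfl fun w _ => ?_
        rw [hsymm u w]; ring
      rw [e]
      have e2 : Real.sin ((n + 2 : ℕ) * θ) =
          2 * Real.cos θ * Real.sin ((n + 1 : ℕ) * θ) - Real.sin (n * θ) := by
        have a1 : ((n + 2 : ℕ) : ℝ) * θ = (n + 1 : ℕ) * θ + θ := by push_cast; ring
        have a2 : (n : ℝ) * θ = (n + 1 : ℕ) * θ - θ := by push_cast; ring
        rw [a1, a2, Real.sin_add, Real.sin_sub]; ring
      rw [e2]
      linear_combination 2 * Real.cos θ * ih2 - ih1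
  have hspos : ∀ n v, 0 < n → n < h → ¬ ∀ u, cheb A n u v ≤ 0 := by
    intro n v h0 h1 hcon
    have h2 := hpair n v
    have h3 : 0 < Real.sin (n * θ) * ξ v := mul_pos (hsin n h0 h1) (hξ v)
    have h4 : ∑ u, ξ u * (cheb A n u v : ℝ) ≤ 0 := sum_nonpos fun u _ =>
      mul_nonpos_of_nonneg_of_nonpos (hξ u).le (by exact_mod_cast hcon u)
    nlinarith
  have hnonneg : ∀ n ≤ h, ∀ u v, 0 ≤ cheb A n u v := by
    intro n hn u v
    rcases Nat.eq_zero_or_pos n with rfl | hn0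
    · simp [cheb]
    rcases hn.lt_or_eq with hlt | rfl
    · obtain ⟨m, rfl⟩ : ∃ m, n = m + 1 := ⟨n - 1, by omega⟩
      rcases waveForm_sign A hnn hpos _ _ (hone m v) with hc | hc
      · exact hc.1 u
      · exact (hspos _ v hn0 hlt hc.1).elim
    · obtain ⟨m, rfl⟩ : ∃ m, n = m + 1 := ⟨n - 1, by omega⟩
      rcases waveForm_sign A hnn hpos _ _ (hone m v) with hc | hc
      · exact hc.1 u
      · exact (hspos _ v (by omega) (by omega) hc.2).elim
  refine ⟨hnonneg, ?_⟩
  ext u v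
  have h2 := hpair h v
  rw [hθh, Real.sin_pi, zero_mul, mul_eq_zero, or_iff_left hsin1.ne'] at h2
  rw [sum_eq_zero_iff_of_nonneg fun u _ =>
    mul_nonneg (hξ u).le (by exact_mod_cast hnonneg h le_rfl u v)] at h2
  have := h2 u (mem_univ u)
  rw [mul_eq_zero, or_iff_right (hξ u).ne'] at this
  simpa using this

end ADEPeriodicity

/-! ### Perron eigenvectors of ADE diagrams -/

namespace ADEPeriodicity
open Finset

/-- A positive eigenvector of the adjacency operator of a finite graph, with eigenvalue `ρ`. -/
def HasPerron {W : Type*} [Fintype W] (G : SimpleGraph W) (ρ : ℝ) : Prop :=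
  ∃ ζ : W → ℝ, (∀ v, 0 < ζ v) ∧
    ∀ v, (∑ u, open Classical in if G.Adj v u then ζ u else 0) = ρ * ζ v

theorem HasPerron.of_iso {W W' : Type*} [Fintype W] [Fintype W'] {G : SimpleGraph W}
    {G' : SimpleGraph W'} (e : G ≃g G') {ρ : ℝ} (h : HasPerron G' ρ) : HasPerron G ρ := by
  obtain ⟨ζ, hpos, hev⟩ := h
  refine ⟨fun v => ζ (e v), fun v => hpos _, fun v => ?_⟩
  rw [← hev, ← e.toEquiv.sum_comp]
  refine sum_congr rfl fun u _ => ?_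
  have : G'.Adj (e v) (e.toEquiv u) ↔ G.Adj v u := e.map_adj_iff
  by_cases h : G.Adj v u
  · rw [if_pos h, if_pos (this.2 h)]; rfl
  · rw [if_neg h, if_neg (mt this.1 h)]

theorem sum_fin_ite (n m : ℕ) (f : ℕ → ℝ) :
    (∑ j : Fin n, if (j : ℕ) = m then f j else 0) = if m < n then f m else 0 := by
  rw [Fin.sum_univ_eq_sum_range (fun j => if j = m then f j else 0) n, sum_ite_eq']
  simp

/-- The eigenvector is `sin ((m + 1) θ)` with `θ = π / (n + 1)`, the vertices being numbered
from `m = 0`. -/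
theorem perron_adeA (n : ℕ) (hn : 1 ≤ n) :
    HasPerron (adeA n) (2 * Real.cos (Real.pi / (n + 1 : ℕ))) := by
  set θ := Real.pi / (n + 1 : ℕ) with hθ
  have h0 : (0 : ℝ) < (n + 1 : ℕ) := by positivity
  have hθ0 : 0 < θ := by positivity
  have hθn : ((n : ℝ) + 1) * θ = Real.pi := by
    rw [hθ]; push_cast at h0 ⊢; field_simp
  let f : ℕ → ℝ := fun m => Real.sin ((m + 1) * θ)
  have hstep : ∀ m, f (m + 2) + f m = 2 * Real.cos θ * f (m + 1) := by
    intro m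
    have a1 : (((m + 2 : ℕ) : ℝ) + 1) * θ = (((m + 1 : ℕ) : ℝ) + 1) * θ + θ := by push_cast; ring
    have a2 : ((m : ℝ) + 1) * θ = (((m + 1 : ℕ) : ℝ) + 1) * θ - θ := by push_cast; ring
    simp only [f]
    rw [a1, a2, Real.sin_add, Real.sin_sub]; ring
  have hf0 : f 1 = 2 * Real.cos θ * f 0 := by
    simp only [f]
    rw [show (((1 : ℕ) : ℝ) + 1) * θ = 2 * θ by push_cast; ring, Real.sin_two_mul]
    simp; ring
  have hfn : f n = 0 := by simp only [f]; rw [hθn, Real.sin_pi]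
  refine ⟨fun i => f i, fun i => ?_, fun i => ?_⟩
  · apply Real.sin_pos_of_pos_of_lt_pi
    · positivity
    · rw [← hθn]
      have : (i : ℝ) < n := by exact_mod_cast i.2
      nlinarith
  · have e : ∀ j : Fin n, (open Classical in if (adeA n).Adj i j then f j else 0) =
        (if (j : ℕ) = i + 1 then f j else 0) +
        (if (i : ℕ) = 0 then 0 else if (j : ℕ) = i - 1 then f j else 0) := by
      intro j
      simp only [adeA, SimpleGraph.fromRel_adj, ne_eq, Fin.ext_iff]
      split_ifs <;> first | omega | simp
    rw [sum_congr rfl fun j _ => e j, sum_add_distrib, sum_fin_ite]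
    have e2 : (∑ j : Fin n, if (i : ℕ) = 0 then (0 : ℝ) else
        if (j : ℕ) = i - 1 then f j else 0) = if (i : ℕ) = 0 then 0 else f (i - 1) := by
      split_ifs with h
      · simp
      · rw [sum_fin_ite, if_pos (by omega)]
    have e1 : (if (i : ℕ) + 1 < n then f (i + 1) else 0) = f (i + 1) := by
      split_ifs with h
      · rfl
      · rw [show (i : ℕ) + 1 = n by omega, hfn]
    rw [e1, e2]
    change _ = 2 * Real.cos θ * f i
    split_ifs with h
    · rw [h, ← hf0]; simp
    · obtain ⟨m, hm⟩ : ∃ m, (i : ℕ) = m + 1 := ⟨i - 1, by omega⟩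
      rw [hm, ← hstep]; simp

/-- With `θ = π / (2 n - 2)` and vertices numbered from `m = 0`, the eigenvector is
`2 sin ((m + 1) θ)` on the path and `1` at the two ends of the fork. -/
theorem perron_adeD (n : ℕ) (hn : 4 ≤ n) :
    HasPerron (adeD n) (2 * Real.cos (Real.pi / (2 * n - 2 : ℕ))) := by
  obtain ⟨k, rfl⟩ : ∃ k, n = k + 4 := ⟨n - 4, by omega⟩
  rw [show 2 * (k + 4) - 2 = 2 * (k + 3) by omega]
  set θ := Real.pi / (2 * (k + 3) : ℕ) with hθ
  have h0 : (0 : ℝ) < (2 * (k + 3) : ℕ) := by positivity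
  have hθ0 : 0 < θ := by positivity
  have hθn : ((k : ℝ) + 3) * θ = Real.pi / 2 := by
    rw [hθ]; push_cast at h0 ⊢; field_simp
  let g : ℕ → ℝ := fun m => 2 * Real.sin ((m + 1) * θ)
  let f : ℕ → ℝ := fun m => if m ≤ k + 1 then g m else 1
  have hstep : ∀ m, g (m + 2) + g m = 2 * Real.cos θ * g (m + 1) := by
    intro m
    have a1 : (((m + 2 : ℕ) : ℝ) + 1) * θ = (((m + 1 : ℕ) : ℝ) + 1) * θ + θ := by push_cast; ring
    have a2 : ((m : ℝ) + 1) * θ = (((m + 1 : ℕ) : ℝ) + 1) * θ - θ := by push_cast; ring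
    simp only [g]
    rw [a1, a2, Real.sin_add, Real.sin_sub]; ring
  have hg0 : g 1 = 2 * Real.cos θ * g 0 := by
    simp only [g]
    rw [show (((1 : ℕ) : ℝ) + 1) * θ = 2 * θ by push_cast; ring, Real.sin_two_mul]
    simp; ring
  have hgn : g (k + 2) = 2 := by
    simp only [g]
    rw [show (((k + 2 : ℕ) : ℝ) + 1) * θ = (k + 3) * θ by push_cast; ring, hθn, Real.sin_pi_div_two]
    ring
  have hgn' : g (k + 1) = 2 * Real.cos θ := by
    simp only [g]
    rw [show (((k + 1 : ℕ) : ℝ) + 1) * θ = (k + 3) * θ - θ by push_cast; ring, hθn,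
      Real.sin_pi_div_two_sub]
  refine ⟨fun i => f i, fun i => ?_, fun i => ?_⟩
  · by_cases hi : (i : ℕ) ≤ k + 1
    · simp only [f, if_pos hi, g]
      refine mul_pos two_pos (Real.sin_pos_of_pos_of_lt_pi (by positivity) ?_)
      have : (i : ℝ) ≤ k + 1 := by exact_mod_cast hi
      nlinarith [Real.pi_pos]
    · simp only [f, if_neg hi]; norm_num
  · have hi := i.2
    have e : ∀ j : Fin (k + 4), (open Classical in if (adeD (k + 4)).Adj i j then f j else 0) =
        (if (i : ℕ) ≤ k + 1 then (if (j : ℕ) = i + 1 then f j else 0) else 0) +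
        (if (i : ℕ) = k + 1 then (if (j : ℕ) = k + 3 then f j else 0) else 0) +
        (if (i : ℕ) = 0 then 0 else if (j : ℕ) = (if (i : ℕ) = k + 3 then k + 1 else i - 1)
          then f j else 0) := by
      intro j
      have hj := j.2
      simp only [adeD, SimpleGraph.fromRel_adj, ne_eq, Fin.ext_iff]
      split_ifs <;> first | omega | simp
    rw [sum_congr rfl fun j _ => e j, sum_add_distrib, sum_add_distrib]
    have e1 : (∑ j : Fin (k + 4), if (i : ℕ) ≤ k + 1 then
        (if (j : ℕ) = i + 1 then f j else 0) else 0) = if (i : ℕ) ≤ k + 1 then f (i + 1) else 0 := by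
      split_ifs with h
      · rw [sum_fin_ite, if_pos (by omega)]
      · simp
    have e2 : (∑ j : Fin (k + 4), if (i : ℕ) = k + 1 then
        (if (j : ℕ) = k + 3 then f j else 0) else 0) = if (i : ℕ) = k + 1 then f (k + 3) else 0 := by
      split_ifs with h
      · rw [sum_fin_ite, if_pos (by omega)]
      · simp
    have e3 : (∑ j : Fin (k + 4), if (i : ℕ) = 0 then 0 else
        if (j : ℕ) = (if (i : ℕ) = k + 3 then k + 1 else i - 1) then f j else 0) =
        if (i : ℕ) = 0 then 0 else f (if (i : ℕ) = k + 3 then k + 1 else i - 1) := by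
      split_ifs with h h'
      · simp
      · rw [sum_fin_ite, if_pos (by omega)]
      · rw [sum_fin_ite, if_pos (by omega)]
    rw [e1, e2, e3]
    change _ = 2 * Real.cos θ * f i
    have hf1 : ∀ m, m ≤ k + 1 → f m = g m := fun m hm => if_pos hm
    have hf2 : ∀ m, ¬ m ≤ k + 1 → f m = 1 := fun m hm => if_neg hm
    rcases (by omega : (i : ℕ) = 0 ∨ (0 < (i : ℕ) ∧ (i : ℕ) ≤ k) ∨ (i : ℕ) = k + 1 ∨
      (i : ℕ) = k + 2 ∨ (i : ℕ) = k + 3) with h | h | h | h | h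
    · rw [if_pos (by omega), if_neg (by omega), if_pos h, h, hf1 _ (by omega), hf1 _ (by omega)]
      simpa using hg0
    · rw [if_pos (by omega), if_neg (by omega), if_neg (by omega), if_neg (by omega),
        hf1 _ (by omega), hf1 _ (by omega), hf1 _ (by omega)]
      obtain ⟨m, hm⟩ : ∃ m, (i : ℕ) = m + 1 := ⟨i - 1, by omega⟩
      rw [hm, ← hstep]; simp
    · rw [if_pos (by omega), if_pos h, if_neg (by omega), if_neg (by omega),
        hf2 _ (by omega), hf2 _ (by omega), hf1 _ (by omega), hf1 _ (by omega), h, ← hstep, hgn]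
      simp; norm_num
    · rw [if_neg (by omega), if_neg (by omega), if_neg (by omega), if_neg (by omega),
        hf1 _ (by omega), hf2 _ (by omega), show (i : ℕ) - 1 = k + 1 by omega, hgn']
      ring
    · rw [if_neg (by omega), if_neg (by omega), if_neg (by omega), if_pos (by omega),
        hf1 _ (by omega), hf2 _ (by omega), hgn']
      ring

/-- For an angle `0 ≤ θ < π / 6` the number `2 cos θ` is positive and exceeds `√3`; this gives the
positivity of the Chebyshev values used for the exceptional diagrams. -/
theorem three_lt_sq {θ : ℝ} (h0 : 0 ≤ θ) (h1 : θ < Real.pi / 6) :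
    0 < 2 * Real.cos θ ∧ 3 < (2 * Real.cos θ) ^ 2 := by
  have h := Real.cos_lt_cos_of_nonneg_of_le_pi h0 (by linarith [Real.pi_pos]) h1
  rw [Real.cos_pi_div_six] at h
  have h3 : Real.sqrt 3 ^ 2 = 3 := Real.sq_sqrt (by norm_num)
  have h4 : 0 < Real.sqrt 3 := Real.sqrt_pos.2 (by norm_num)
  constructor <;> nlinarith

theorem adeE_sum {n : ℕ} (hn : 4 ≤ n) (i : Fin n) (ζ : Fin n → ℝ) :
    (∑ u, open Classical in if (adeE n).Adj i u then ζ u else 0) =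
    ∑ u : Fin n, if ((i : ℕ) + 1 = u ∧ (u : ℕ) ≤ n - 2) ∨ ((u : ℕ) + 1 = i ∧ (i : ℕ) ≤ n - 2) ∨
      ((i : ℕ) = 2 ∧ (u : ℕ) = n - 1) ∨ ((u : ℕ) = 2 ∧ (i : ℕ) = n - 1) then ζ u else 0 := by
  refine sum_congr rfl fun u _ => ?_
  have : (adeE n).Adj i u ↔ ((i : ℕ) + 1 = u ∧ (u : ℕ) ≤ n - 2) ∨
      ((u : ℕ) + 1 = i ∧ (i : ℕ) ≤ n - 2) ∨
      ((i : ℕ) = 2 ∧ (u : ℕ) = n - 1) ∨ ((u : ℕ) = 2 ∧ (i : ℕ) = n - 1) := by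
    simp only [adeE, SimpleGraph.fromRel_adj, ne_eq, Fin.ext_iff]
    omega
  simp only [this]

/-- Here and for `E_7`, `E_8` the eigenvector entries are products of values of the Chebyshev
sequence at `c = 2 cos (π / h)`: moving along an arm from its free end the entries are proportional
to `cheb c 1, cheb c 2, …`, and the arms are scaled to agree at the branch vertex.  The eigenvector
equation at that vertex is a multiple of the polynomial relation satisfied by `c`. -/
theorem perron_adeE6 : HasPerron (adeE 6) (2 * Real.cos (Real.pi / (12 : ℕ))) := by
  have hpi := Real.pi_pos
  obtain ⟨hc0, hc3⟩ := three_lt_sq (θ := Real.pi / (12 : ℕ)) (by positivity)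
    (by push_cast; linarith)
  have hmin : (2 * Real.cos (Real.pi / (12 : ℕ))) ^ 4 - 4 * (2 * Real.cos (Real.pi / (12 : ℕ))) ^ 2
      + 1 = 0 := by
    have h2 := Real.cos_two_mul (Real.pi / (12 : ℕ))
    rw [show 2 * (Real.pi / (12 : ℕ)) = Real.pi / 6 by push_cast; ring, Real.cos_pi_div_six] at h2
    have h3 : Real.sqrt 3 ^ 2 = 3 := Real.sq_sqrt (by norm_num)
    have : (2 * Real.cos (Real.pi / (12 : ℕ))) ^ 2 - 2 = Real.sqrt 3 := by linarith
    rw [← this] at h3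
    linarith
  generalize 2 * Real.cos (Real.pi / (12 : ℕ)) = c at *
  have k3 : 0 < c ^ 2 - 1 := by linarith
  refine ⟨![c * (c^2-1), c ^ 2 * (c^2-1), c * (c^2-1) * (c^2-1), c ^ 2 * (c^2-1),
    c * (c^2-1), (c^2-1)*(c^2-1)], fun i => ?_, fun i => ?_⟩
  · fin_cases i <;> simp <;> positivity
  · rw [adeE_sum (by norm_num)]
    fin_cases i <;> simp [Fin.sum_univ_succ]
    all_goals first | ring1 | linear_combination (-(c ^ 2 - 1)) * hmin

theorem perron_adeE7 : HasPerron (adeE 7) (2 * Real.cos (Real.pi / (18 : ℕ))) := by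
  have hpi := Real.pi_pos
  obtain ⟨hc0, hc3⟩ := three_lt_sq (θ := Real.pi / (18 : ℕ)) (by positivity)
    (by push_cast; linarith)
  have hmin : (2 * Real.cos (Real.pi / (18 : ℕ))) ^ 6 - 6 * (2 * Real.cos (Real.pi / (18 : ℕ))) ^ 4
      + 9 * (2 * Real.cos (Real.pi / (18 : ℕ))) ^ 2 - 3 = 0 := by
    have h2 := Real.cos_three_mul (Real.pi / (18 : ℕ))
    rw [show 3 * (Real.pi / (18 : ℕ)) = Real.pi / 6 by push_cast; ring, Real.cos_pi_div_six] at h2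
    have h3 : Real.sqrt 3 ^ 2 = 3 := Real.sq_sqrt (by norm_num)
    have : (2 * Real.cos (Real.pi / (18 : ℕ))) ^ 3 - 3 * (2 * Real.cos (Real.pi / (18 : ℕ)))
      = Real.sqrt 3 := by linarith
    rw [← this] at h3
    linarith
  generalize 2 * Real.cos (Real.pi / (18 : ℕ)) = c at *
  have k3 : 0 < c ^ 2 - 1 := by linarith
  have k4 : 0 < c ^ 3 - 2 * c := by nlinarith
  refine ⟨![c * (c^3-2*c), c ^ 2 * (c^3-2*c), c * (c^2-1) * (c^3-2*c), c * (c^2-1) * (c^2-1),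
    c ^ 2 * (c^2-1), c * (c^2-1), (c^2-1)*(c^3-2*c)], fun i => ?_, fun i => ?_⟩
  · fin_cases i <;> simp <;> positivity
  · rw [adeE_sum (by norm_num)]
    fin_cases i <;> simp [Fin.sum_univ_succ]
    all_goals first | ring1 | linear_combination (-c) * hmin

theorem perron_adeE8 : HasPerron (adeE 8) (2 * Real.cos (Real.pi / (30 : ℕ))) := by
  have hpi := Real.pi_pos
  obtain ⟨hc0, hc3⟩ := three_lt_sq (θ := Real.pi / (30 : ℕ)) (by positivity)
    (by push_cast; linarith)
  -- `(2 cos 5θ)² = 3` factors as `(c² - 3)` times the minimal polynomial of `c = 2 cos θ`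
  have hmin : (2 * Real.cos (Real.pi / (30 : ℕ))) ^ 8 - 7 * (2 * Real.cos (Real.pi / (30 : ℕ))) ^ 6
      + 14 * (2 * Real.cos (Real.pi / (30 : ℕ))) ^ 4
      - 8 * (2 * Real.cos (Real.pi / (30 : ℕ))) ^ 2 + 1 = 0 := by
    set θ := Real.pi / (30 : ℕ) with hθ
    have h5 : Real.cos (Real.pi / 6) = 16 * Real.cos θ ^ 5 - 20 * Real.cos θ ^ 3
        + 5 * Real.cos θ := by
      rw [show Real.pi / 6 = 2 * θ + 3 * θ by rw [hθ]; push_cast; ring, Real.cos_add,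
        Real.cos_two_mul, Real.sin_two_mul, Real.cos_three_mul, Real.sin_three_mul]
      have := Real.sin_sq_add_cos_sq θ
      have e : Real.sin θ ^ 2 = 1 - Real.cos θ ^ 2 := by linarith
      have e4 : Real.sin θ ^ 4 = (1 - Real.cos θ ^ 2) ^ 2 := by rw [← e]; ring
      linear_combination (-6 * Real.cos θ) * e + 8 * Real.cos θ * e4
    rw [Real.cos_pi_div_six] at h5
    have h3 : Real.sqrt 3 ^ 2 = 3 := Real.sq_sqrt (by norm_num)
    have h6 : (2 * Real.cos θ) ^ 5 - 5 * (2 * Real.cos θ) ^ 3 + 5 * (2 * Real.cos θ)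
      = Real.sqrt 3 := by linarith
    rw [← h6] at h3
    have hne : (2 * Real.cos θ) ^ 2 - 3 ≠ 0 := by linarith
    apply mul_left_cancel₀ hne
    linear_combination h3
  generalize 2 * Real.cos (Real.pi / (30 : ℕ)) = c at *
  have k3 : 0 < c ^ 2 - 1 := by linarith
  have k4 : 0 < c ^ 3 - 2 * c := by nlinarith
  have k5 : 0 < c ^ 4 - 3 * c ^ 2 + 1 := by nlinarith
  refine ⟨![c * (c^4-3*c^2+1), c ^ 2 * (c^4-3*c^2+1), c * (c^2-1) * (c^4-3*c^2+1),
    c * (c^2-1) * (c^3-2*c), c * (c^2-1) * (c^2-1),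
    c ^ 2 * (c^2-1), c * (c^2-1), (c^2-1)*(c^4-3*c^2+1)], fun i => ?_, fun i => ?_⟩
  · fin_cases i <;> simp <;> positivity
  · rw [adeE_sum (by norm_num)]
    fin_cases i <;> simp [Fin.sum_univ_succ]
    all_goals first | ring1 | linear_combination (-1) * hmin

/-- The Coxeter number of an ADE diagram determines its Perron eigenvalue. -/
theorem HasCoxeterNumber.perron {W : Type*} [Fintype W] {G : SimpleGraph W} {h : ℕ}
    (hG : HasCoxeterNumber G h) : 2 ≤ h ∧ HasPerron G (2 * Real.cos (Real.pi / h)) := by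
  rcases hG with ⟨n, hn, rfl, ⟨e⟩⟩ | ⟨n, hn, rfl, ⟨e⟩⟩ | ⟨rfl, ⟨e⟩⟩ | ⟨rfl, ⟨e⟩⟩ | ⟨rfl, ⟨e⟩⟩
  · exact ⟨by omega, (perron_adeA n hn).of_iso e⟩
  · exact ⟨by omega, (perron_adeD n hn).of_iso e⟩
  · exact ⟨by omega, perron_adeE6.of_iso e⟩
  · exact ⟨by omega, perron_adeE7.of_iso e⟩
  · exact ⟨by omega, perron_adeE8.of_iso e⟩

/-- Gluing the eigenvectors of the connected components. -/
theorem exists_perron {V : Type} [Fintype V] (A : V → V → ℕ) (hs : ∀ u v, A u v = A v u)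
    (hd : ∀ v, A v v = 0) (h1 : ∀ u v, A u v ≤ 1) (h : ℕ)
    (hcox : ∀ c : (graphOf A).ConnectedComponent,
      HasCoxeterNumber ((graphOf A).induce c.supp) h) :
    (Nonempty V → 2 ≤ h) ∧ ∃ ξ : V → ℝ, (∀ v, 0 < ξ v) ∧
      ∀ v, ∑ u, (A v u : ℝ) * ξ u = 2 * Real.cos (Real.pi / h) * ξ v := by
  classical
  have hp := fun c => HasCoxeterNumber.perron (hcox c)
  refine ⟨fun ⟨v⟩ => (hp ((graphOf A).connectedComponentMk v)).1, ?_⟩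
  choose ζ hζ hev using fun c => (hp c).2
  let ξ : V → ℝ := fun v => ζ ((graphOf A).connectedComponentMk v) ⟨v, rfl⟩
  have hξ : ∀ c v, ∀ hv : v ∈ SimpleGraph.ConnectedComponent.supp c, ξ v = ζ c ⟨v, hv⟩ := by
    rintro c v hv
    have : (graphOf A).connectedComponentMk v = c := hv
    subst this
    rfl
  refine ⟨ξ, fun v => hζ _ _, fun v => ?_⟩
  have hadj : ∀ u, (graphOf A).Adj v u ↔ A v u = 1 := by
    intro u
    simp only [graphOf, SimpleGraph.fromRel_adj, hs u v, or_self, and_iff_right_iff_imp]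
    rintro h rfl
    rw [hd] at h; exact absurd h (by norm_num)
  set c := (graphOf A).connectedComponentMk v with hc
  have := hev c ⟨v, rfl⟩
  rw [hξ c v rfl, ← this]
  have e : ∀ u, (A v u : ℝ) * ξ u = if (graphOf A).Adj v u then ξ u else 0 := by
    intro u
    split_ifs with hu
    · rw [(hadj u).1 hu]; simp
    · have : A v u = 0 := by
        have := h1 v u; have := mt (hadj u).2 hu; omega
      rw [this]; simp
  rw [sum_congr rfl fun u _ => e u]
  have e1 : ∑ u, (if (graphOf A).Adj v u then ξ u else 0) =
      ∑ u ∈ univ.filter (· ∈ c.supp), if (graphOf A).Adj v u then ξ u else 0 := by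
    refine (sum_subset (subset_univ _) fun u _ hu => if_neg fun hvu => hu ?_).symm
    simp only [mem_filter, mem_univ, true_and]
    exact (SimpleGraph.ConnectedComponent.sound hvu.reachable).symm
  have e2 : ∑ u ∈ univ.filter (· ∈ c.supp), (if (graphOf A).Adj v u then ξ u else 0) =
      ∑ u : c.supp, if (graphOf A).Adj v u then ξ u else 0 :=
    sum_subtype _ (by simp) _
  rw [e1, e2]
  refine sum_congr rfl fun u _ => ?_
  rw [hξ c u u.2]
  simp

end ADEPeriodicity

/-! ### Valuations -/

namespace ADEPeriodicity
set_option linter.unusedSectionVars false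
open Finset

/-- An additive valuation on a field with values in a linearly ordered group; the value at `0` is
unspecified, and the valuation is trivial on the nonzero integers. -/
structure OrdVal (F : Type*) [Field F] (Γ : Type*) [AddCommGroup Γ] [LinearOrder Γ] where
  v : F → Γ
  v_mul : ∀ x y, x ≠ 0 → y ≠ 0 → v (x * y) = v x + v y
  v_add : ∀ x y, x ≠ 0 → y ≠ 0 → x + y ≠ 0 → min (v x) (v y) ≤ v (x + y)
  v_int : ∀ n : ℤ, n ≠ 0 → (n : F) ≠ 0 ∧ v n = 0

namespace OrdVal
variable {F Γ : Type*} [Field F] [AddCommGroup Γ] [LinearOrder Γ] [IsOrderedAddMonoid Γ]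
  (ν : OrdVal F Γ)

/-- The valuation as a homomorphism on the unit group. -/
def hom : Additive Fˣ →+ Γ :=
  AddMonoidHom.mk' (fun x => ν.v (x.toMul : F)) fun x y => by
    simp [ν.v_mul _ _ x.toMul.ne_zero y.toMul.ne_zero]

/-- The valuation of a unit. -/
def u (x : Fˣ) : Γ := ν.v (x : F)

theorem u_mul (x y : Fˣ) : ν.u (x * y) = ν.u x + ν.u y :=
  ν.v_mul _ _ x.ne_zero y.ne_zero

theorem u_one : ν.u 1 = 0 := by
  have := ν.u_mul 1 1
  simpa using this

theorem u_inv (x : Fˣ) : ν.u x⁻¹ = -ν.u x := by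
  have := ν.u_mul x⁻¹ x
  rw [inv_mul_cancel, u_one] at this
  exact (neg_eq_of_add_eq_zero_left this.symm).symm

theorem u_div (x y : Fˣ) : ν.u (x / y) = ν.u x - ν.u y := by
  rw [div_eq_mul_inv, u_mul, u_inv, sub_eq_add_neg]

theorem u_zpow (x : Fˣ) (n : ℤ) : ν.u (x ^ n) = n • ν.u x := by
  have := map_zsmul ν.hom n (Additive.ofMul x)
  exact this

theorem u_pow (x : Fˣ) (n : ℕ) : ν.u (x ^ n) = n • ν.u x := by
  have := map_nsmul ν.hom n (Additive.ofMul x)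
  exact this

theorem u_prod {ι : Type*} (s : Finset ι) (x : ι → Fˣ) :
    ν.u (∏ i ∈ s, x i) = ∑ i ∈ s, ν.u (x i) := by
  classical
  induction s using Finset.induction_on with
  | empty => simp [u_one]
  | insert i s hi ih => rw [prod_insert hi, sum_insert hi, u_mul, ih]

theorem v_one : ν.v 1 = 0 := ν.u_one

theorem v_neg_one : ν.v (-1) = 0 := by
  simpa using (ν.v_int (-1) (by norm_num)).2

theorem v_neg (x : F) (hx : x ≠ 0) : ν.v (-x) = ν.v x := by
  rw [← neg_one_mul, ν.v_mul _ _ (by simp) hx, v_neg_one, zero_add]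

/-- `x` is zero or its valuation lies in `J`. -/
def Mem (J : Set Γ) (x : F) : Prop := x = 0 ∨ ν.v x ∈ J

theorem Mem.zero (J : Set Γ) : ν.Mem J 0 := Or.inl rfl

theorem Mem.neg {J : Set Γ} {x : F} (hx : ν.Mem J x) : ν.Mem J (-x) := by
  by_cases h : x = 0
  · simp [h, Mem]
  · right; rw [ν.v_neg x h]; exact hx.resolve_left h

theorem Mem.add {J : Set Γ} (hJ : IsUpperSet J) {x y : F} (hx : ν.Mem J x) (hy : ν.Mem J y) :
    ν.Mem J (x + y) := by
  by_cases h1 : x = 0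
  · simpa [h1] using hy
  by_cases h2 : y = 0
  · simpa [h2] using hx
  by_cases h3 : x + y = 0
  · exact Or.inl h3
  right
  refine hJ (ν.v_add x y h1 h2 h3) ?_
  rcases min_choice (ν.v x) (ν.v y) with h | h <;> rw [h]
  · exact hx.resolve_left h1
  · exact hy.resolve_left h2

theorem Mem.sub {J : Set Γ} (hJ : IsUpperSet J) {x y : F} (hx : ν.Mem J x) (hy : ν.Mem J y) :
    ν.Mem J (x - y) := by
  rw [sub_eq_add_neg]; exact Mem.add ν hJ hx (Mem.neg ν hy)

theorem Mem.sum {J : Set Γ} (hJ : IsUpperSet J) {ι : Type*} (s : Finset ι) (x : ι → F)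
    (hx : ∀ i ∈ s, ν.Mem J (x i)) : ν.Mem J (∑ i ∈ s, x i) :=
  Finset.sum_induction _ (ν.Mem J) (fun _ _ => Mem.add ν hJ) (Mem.zero ν J) hx

theorem Mem.mul_unit {J K : Set Γ} {x : F} (y : Fˣ) (h : ∀ a ∈ J, a + ν.u y ∈ K)
    (hx : ν.Mem J x) : ν.Mem K (x * y) := by
  by_cases h1 : x = 0
  · simp [h1, Mem]
  right
  rw [ν.v_mul _ _ h1 y.ne_zero]
  exact h _ (hx.resolve_left h1)

/-- Adding an element of larger valuation does not change the valuation. -/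
theorem add_of_lt {x y : F} (hx : x ≠ 0) (hy : ν.Mem (Set.Ioi (ν.v x)) y) :
    x + y ≠ 0 ∧ ν.v (x + y) = ν.v x := by
  by_cases h2 : y = 0
  · simp [h2, hx]
  have hlt : ν.v x < ν.v y := hy.resolve_left h2
  have hne : x + y ≠ 0 := by
    intro h
    have : y = -x := by linear_combination h
    rw [this, ν.v_neg x hx] at hlt
    exact lt_irrefl _ hlt
  refine ⟨hne, le_antisymm ?_ ?_⟩
  · have := ν.v_add (x + y) (-y) hne (neg_ne_zero.2 h2) (by simpa using hx)
    rw [ν.v_neg y h2, add_neg_cancel_right] at this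
    rcases min_le_iff.1 this with h | h
    · exact h
    · exact (not_le.2 hlt h).elim
  · have := ν.v_add x y hx h2 hne
    rwa [min_eq_left hlt.le] at this

theorem one_add {y : F} (hy : y ≠ 0) (hv : ν.v y ≠ 0) :
    1 + y ≠ 0 ∧ ν.v (1 + y) = min 0 (ν.v y) := by
  rcases lt_or_gt_of_ne hv with h | h
  · have := ν.add_of_lt (x := y) (y := 1) hy (Or.inr (by rw [v_one]; exact h))
    rw [add_comm, min_eq_right h.le]; exact this
  · have := ν.add_of_lt (x := 1) (y := y) one_ne_zero (Or.inr (by rw [v_one]; exact h))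
    rw [v_one] at this
    rw [min_eq_left h.le]; exact this

/-- A finite sum has the valuation of its strictly dominant term. -/
theorem v_sum {ι : Type*} (s : Finset ι) (f : ι → F) (i : ι) (hi : i ∈ s) (h0 : f i ≠ 0)
    (h : ∀ j ∈ s, j ≠ i → ν.v (f i) < ν.v (f j)) :
    ∑ j ∈ s, f j ≠ 0 ∧ ν.v (∑ j ∈ s, f j) = ν.v (f i) := by
  classical
  rw [← add_sum_erase s f hi]
  refine ν.add_of_lt h0 (Mem.sum ν (isUpperSet_Ioi _) _ _ fun j hj => Or.inr ?_)
  rw [mem_erase] at hj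
  exact h j hj.2 hj.1

/-- The units congruent to `1` modulo elements with valuation in the upper set `J` of positive
values. -/
def U (J : Set Γ) (hJ : IsUpperSet J) (hpos : ∀ a ∈ J, 0 < a) : Subgroup Fˣ where
  carrier := {x | ν.Mem J ((x : F) - 1)}
  one_mem' := by simp [Mem]
  mul_mem' := by
    intro x y hx hy
    have hy0 : ν.u y = 0 := by
      have := ν.add_of_lt (x := 1) (y := (y : F) - 1) one_ne_zero
        (hy.imp_right fun h => by rw [v_one]; exact hpos _ h)
      rw [add_sub_cancel, v_one] at this
      exact this.2
    have : ((x * y : Fˣ) : F) - 1 = ((x : F) - 1) * y + ((y : F) - 1) := by push_cast; ring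
    change ν.Mem J _
    rw [this]
    exact Mem.add ν hJ (Mem.mul_unit ν y (fun a ha => by rwa [hy0, add_zero]) hx) hy
  inv_mem' := by
    intro x hx
    have hx0 : ν.u x = 0 := by
      have := ν.add_of_lt (x := 1) (y := (x : F) - 1) one_ne_zero
        (hx.imp_right fun h => by rw [v_one]; exact hpos _ h)
      rw [add_sub_cancel, v_one] at this
      exact this.2
    have : ((x⁻¹ : Fˣ) : F) - 1 = -(((x : F) - 1) * (x⁻¹ : Fˣ)) := by
      rw [sub_mul, Units.mul_inv]; ring
    change ν.Mem J _
    rw [this]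
    exact Mem.neg ν (Mem.mul_unit ν x⁻¹ (fun a ha => by rwa [u_inv, hx0, neg_zero, add_zero]) hx)

theorem mem_U {J : Set Γ} {hJ : IsUpperSet J} {hpos : ∀ a ∈ J, 0 < a} {x : Fˣ} :
    x ∈ ν.U J hJ hpos ↔ ν.Mem J ((x : F) - 1) := Iff.rfl

end OrdVal

/-! ### Laurent polynomials -/

/-- Integral Laurent polynomials in variables indexed by `I`. -/
abbrev Laurent (I : Type) := AddMonoidAlgebra ℤ (I → ℤ)

/-- Laurent monomials in a family of elements of a commutative group. -/
def mono {I : Type} [Fintype I] {G : Type*} [CommGroup G] (z : I → G) :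
    Multiplicative (I → ℤ) →* G where
  toFun m := ∏ i, z i ^ (m.toAdd i)
  map_one' := by simp
  map_mul' m m' := by simp [zpow_add, prod_mul_distrib]

/-- Evaluation of Laurent polynomials at a family of units. -/
noncomputable def ev {I : Type} [Fintype I] {R : Type*} [CommRing R] (z : I → Rˣ) :
    Laurent I →+* R :=
  (AddMonoidAlgebra.lift ℤ R (I → ℤ) ((Units.coeHom R).comp (mono z))).toRingHom

theorem ev_single {I : Type} [Fintype I] {R : Type*} [CommRing R] (z : I → Rˣ) (m : I → ℤ)
    (c : ℤ) : ev z (AddMonoidAlgebra.single m c) = c * (mono z (Multiplicative.ofAdd m) : Rˣ) := by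
  simp [ev, AddMonoidAlgebra.lift_single]

theorem ev_apply {I : Type} [Fintype I] {R : Type*} [CommRing R] (z : I → Rˣ) (Φ : Laurent I) :
    ev z Φ = ∑ m ∈ Φ.coeff.support, (Φ.coeff m : R) * (mono z (Multiplicative.ofAdd m) : Rˣ) := by
  conv_lhs => rw [← AddMonoidAlgebra.sum_coeff_single Φ]
  rw [Finsupp.sum, map_sum]
  exact sum_congr rfl fun m _ => ev_single z m _

/-- The weight of an exponent vector. -/
def dot {I : Type} [Fintype I] {Γ : Type*} [AddCommGroup Γ] (γ : I → Γ) (m : I → ℤ) : Γ :=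
  ∑ i, m i • γ i

/-- A family of weights is independent when no nonzero exponent vector has weight zero. -/
def Indep {I : Type} [Fintype I] {Γ : Type*} [AddCommGroup Γ] (γ : I → Γ) : Prop :=
  ∀ m : I → ℤ, dot γ m = 0 → m = 0

theorem dot_sub {I : Type} [Fintype I] {Γ : Type*} [AddCommGroup Γ] (γ : I → Γ) (m m' : I → ℤ) :
    dot γ (m - m') = dot γ m - dot γ m' := by
  simp [dot, sub_smul]

theorem Indep.inj {I : Type} [Fintype I] {Γ : Type*} [AddCommGroup Γ] {γ : I → Γ} (h : Indep γ)
    {m m' : I → ℤ} (e : dot γ m = dot γ m') : m = m' :=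
  sub_eq_zero.1 (h _ (by rw [dot_sub, e, sub_self]))

namespace OrdVal
variable {F Γ : Type*} [Field F] [AddCommGroup Γ] [LinearOrder Γ] [IsOrderedAddMonoid Γ]
  (ν : OrdVal F Γ)

theorem u_mono {I : Type} [Fintype I] (z : I → Fˣ) (m : I → ℤ) :
    ν.u (mono z (Multiplicative.ofAdd m)) = dot (fun i => ν.u (z i)) m := by
  simp [mono, u_prod, u_zpow, dot]

/-- When the monomials occurring in `Φ` have pairwise distinct valuations, the valuation of
`ev z Φ` lies in an upper set iff all the occurring weights do. -/
theorem mem_ev {I : Type} [Fintype I] (z : I → Fˣ) {γ : I → Γ} (hγ : Indep γ) (Φ : Laurent I)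
    (hz : ∀ m ∈ Φ.coeff.support, ν.u (mono z (Multiplicative.ofAdd m)) = dot γ m)
    {J : Set Γ} (hJ : IsUpperSet J) :
    ν.Mem J (ev z Φ) ↔ ∀ m ∈ Φ.coeff.support, dot γ m ∈ J := by
  have hv : ∀ m ∈ Φ.coeff.support, (Φ.coeff m : F) * (mono z (Multiplicative.ofAdd m) : Fˣ) ≠ 0 ∧
      ν.v ((Φ.coeff m : F) * (mono z (Multiplicative.ofAdd m) : Fˣ)) = dot γ m := by
    intro m hm
    have hc := ν.v_int (Φ.coeff m) (Finsupp.mem_support_iff.1 hm)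
    refine ⟨mul_ne_zero hc.1 (Units.ne_zero _), ?_⟩
    rw [ν.v_mul _ _ hc.1 (Units.ne_zero _), hc.2, zero_add]
    exact hz m hm
  rw [ev_apply]
  constructor
  · intro h m hm
    obtain ⟨m0, hm0, hmin⟩ := exists_min_image Φ.coeff.support (dot γ) ⟨m, hm⟩
    have hs := ν.v_sum Φ.coeff.support (fun m => (Φ.coeff m : F) * (mono z (Multiplicative.ofAdd m) : Fˣ))
      m0 hm0 (hv m0 hm0).1 (fun j hj hne => by
        rw [(hv m0 hm0).2, (hv j hj).2]
        exact lt_of_le_of_ne (hmin j hj) fun e => hne (hγ.inj e.symm))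
    have := h.resolve_left hs.1
    rw [hs.2, (hv m0 hm0).2] at this
    exact hJ (hmin m hm) this
  · intro h
    exact Mem.sum ν hJ _ _ fun m hm => Or.inr (by rw [(hv m hm).2]; exact h m hm)

end OrdVal
end ADEPeriodicity

/-! ### Hahn series and the lexicographic value group -/

namespace ADEPeriodicity
open Finset
set_option linter.unusedSectionVars false

/-- The lexicographic value group. -/
abbrev Gm := ℝ ×ₗ ℝ

/-- The field of Hahn series over `Gm`. -/
abbrev HF := HahnSeries Gm ℚ

theorem HF_int (n : ℤ) : (n : HF) = HahnSeries.single (0 : Gm) (n : ℚ) := by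
  have := map_intCast (HahnSeries.C : ℚ →+* HF) n
  rw [← this]; rfl

/-- The order of a Hahn series, as a valuation. -/
noncomputable def ordVal : OrdVal HF Gm where
  v := HahnSeries.order
  v_mul x y hx hy := HahnSeries.order_mul hx hy
  v_add x y hx hy hxy := HahnSeries.min_order_le_order_add hxy
  v_int n hn := by
    have : (n : ℚ) ≠ 0 := by exact_mod_cast hn
    rw [HF_int]
    exact ⟨by simpa using this, HahnSeries.order_single this⟩

/-- The generator of weight `g`. -/
noncomputable def qpow (g : Gm) : HFˣ :=
  Units.mk0 (HahnSeries.single g (1 : ℚ)) (by simp)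

theorem u_qpow (g : Gm) : ordVal.u (qpow g) = g :=
  HahnSeries.order_single (one_ne_zero)

/-- First coordinate. -/
def gfst : Gm →+ ℝ where
  toFun x := (ofLex x).1
  map_zero' := rfl
  map_add' _ _ := rfl

/-- Second coordinate. -/
def gsnd : Gm →+ ℝ where
  toFun x := (ofLex x).2
  map_zero' := rfl
  map_add' _ _ := rfl

/-- The value with the given coordinates. -/
def gmk (a b : ℝ) : Gm := toLex (a, b)

@[simp] theorem gfst_mk (a b : ℝ) : gfst (gmk a b) = a := rfl
@[simp] theorem gsnd_mk (a b : ℝ) : gsnd (gmk a b) = b := rfl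

theorem gm_lt {x y : Gm} : x < y ↔ gfst x < gfst y ∨ gfst x = gfst y ∧ gsnd x < gsnd y :=
  Prod.Lex.lt_iff

theorem gm_ext {x y : Gm} (h1 : gfst x = gfst y) (h2 : gsnd x = gsnd y) : x = y :=
  Prod.ext h1 h2

theorem gfst_mono {x y : Gm} (h : x ≤ y) : gfst x ≤ gfst y := by
  rcases h.lt_or_eq with h | h
  · rcases gm_lt.1 h with h | h
    · exact h.le
    · exact h.1.le
  · rw [h]

theorem map_dot {I : Type} [Fintype I] {Γ Γ' : Type*} [AddCommGroup Γ] [AddCommGroup Γ']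
    (f : Γ →+ Γ') (γ : I → Γ) (m : I → ℤ) : f (dot γ m) = dot (fun i => f (γ i)) m := by
  simp [dot]

/-- Positive reals that are linearly independent over the rationals. -/
theorem exists_indep (I : Type) [Fintype I] : ∃ p : I → ℝ, (∀ i, 0 < p i) ∧ Indep p := by
  classical
  obtain ⟨s, hs, hli⟩ := (le_rank_iff_exists_linearIndependent (K := ℚ) (V := ℝ)
    (c := Module.rank ℚ ℝ)).1 le_rfl
  have hinf : s.Infinite := by
    rw [← Set.infinite_coe_iff, ← Cardinal.aleph0_le_mk_iff, hs, Real.rank_rat_real]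
    exact Cardinal.aleph0_le_continuum
  obtain ⟨e⟩ : Nonempty (I ↪ s) := by
    have := hinf.to_subtype
    exact ⟨(Fintype.equivFin I).toEmbedding.trans
      ((Fin.valEmbedding).trans (Infinite.natEmbedding s))⟩
  have hne : ∀ i, ((e i : s) : ℝ) ≠ 0 := fun i => hli.ne_zero (e i).2
  refine ⟨fun i => |((e i : s) : ℝ)|, fun i => abs_pos.2 (hne i), fun m hm => ?_⟩
  have hli' := (hli.comp _ e.injective)
  rw [Fintype.linearIndependent_iff] at hli'
  have := hli' (fun i => (m i : ℚ) * (if 0 < ((e i : s) : ℝ) then 1 else -1)) (by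
    refine Eq.trans (sum_congr rfl fun i _ => ?_) hm
    rcases lt_or_gt_of_ne (hne i) with h | h
    · simp [abs_of_neg h, not_lt.2 h.le, Rat.smul_def]
    · simp [abs_of_pos h, h, Rat.smul_def])
  funext i
  have h := this i
  split_ifs at h <;> simpa using h

theorem indep_gm {I : Type} [Fintype I] {p : I → ℝ} (hp : Indep p) (γ : I → Gm)
    (h : ∀ i, gsnd (γ i) = p i) : Indep γ := by
  intro m hm
  apply hp
  have := map_dot gsnd γ m
  rw [hm, map_zero] at this
  simp only [h] at this
  exact this.symm

end ADEPeriodicity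

/-! ### Solutions and the multiplicative defect -/

namespace ADEPeriodicity
open Finset
set_option linter.unusedSectionVars false

/-- A nondegenerate solution of the `Y`-system, indexed by nonnegative times and without parity
restriction: `y` and `1 + y` are units of a field. -/
structure NSol {V : Type} [Fintype V] (A B : V → V → ℕ) : Type 1 where
  F : Type
  [fld : Field F]
  y : ℕ → V → Fˣ
  l : ℕ → V → Fˣ
  hl : ∀ t v, (l t v : F) = 1 + y t v
  step : ∀ t v, y (t + 2) v * y t v =
    (∏ u, l (t + 1) u ^ B v u) / ∏ u, (l (t + 1) u / y (t + 1) u) ^ A v u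

attribute [instance] NSol.fld

section
variable {V : Type} [Fintype V] {A B : V → V → ℕ}

/-- The time shift of a solution. -/
abbrev NSol.shift (σ : NSol A B) : NSol A B where
  F := σ.F
  y t v := σ.y (t + 1) v
  l t v := σ.l (t + 1) v
  hl t v := σ.hl (t + 1) v
  step t v := σ.step (t + 1) v

/-- The initial data of a solution, `y 0` being inverted. -/
def NSol.z (σ : NSol A B) : V ⊕ V → σ.Fˣ :=
  Sum.elim (fun v => (σ.y 0 v)⁻¹) (fun v => σ.y 1 v)

/-- Unit-valued functions on the class of all solutions. -/
abbrev UG (A B : V → V → ℕ) := ∀ σ : NSol A B, σ.Fˣ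

/-- The time shift on functions of solutions. -/
def sh : UG A B →* UG A B where
  toFun g σ := g σ.shift
  map_one' := rfl
  map_mul' _ _ := rfl

/-- The solution itself as a family of elements of `UG`. -/
def yU (t : ℕ) (v : V) : UG A B := fun σ => σ.y t v

/-- The family `1 + y`. -/
def lU (t : ℕ) (v : V) : UG A B := fun σ => σ.l t v

/-- The `F`-polynomials attached to the matrix `A`: the solution with initial values `1` of the
multiplicative `A`-wave equation with source `1 + y`. -/
def FF : ℕ → V → UG A B
  | 0 => fun _ => 1
  | 1 => fun _ => 1
  | n + 2 => fun v => (∏ u, FF (n + 1) u ^ A v u) * lU (n + 1) v / FF n v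

theorem FF_step (n : ℕ) (v : V) :
    (FF (n + 2) v : UG A B) * FF n v = (∏ u, FF (n + 1) u ^ A v u) * lU (n + 1) v := by
  rw [FF, div_mul_cancel]

end

open Additive in
/-- The multiplicative form of `exists_defect`.  The defect `E` solves the `A`-wave equation whose
source is the ratio of `1 + y` at times differing by `2 (h + h')`, and it controls the
corresponding ratio of `y`.  Its first two values are monomials in the `1 + y` and the `1 + y⁻¹` of
prescribed time windows, whence the congruence statement; they are also Laurent monomials in the
initial data times `F`-polynomials.  The construction commutes with the time shift. -/
theorem exists_E {V : Type} [Fintype V] [DecidableEq V] (A B : V → V → ℕ)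
    (hAB : (Matrix.of fun u v => (A u v : ℤ)) * (Matrix.of fun u v => (B u v : ℤ)) =
      (Matrix.of fun u v => (B u v : ℤ)) * (Matrix.of fun u v => (A u v : ℤ)))
    {h h' : ℕ} (hh : 1 ≤ h) (hh' : 1 ≤ h') (hA : cheb (Matrix.of fun u v => (A u v : ℤ)) h = 0)
    (hB : cheb (Matrix.of fun u v => (B u v : ℤ)) h' = 0) :
    ∃ E : ℕ → V → UG A B,
      (∀ t v σ, E (t + 2) v σ * E t v σ =
        (∏ u, E (t + 1) u σ ^ A v u) * (σ.l (t + 1 + 2 * (h + h')) v / σ.l (t + 1) v)) ∧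
      (∀ t v σ, σ.y (t + 1 + 2 * (h + h')) v / σ.y (t + 1) v =
        ∏ u, E (t + 1) u σ ^ ((B v u : ℤ) - A v u)) ∧
      (∀ (σ : NSol A B) (U : Subgroup σ.Fˣ),
        (∀ t u, (0 < t ∧ t ≤ h) ∨ (h + h' < t ∧ t ≤ h + h' + h) → σ.l t u ∈ U) →
        (∀ t u, (h < t ∧ t ≤ h + h') ∨ (h + h' + h < t ∧ t ≤ 2 * (h + h')) →
          σ.l t u / σ.y t u ∈ U) → ∀ v, E 0 v σ ∈ U ∧ E 1 v σ ∈ U) ∧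
      (∀ v, (∃ m : V ⊕ V → ℤ, ∀ σ, E 0 v σ =
          mono σ.z (Multiplicative.ofAdd m) * FF (2 * (h + h')) v σ) ∧
        ∃ m : V ⊕ V → ℤ, ∀ σ, E 1 v σ =
          mono σ.z (Multiplicative.ofAdd m) * FF (2 * (h + h') + 1) v σ) ∧
      ∀ t v σ, E t v (NSol.shift σ) = E (t + 1) v σ := by
  have key := exists_defect (G := Additive (UG A B)) _ _ hAB hh hh' hA hB
    (fun t v => ofMul (yU t v)) (fun t v => ofMul (lU t v)) (fun t v => ofMul (FF t v))
    (by
      intro t v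
      apply toMul.injective
      funext σ
      have := σ.step t v
      simpa [yU, lU] using this)
    (by
      intro t v
      apply toMul.injective
      simpa using FF_step t v)
    (fun v => rfl) (fun v => rfl) (MonoidHom.toAdditive sh) (fun t v => rfl) (fun t v => rfl)
  obtain ⟨δ, d1, d2, d3, d4, d5⟩ := key
  refine ⟨fun t v => (δ t v).toMul, ?_, ?_, ?_, ?_, ?_⟩
  · intro t v σ
    have := congrFun (congrArg toMul (d1 t v)) σ
    simpa [yU, lU] using this
  · intro t v σ
    have := congrFun (congrArg toMul (d2 t v)) σ
    simpa [yU, lU] using this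
  · intro σ U h1 h2 v
    have := d3 (Subgroup.toAddSubgroup (U.comap (Pi.evalMonoidHom _ σ)))
      (fun t u ht => h1 t u ht) (fun t u ht => h2 t u ht) v
    exact this
  · intro v
    have := d4 (Subgroup.toAddSubgroup (G := UG A B)
      { carrier := {g | ∃ m : V ⊕ V → ℤ, ∀ σ, g σ = mono σ.z (Multiplicative.ofAdd m)}
        one_mem' := ⟨0, fun σ => by simp⟩
        mul_mem' := by
          rintro a b ⟨m, hm⟩ ⟨m', hm'⟩
          exact ⟨m + m', fun σ => by rw [ofAdd_add, map_mul, ← hm, ← hm']; rfl⟩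
        inv_mem' := by
          rintro a ⟨m, hm⟩
          exact ⟨-m, fun σ => by rw [ofAdd_neg, map_inv, ← hm]; rfl⟩ })
      (fun v => ⟨Pi.single (Sum.inl v) (-1), fun σ => by
        simp [mono, Pi.single_apply, NSol.z, yU]⟩)
      (fun v => ⟨Pi.single (Sum.inr v) 1, fun σ => by
        simp [mono, Pi.single_apply, NSol.z, yU]⟩) v
    obtain ⟨⟨m, hm⟩, m', hm'⟩ := this
    refine ⟨⟨m, fun σ => ?_⟩, m', fun σ => ?_⟩
    · rw [← hm σ]
      exact (div_mul_cancel _ _).symm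
    · rw [← hm' σ]
      exact (div_mul_cancel _ _).symm
  · intro t v σ
    exact congrFun (congrArg toMul (d5 t v)) σ

end ADEPeriodicity

/-! ### Admissible matrices and the tropical phase -/

namespace ADEPeriodicity
open Finset
set_option linter.unusedSectionVars false

/-- An edge-multiplicity function as an integer matrix. -/
def toZ {V : Type} (A : V → V → ℕ) : Matrix V V ℤ := Matrix.of fun u v => (A u v : ℤ)

/-- The combinatorial data used in the proof: two commuting disjoint `0/1` symmetric matrices,
each having a positive eigenvector with eigenvalue `2 cos (π / h)`, resp. `2 cos (π / h')`. -/
structure Adm {V : Type} [Fintype V] [DecidableEq V] (A B : V → V → ℕ) (h h' : ℕ) : Prop where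
  symmA : ∀ u v, A u v = A v u
  symmB : ∀ u v, B u v = B v u
  leA : ∀ u v, A u v ≤ 1
  leB : ∀ u v, B u v ≤ 1
  disj : ∀ u v, A u v * B u v = 0
  comm : ∀ u v, (∑ w, A u w * B w v) = ∑ w, B u w * A w v
  two_le : 2 ≤ h
  two_le' : 2 ≤ h'
  perronA : ∃ ξ : V → ℝ, (∀ v, 0 < ξ v) ∧
    ∀ v, ∑ u, (A v u : ℝ) * ξ u = 2 * Real.cos (Real.pi / h) * ξ v
  perronB : ∃ ξ : V → ℝ, (∀ v, 0 < ξ v) ∧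
    ∀ v, ∑ u, (B v u : ℝ) * ξ u = 2 * Real.cos (Real.pi / h') * ξ v

section
variable {V : Type} [Fintype V] [DecidableEq V] {A B : V → V → ℕ} {h h' : ℕ}

theorem Adm.commute (H : Adm A B h h') : toZ A * toZ B = toZ B * toZ A := by
  ext u v
  simp only [toZ, Matrix.mul_apply, Matrix.of_apply]
  exact_mod_cast H.comm u v

theorem Adm.chebA (H : Adm A B h h') :
    (∀ n ≤ h, ∀ u v, 0 ≤ cheb (toZ A) n u v) ∧ cheb (toZ A) h = 0 := by
  obtain ⟨ξ, h1, h2⟩ := H.perronA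
  refine cheb_nonneg_and_eq_zero (toZ A) (fun u v => ?_) (fun u v => ?_) ξ h1 h H.two_le
    fun v => ?_
  · simp [toZ, H.symmA u v]
  · simp [toZ]
  · simpa [toZ] using h2 v

theorem Adm.chebB (H : Adm A B h h') :
    (∀ n ≤ h', ∀ u v, 0 ≤ cheb (toZ B) n u v) ∧ cheb (toZ B) h' = 0 := by
  obtain ⟨ξ, h1, h2⟩ := H.perronB
  refine cheb_nonneg_and_eq_zero (toZ B) (fun u v => ?_) (fun u v => ?_) ξ h1 h' H.two_le'
    fun v => ?_
  · simp [toZ, H.symmB u v]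
  · simp [toZ]
  · simpa [toZ] using h2 v

/-- The action of an integer matrix on vectors with entries in an additive group. -/
def act {Γ : Type*} [AddCommGroup Γ] (M : Matrix V V ℤ) (x : V → Γ) (v : V) : Γ :=
  ∑ u, M v u • x u

theorem act_mul {Γ : Type*} [AddCommGroup Γ] (M N : Matrix V V ℤ) (x : V → Γ) (v : V) :
    act (M * N) x v = act M (act N x) v := by
  simp only [act, Matrix.mul_apply, sum_smul, smul_sum, mul_smul]
  exact sum_comm

theorem act_sub {Γ : Type*} [AddCommGroup Γ] (M N : Matrix V V ℤ) (x : V → Γ) (v : V) :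
    act (M - N) x v = act M x v - act N x v := by
  simp [act, sub_smul]

theorem act_vsub {Γ : Type*} [AddCommGroup Γ] (M : Matrix V V ℤ) (x y : V → Γ) (v : V) :
    act M (fun v => x v - y v) v = act M x v - act M y v := by
  simp [act, smul_sub]

theorem act_one {Γ : Type*} [AddCommGroup Γ] (x : V → Γ) (v : V) :
    act (1 : Matrix V V ℤ) x v = x v := by
  simp [act, Matrix.one_apply, ite_smul]

theorem act_zero {Γ : Type*} [AddCommGroup Γ] (x : V → Γ) (v : V) :
    act (0 : Matrix V V ℤ) x v = 0 := by
  simp [act]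

section ordered
variable {Γ : Type*} [AddCommGroup Γ] [LinearOrder Γ] [IsOrderedAddMonoid Γ]

theorem act_nonneg (M : Matrix V V ℤ) (v : V) (hM : ∀ u, 0 ≤ M v u) (x : V → Γ)
    (hx : ∀ u, 0 < x u) : 0 ≤ act M x v :=
  sum_nonneg fun u _ => zsmul_nonneg (hx u).le (hM u)

theorem act_pos (M : Matrix V V ℤ) (v : V) (hM : ∀ u, 0 ≤ M v u) (hne : ∃ u, M v u ≠ 0)
    (x : V → Γ) (hx : ∀ u, 0 < x u) : 0 < act M x v := by
  obtain ⟨u, hu⟩ := hne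
  exact sum_pos' (fun u _ => zsmul_nonneg (hx u).le (hM u))
    ⟨u, mem_univ _, zsmul_pos (hx u) (lt_of_le_of_ne (hM u) hu.symm)⟩

/-- Two consecutive Chebyshev matrices have no common zero row. -/
theorem cheb_row (X : Matrix V V ℤ) (n : ℕ) (v : V) :
    (∃ u, cheb X (n + 1) v u ≠ 0) ∨ ∃ u, cheb X n v u ≠ 0 := by
  by_contra! hcon
  have h := congrFun (congrFun (cheb_cassini X n) v) v
  have hc : Commute (cheb X (n + 2)) (cheb X n) :=
    commute_cheb (commute_cheb (Commute.refl X) n).symm (n + 2) |>.symm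
  rw [hc.eq, Matrix.sub_apply, Matrix.mul_apply, Matrix.mul_apply] at h
  simp [hcon.1, hcon.2] at h

/-- While a solution of the tropical `Y`-system is positive it solves a linear wave equation;
finite type of `X` forces the positive phase to last exactly `h` steps, after which all components
become negative simultaneously. -/
theorem phase (X : Matrix V V ℤ) {h : ℕ} (hh : 1 ≤ h) (hX : ∀ n ≤ h, ∀ u v, 0 ≤ cheb X n u v)
    (hX0 : cheb X h = 0) (c : ℕ → V → Γ) (h0 : ∀ v, c 0 v < 0) (h1 : ∀ v, 0 < c 1 v)
    (hstep : ∀ t, (∀ v, 0 < c (t + 1) v) → ∀ v, c (t + 2) v + c t v = act X (c (t + 1)) v) :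
    (∀ r, 0 < r → r ≤ h → ∀ v, 0 < c r v) ∧ ∀ v, c (h + 1) v < 0 := by
  have key : ∀ n ≤ h,
      ((∀ v, c (n + 1) v = act (cheb X (n + 1)) (c 1) v - act (cheb X n) (c 0) v) ∧
      ∀ v, c n v = act (cheb X n) (c 1) v - (act (X * cheb X n) (c 0) v -
        act (cheb X (n + 1)) (c 0) v)) ∧ (0 < n → ∀ v, 0 < c n v) := by
    intro n
    induction n with
    | zero =>
      intro _
      refine ⟨⟨fun v => ?_, fun v => ?_⟩, fun h => absurd h (lt_irrefl _)⟩
      · simp [cheb_one, cheb_zero, act_one, act_zero]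
      · simp [cheb_one, cheb_zero, act_one, act_zero]
    | succ n ih =>
      intro hn
      obtain ⟨⟨ih1, ih2⟩, -⟩ := ih (by omega)
      have hpos : ∀ v, 0 < c (n + 1) v := by
        intro v
        have hneg : ∀ u, 0 < (fun u => -c 0 u) u := fun u => neg_pos.2 (h0 u)
        have e : c (n + 1) v = act (cheb X (n + 1)) (c 1) v +
            act (cheb X n) (fun u => -c 0 u) v := by
          rw [ih1]; simp [act, sub_eq_add_neg]
        rw [e]
        rcases cheb_row X n v with hr | hr
        · exact add_pos_of_pos_of_nonneg (act_pos _ v (hX _ hn v) hr _ h1)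
            (act_nonneg _ v (hX _ (by omega) v) _ hneg)
        · exact add_pos_of_nonneg_of_pos (act_nonneg _ v (hX _ hn v) _ h1)
            (act_pos _ v (hX _ (by omega) v) hr _ hneg)
      refine ⟨⟨fun v => ?_, fun v => ?_⟩, fun _ => hpos⟩
      · have hs := eq_sub_of_add_eq (hstep n hpos v)
        have e1 : c (n + 1) = fun v => act (cheb X (n + 1)) (c 1) v - act (cheb X n) (c 0) v :=
          funext ih1
        rw [hs, ih2 v, e1, act_vsub, ← act_mul, ← act_mul, cheb_add_two, act_sub]
        abel
      · rw [ih1, cheb_add_two, act_sub]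
        abel
  have hlast := (key h le_rfl).1.1
  refine ⟨fun r hr hrh => (key r hrh).2 hr, fun v => ?_⟩
  obtain ⟨k, rfl⟩ : ∃ k, h = k + 1 := ⟨h - 1, by omega⟩
  rw [hlast, cheb_add_two, hX0, mul_zero, zero_sub, act_zero, sub_zero]
  have : act (-cheb X k) (c 1) v = -act (cheb X k) (c 1) v := by simp [act]
  rw [this, neg_lt_zero]
  refine act_pos _ v (hX _ (by omega) v) ?_ _ h1
  rcases cheb_row X k v with ⟨u, hu⟩ | hr
  · rw [hX0] at hu; exact absurd rfl hu
  · exact hr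

end ordered
end
end ADEPeriodicity

/-! ### Tropical phases of solutions -/

namespace ADEPeriodicity
open Finset
set_option linter.unusedSectionVars false

section
variable {V : Type} [Fintype V] [DecidableEq V] {A B : V → V → ℕ} {h h' : ℕ}
  {Γ : Type*} [AddCommGroup Γ] [LinearOrder Γ] [IsOrderedAddMonoid Γ]

/-- The valuation of `1 + y`, provided that of `y` is nonzero. -/
theorem NSol.u_l (σ : NSol A B) (ν : OrdVal σ.F Γ) {t : ℕ} {v : V} (hv : ν.u (σ.y t v) ≠ 0) :
    ν.u (σ.l t v) = min 0 (ν.u (σ.y t v)) := by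
  have := (ν.one_add (σ.y t v).ne_zero hv).2
  rw [← σ.hl] at this
  exact this

theorem NSol.u_step (σ : NSol A B) (ν : OrdVal σ.F Γ) (t : ℕ) (v : V) :
    ν.u (σ.y (t + 2) v) + ν.u (σ.y t v) = ∑ u, B v u • ν.u (σ.l (t + 1) u) -
      ∑ u, A v u • (ν.u (σ.l (t + 1) u) - ν.u (σ.y (t + 1) u)) := by
  have := congrArg ν.u (σ.step t v)
  simpa only [ν.u_mul, ν.u_div, ν.u_prod, ν.u_pow] using this

theorem act_toZ (A : V → V → ℕ) (x : V → Γ) (v : V) : act (toZ A) x v = ∑ u, A v u • x u := by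
  simp [act, toZ]

/-- When all `y (t + 1) v` have positive valuation, the tropical `Y`-system is the linear
`A`-wave equation. -/
theorem NSol.u_step_pos (σ : NSol A B) (ν : OrdVal σ.F Γ) (t : ℕ)
    (hp : ∀ v, 0 < ν.u (σ.y (t + 1) v)) (v : V) :
    ν.u (σ.y (t + 2) v) + ν.u (σ.y t v) = act (toZ A) (fun u => ν.u (σ.y (t + 1) u)) v := by
  have : ∀ u, ν.u (σ.l (t + 1) u) = 0 := fun u => by
    rw [σ.u_l ν (hp u).ne', min_eq_left (hp u).le]
  rw [σ.u_step, act_toZ]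
  simp [this]

/-- When all `y (t + 1) v` have negative valuation, the tropical `Y`-system is the linear
`B`-wave equation. -/
theorem NSol.u_step_neg (σ : NSol A B) (ν : OrdVal σ.F Γ) (t : ℕ)
    (hp : ∀ v, ν.u (σ.y (t + 1) v) < 0) (v : V) :
    ν.u (σ.y (t + 2) v) + ν.u (σ.y t v) = act (toZ B) (fun u => ν.u (σ.y (t + 1) u)) v := by
  have : ∀ u, ν.u (σ.l (t + 1) u) = ν.u (σ.y (t + 1) u) := fun u => by
    rw [σ.u_l ν (hp u).ne, min_eq_right (hp u).le]
  rw [σ.u_step, act_toZ]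
  simp [this]

/-- A sign change from negative to positive is followed by `h` steps with all valuations
positive and then by a step with all valuations negative. -/
theorem phase_up (H : Adm A B h h') (σ : NSol A B) (ν : OrdVal σ.F Γ) (s : ℕ)
    (h0 : ∀ v, ν.u (σ.y s v) < 0) (h1 : ∀ v, 0 < ν.u (σ.y (s + 1) v)) :
    (∀ t, s < t → t ≤ s + h → ∀ v, 0 < ν.u (σ.y t v)) ∧
      ∀ v, ν.u (σ.y (s + h + 1) v) < 0 := by
  have := phase (toZ A) (le_trans one_le_two H.two_le) H.chebA.1 H.chebA.2
    (fun t v => ν.u (σ.y (s + t) v)) h0 h1 (fun t ht v => σ.u_step_pos ν (s + t) ht v)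
  refine ⟨fun t h1 h2 => ?_, this.2⟩
  obtain ⟨r, rfl⟩ := Nat.exists_eq_add_of_le h1.le
  exact this.1 r (by omega) (by omega)

/-- A sign change from positive to negative is followed by `h'` steps with all valuations
negative and then by a step with all valuations positive. -/
theorem phase_down (H : Adm A B h h') (σ : NSol A B) (ν : OrdVal σ.F Γ) (s : ℕ)
    (h0 : ∀ v, 0 < ν.u (σ.y s v)) (h1 : ∀ v, ν.u (σ.y (s + 1) v) < 0) :
    (∀ t, s < t → t ≤ s + h' → ∀ v, ν.u (σ.y t v) < 0) ∧
      ∀ v, 0 < ν.u (σ.y (s + h' + 1) v) := by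
  have := phase (toZ B) (le_trans one_le_two H.two_le') H.chebB.1 H.chebB.2
    (fun t v => -ν.u (σ.y (s + t) v)) (fun v => neg_neg_of_pos (h0 v))
    (fun v => neg_pos_of_neg (h1 v)) (fun t ht v => by
      have := σ.u_step_neg ν (s + t) (fun v => neg_pos.1 (ht v)) v
      rw [← neg_add, ← add_assoc, this]
      simp [act]; rfl)
  refine ⟨fun t h1 h2 v => ?_, fun v => neg_neg_iff_pos.1 (this.2 v)⟩
  obtain ⟨r, rfl⟩ := Nat.exists_eq_add_of_le h1.le
  exact neg_pos.1 (this.1 r (by omega) (by omega) v)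

/-- The units congruent to `1` modulo the maximal ideal of the valuation. -/
abbrev U0 {F : Type*} [Field F] (ν : OrdVal F Γ) : Subgroup Fˣ :=
  ν.U (Set.Ioi 0) (isUpperSet_Ioi 0) (fun _ h => Set.mem_Ioi.1 h)

theorem mem_Ioi_l (σ : NSol A B) (ν : OrdVal σ.F Γ) {t : ℕ} {v : V} (hv : 0 < ν.u (σ.y t v)) :
    σ.l t v ∈ U0 ν := by
  rw [OrdVal.mem_U, σ.hl, add_sub_cancel_left]
  exact Or.inr hv

theorem mem_Ioi_ly (σ : NSol A B) (ν : OrdVal σ.F Γ) {t : ℕ} {v : V} (hv : ν.u (σ.y t v) < 0) :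
    σ.l t v / σ.y t v ∈ U0 ν := by
  rw [OrdVal.mem_U]
  have e : ((σ.l t v / σ.y t v : σ.Fˣ) : σ.F) - 1 = ((σ.y t v)⁻¹ : σ.Fˣ) := by
    have := (σ.y t v).ne_zero
    push_cast
    rw [σ.hl]
    field_simp
    ring
  rw [e]
  right
  change 0 < ν.u (σ.y t v)⁻¹
  rw [ν.u_inv]; exact neg_pos.2 hv

/-- At a valuation for which all initial variables are positive (recall that `y 0` enters the initial
data inverted), positive phases of length `h` alternate with negative phases of length `h'`.  The
conclusion consists of the hypotheses under which `exists_E` yields a defect congruent to `1` modulo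
the maximal ideal. -/
theorem positive_chart (H : Adm A B h h') (σ : NSol A B) (ν : OrdVal σ.F Γ)
    (h0 : ∀ v, ν.u (σ.y 0 v) < 0) (h1 : ∀ v, 0 < ν.u (σ.y 1 v)) :
    (∀ t u, (0 < t ∧ t ≤ h) ∨ (h + h' < t ∧ t ≤ h + h' + h) →
      σ.l t u ∈ U0 ν) ∧
    (∀ t u, (h < t ∧ t ≤ h + h') ∨ (h + h' + h < t ∧ t ≤ 2 * (h + h')) →
      σ.l t u / σ.y t u ∈ U0 ν) := by
  have a := H.two_le
  have b := H.two_le'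
  have w1 := phase_up H σ ν 0 h0 h1
  rw [zero_add] at w1
  have w2 := phase_down H σ ν h (w1.1 h (by omega) (by omega)) w1.2
  have w3 := phase_up H σ ν (h + h') (w2.1 _ (by omega) le_rfl) w2.2
  have w4 := phase_down H σ ν (h + h' + h) (w3.1 _ (by omega) le_rfl) w3.2
  constructor
  · rintro t u (⟨h1, h2⟩ | ⟨h1, h2⟩)
    · exact mem_Ioi_l σ ν (w1.1 t h1 h2 u)
    · exact mem_Ioi_l σ ν (w3.1 t h1 h2 u)
  · rintro t u (⟨h1, h2⟩ | ⟨h1, h2⟩)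
    · exact mem_Ioi_ly σ ν (w2.1 t h1 h2 u)
    · exact mem_Ioi_ly σ ν (w4.1 t h1 (by omega) u)

end
end ADEPeriodicity

/-! ### Existence of solutions -/

namespace ADEPeriodicity
open Finset
set_option linter.unusedSectionVars false

/-- In the field of rational functions over an ordered domain, the ratios of polynomials with
positive value at `(1, …, 1)` form a set of nonzero elements closed under the subtraction-free
operations. -/
theorem exists_pos (I k : Type) [CommRing k] [LinearOrder k] [IsStrictOrderedRing k] :
    ∃ P : FractionRing (MvPolynomial I k) → Prop,
      P 1 ∧ (∀ x y, P x → P y → P (x + y)) ∧ (∀ x y, P x → P y → P (x * y)) ∧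
      (∀ x, P x → P x⁻¹) ∧ (∀ x, P x → x ≠ 0) ∧
      ∀ i, P (algebraMap (MvPolynomial I k) _ (MvPolynomial.X i)) := by
  have hne : ∀ p : MvPolynomial I k, 0 < MvPolynomial.eval (fun _ => 1) p →
      algebraMap (MvPolynomial I k) (FractionRing (MvPolynomial I k)) p ≠ 0 := by
    intro p hp h
    have : p = 0 := by simpa using h
    simp [this] at hp
  refine ⟨fun x => ∃ p q : MvPolynomial I k, 0 < MvPolynomial.eval (fun _ => 1) p ∧
    0 < MvPolynomial.eval (fun _ => 1) q ∧ x = algebraMap _ _ p / algebraMap _ _ q,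
    ⟨1, 1, by simp, by simp, by simp⟩, ?_, ?_, ?_, ?_, fun i => ⟨MvPolynomial.X i, 1, by simp,
      by simp, by simp⟩⟩
  · rintro _ _ ⟨p, q, hp, hq, rfl⟩ ⟨p', q', hp', hq', rfl⟩
    refine ⟨p * q' + q * p', q * q', ?_, ?_, ?_⟩
    · simp only [map_add, map_mul]; positivity
    · simp only [map_mul]; positivity
    · simp only [map_add, map_mul]
      exact div_add_div _ _ (hne _ hq) (hne _ hq')
  · rintro _ _ ⟨p, q, hp, hq, rfl⟩ ⟨p', q', hp', hq', rfl⟩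
    refine ⟨p * p', q * q', ?_, ?_, ?_⟩
    · simp only [map_mul]; positivity
    · simp only [map_mul]; positivity
    · simp only [map_mul]
      exact div_mul_div_comm _ _ _ _
  · rintro _ ⟨p, q, hp, hq, rfl⟩
    exact ⟨q, p, hq, hp, inv_div _ _⟩
  · rintro _ ⟨p, q, hp, hq, rfl⟩
    exact div_ne_zero (hne _ hp) (hne _ hq)

/-- Initial data in a subtraction-free set of nonzero elements extend to a nondegenerate
solution. -/
theorem exists_sol_of_pos {V : Type} [Fintype V] (A B : V → V → ℕ) {F : Type} [Field F]
    (P : F → Prop) (h1 : P 1) (hadd : ∀ x y, P x → P y → P (x + y))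
    (hmul : ∀ x y, P x → P y → P (x * y)) (hinv : ∀ x, P x → P x⁻¹) (h0 : ∀ x, P x → x ≠ 0)
    (a b : V → F) (ha : ∀ v, P (a v)) (hb : ∀ v, P (b v)) :
    ∃ y l : ℕ → V → Fˣ, (∀ t v, (l t v : F) = 1 + y t v) ∧
      (∀ t v, y (t + 2) v * y t v =
        (∏ u, l (t + 1) u ^ B v u) / ∏ u, (l (t + 1) u / y (t + 1) u) ^ A v u) ∧
      (∀ v, (y 0 v : F) = a v) ∧ ∀ v, (y 1 v : F) = b v := by
  have hprod : ∀ (f : V → F) (e : V → ℕ), (∀ u, P (f u)) → P (∏ u, f u ^ e u) := by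
    intro f e hf
    refine Finset.prod_induction _ P hmul h1 fun u _ => ?_
    induction e u with
    | zero => simpa using h1
    | succ n ih => rw [pow_succ]; exact hmul _ _ ih (hf u)
  have hstep : ∀ f g : V → {x // P x}, ∃ k : V → {x // P x}, ∀ v, (k v : F) * f v =
      (∏ u, (1 + (g u : F)) ^ B v u) / ∏ u, ((1 + (g u : F)) / g u) ^ A v u := by
    intro f g
    refine ⟨fun v => ⟨(∏ u, (1 + (g u : F)) ^ B v u) *
      (∏ u, ((1 + (g u : F)) * (g u : F)⁻¹) ^ A v u)⁻¹ * (f v : F)⁻¹,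
      hmul _ _ (hmul _ _ (hprod _ _ fun u => hadd _ _ h1 (g u).2)
        (hinv _ (hprod _ _ fun u => hmul _ _ (hadd _ _ h1 (g u).2) (hinv _ (g u).2))))
        (hinv _ (f v).2)⟩, fun v => ?_⟩
    rw [inv_mul_cancel_right₀ (h0 _ (f v).2)]
    simp only [div_eq_mul_inv]
  choose nxt hnxt using hstep
  let pr : ℕ → (V → {x // P x}) × (V → {x // P x}) := fun n =>
    Nat.rec (fun v => ⟨a v, ha v⟩, fun v => ⟨b v, hb v⟩) (fun _ p => (p.2, nxt p.1 p.2)) n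
  have hy2 : ∀ t v, ((pr (t + 2)).1 v : F) * (pr t).1 v =
      (∏ u, (1 + ((pr (t + 1)).1 u : F)) ^ B v u) /
        ∏ u, ((1 + ((pr (t + 1)).1 u : F)) / (pr (t + 1)).1 u) ^ A v u :=
    fun t v => hnxt (pr t).1 (pr t).2 v
  refine ⟨fun t v => Units.mk0 _ (h0 _ ((pr t).1 v).2),
    fun t v => Units.mk0 (1 + ((pr t).1 v : F)) (h0 _ (hadd _ _ h1 ((pr t).1 v).2)),
    fun t v => rfl, fun t v => Units.ext ?_, fun v => rfl, fun v => rfl⟩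
  have := hy2 t v
  simpa using this

/-- Initial data that are algebraically independent over the integers extend to a nondegenerate
solution. -/
theorem exists_sol {V : Type} [Fintype V] (A B : V → V → ℕ) {F : Type} [Field F]
    (z : V ⊕ V → Fˣ) (hz : Function.Injective
      (MvPolynomial.aeval (R := ℤ) (fun i => (z i : F)) : MvPolynomial (V ⊕ V) ℤ → F)) :
    ∃ y l : ℕ → V → Fˣ, (∀ t v, (l t v : F) = 1 + y t v) ∧
      (∀ t v, y (t + 2) v * y t v =
        (∏ u, l (t + 1) u ^ B v u) / ∏ u, (l (t + 1) u / y (t + 1) u) ^ A v u) ∧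
      (∀ v, y 0 v = (z (Sum.inl v))⁻¹) ∧ ∀ v, y 1 v = z (Sum.inr v) := by
  obtain ⟨P, h1, hadd, hmul, hinv, h0, hX⟩ := exists_pos (V ⊕ V) ℤ
  obtain ⟨y, l, hl, hst, hy0, hy1⟩ := exists_sol_of_pos A B P h1 hadd hmul hinv h0
    (fun v => (algebraMap (MvPolynomial (V ⊕ V) ℤ) _ (MvPolynomial.X (Sum.inl v)))⁻¹)
    (fun v => algebraMap (MvPolynomial (V ⊕ V) ℤ) _ (MvPolynomial.X (Sum.inr v))) (fun v => hinv _ (hX _))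
    (fun v => hX _)
  let f : FractionRing (MvPolynomial (V ⊕ V) ℤ) →+* F := IsFractionRing.lift
    (g := ((MvPolynomial.aeval (R := ℤ) (fun i => (z i : F)) :
      MvPolynomial (V ⊕ V) ℤ →ₐ[ℤ] F) : MvPolynomial (V ⊕ V) ℤ →+* F)) hz
  have hf : ∀ i, f (algebraMap (MvPolynomial (V ⊕ V) ℤ) _ (MvPolynomial.X i)) = z i := fun i => by
    refine (IsFractionRing.lift_algebraMap hz _).trans ?_
    simp
  refine ⟨fun t v => Units.map (f : _ →* F) (y t v), fun t v => Units.map (f : _ →* F) (l t v),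
    fun t v => ?_, fun t v => ?_, fun v => Units.ext ?_, fun v => Units.ext ?_⟩
  · simp [hl]
  · rw [← map_mul, hst]
    simp only [map_div, map_prod, map_pow]
  · simp [hy0, hf]
  · simp [hy1, hf]

/-- Elements with independent valuations are algebraically independent. -/
theorem OrdVal.aeval_injective {F Γ : Type*} [Field F] [AddCommGroup Γ] [LinearOrder Γ]
    [IsOrderedAddMonoid Γ] (ν : OrdVal F Γ) {I : Type} [Fintype I] (z : I → Fˣ)
    (hz : Indep fun i => ν.u (z i)) : Function.Injective
      (MvPolynomial.aeval (R := ℤ) (fun i => (z i : F)) : MvPolynomial I ℤ → F) := by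
  refine (injective_iff_map_eq_zero _).2 fun p hp => ?_
  by_contra hne
  have hs : p.support.Nonempty := by
    rwa [nonempty_iff_ne_empty, Ne, MvPolynomial.support_eq_empty]
  rw [MvPolynomial.aeval_def, MvPolynomial.eval₂_eq'] at hp
  have hu : ∀ d : I →₀ ℕ, ν.u (∏ i, z i ^ d i) = dot (fun i => ν.u (z i)) (fun i => (d i : ℤ)) := by
    intro d; simp [u_prod, u_pow, dot]
  have hv : ∀ d ∈ p.support, (algebraMap ℤ F) (p.coeff d) * ∏ i, (z i : F) ^ d i ≠ 0 ∧
      ν.v ((algebraMap ℤ F) (p.coeff d) * ∏ i, (z i : F) ^ d i) =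
        dot (fun i => ν.u (z i)) (fun i => (d i : ℤ)) := by
    intro d hd
    have hc := ν.v_int (p.coeff d) (MvPolynomial.mem_support_iff.1 hd)
    have e : ∏ i, (z i : F) ^ d i = ((∏ i, z i ^ d i : Fˣ) : F) := by push_cast; rfl
    rw [e, eq_intCast]
    refine ⟨mul_ne_zero hc.1 (Units.ne_zero _), ?_⟩
    rw [ν.v_mul _ _ hc.1 (Units.ne_zero _), ← hu]
    rw [hc.2, zero_add]
    rfl
  obtain ⟨d, hd, hmin⟩ := exists_min_image p.support
    (fun d => dot (fun i => ν.u (z i)) (fun i => (d i : ℤ))) hs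
  refine (ν.v_sum p.support _ d hd (hv d hd).1 fun j hj hjd => ?_).1 hp
  rw [(hv d hd).2, (hv j hj).2]
  refine lt_of_le_of_ne (hmin j hj) fun e => hjd ?_
  have := hz.inj e
  ext i
  have := congrFun this i
  exact_mod_cast this.symm

/-- Algebraic independence is preserved when one element is translated by `-1`. -/
theorem aeval_injective_translate {F : Type*} [Field F] {I : Type} [DecidableEq I] (x : I → F)
    (i₀ : I)
    (hx : Function.Injective (MvPolynomial.aeval (R := ℤ) x : MvPolynomial I ℤ → F)) :
    Function.Injective (MvPolynomial.aeval (R := ℤ)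
      (Function.update x i₀ (-1 + x i₀)) : MvPolynomial I ℤ → F) := by
  let T : ℤ → MvPolynomial I ℤ →ₐ[ℤ] MvPolynomial I ℤ := fun c => MvPolynomial.aeval fun i =>
    MvPolynomial.X i + MvPolynomial.C (if i = i₀ then c else 0)
  have hT : (T 1).comp (T (-1)) = AlgHom.id ℤ _ := by
    apply MvPolynomial.algHom_ext
    intro i
    by_cases h : i = i₀ <;> simp [T, h]
  have hinj : Function.Injective (T (-1)) := by
    apply Function.LeftInverse.injective (g := T 1)
    intro p
    exact congrArg (fun f => f p) hT
  have e : MvPolynomial.aeval (R := ℤ) (Function.update x i₀ (-1 + x i₀)) =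
      (MvPolynomial.aeval (R := ℤ) x).comp (T (-1)) := by
    apply MvPolynomial.algHom_ext
    intro i
    by_cases h : i = i₀
    · subst h; simp [T]; ring
    · simp [T, h]
  rw [e]
  exact hx.comp hinj

end ADEPeriodicity

/-! ### Division of Laurent polynomials by 1 + X -/

namespace ADEPeriodicity
open Finset
set_option linter.unusedSectionVars false

section
variable {I : Type} [Fintype I] [DecidableEq I]

/-- The coordinate Laurent monomial. -/
noncomputable def coord (i : I) : Laurent I := AddMonoidAlgebra.single (Pi.single i 1) 1

theorem ev_coord {R : Type*} [CommRing R] (z : I → Rˣ) (i : I) : ev z (coord i) = z i := by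
  rw [coord, ev_single]
  simp [mono, Pi.single_apply]

theorem ev_single_one {R : Type*} [CommRing R] (z : I → Rˣ) (m : I → ℤ) :
    ev z (AddMonoidAlgebra.single m 1) = (mono z (Multiplicative.ofAdd m) : Rˣ) := by
  rw [ev_single]; simp

/-- Division of a Laurent polynomial by `1 + X i`, with a remainder free of `X i`. -/
theorem exists_division (i : I) (Ψ : Laurent I) : ∃ Θ Ψ' : Laurent I,
    Ψ = (1 + coord i) * Θ + Ψ' ∧ ∀ m ∈ Ψ'.coeff.support, m i = 0 := by
  have hZ : ∀ n : ℕ, ∃ Θ : Laurent I, coord i ^ n = (1 + coord i) * Θ + (-1) ^ n := by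
    intro n
    obtain ⟨Θ, hΘ⟩ := sub_dvd_pow_sub_pow (coord i) (-1) n
    exact ⟨Θ, by linear_combination hΘ⟩
  set W : Laurent I := AddMonoidAlgebra.single (Pi.single i (-1)) 1 with hW
  have hZW : coord i * W = 1 := by
    rw [coord, hW, AddMonoidAlgebra.single_mul_single, ← Pi.single_add]
    simp [AddMonoidAlgebra.one_def]
  have hWn : ∀ n : ℕ, ∃ Θ : Laurent I, W ^ n = (1 + coord i) * Θ + (-1) ^ n := by
    intro n
    obtain ⟨Θ, hΘ⟩ := sub_dvd_pow_sub_pow W (-1) n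
    exact ⟨W * Θ, by linear_combination hΘ - Θ * hZW⟩
  induction Ψ using AddMonoidAlgebra.induction_linear with
  | zero => exact ⟨0, 0, by simp, by simp⟩
  | add f g hf hg =>
    obtain ⟨Θ, Ψ, h1, h2⟩ := hf
    obtain ⟨Θ', Ψ', h1', h2'⟩ := hg
    refine ⟨Θ + Θ', Ψ + Ψ', by rw [h1, h1']; ring, fun m hm => ?_⟩
    rcases mem_union.1 (Finsupp.support_add hm) with h | h
    · exact h2 m h
    · exact h2' m h
  | single m c =>
    have hsupp : ∀ d : ℤ, ∀ m' ∈ (AddMonoidAlgebra.single (Function.update m i 0) d :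
        Laurent I).coeff.support, m' i = 0 := by
      intro d m' hm'
      have := Finsupp.support_single_subset hm'
      rw [mem_singleton.1 this]; simp
    have hpow : ∀ (a : ℤ) (n : ℕ), (AddMonoidAlgebra.single (Pi.single i a : I → ℤ) (1 : ℤ)) ^ n =
        AddMonoidAlgebra.single (Pi.single i (n * a)) 1 := by
      intro a n
      rw [AddMonoidAlgebra.single_pow, one_pow]
      congr 1
      rw [← nsmul_eq_mul, ← Pi.single_smul]
    have hm : ∀ a : ℤ, a = m i → AddMonoidAlgebra.single m c =
        AddMonoidAlgebra.single (Function.update m i 0) c *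
          AddMonoidAlgebra.single (Pi.single i a : I → ℤ) (1 : ℤ) := by
      rintro a rfl
      rw [AddMonoidAlgebra.single_mul_single, mul_one]
      congr 1
      funext j
      by_cases hj : j = i
      · subst hj; simp
      · simp [hj]
    have hneg : ∀ n : ℕ, AddMonoidAlgebra.single (Function.update m i 0) c * (-1) ^ n =
        (AddMonoidAlgebra.single (Function.update m i 0) (c * (-1) ^ n) : Laurent I) := by
      intro n
      induction n with
      | zero => simp
      | succ n ih =>
        rw [pow_succ, ← mul_assoc, ih, pow_succ, ← mul_assoc, mul_neg_one, mul_neg_one,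
          AddMonoidAlgebra.single_neg]
    obtain ⟨n, hn | hn⟩ := (m i).eq_nat_or_neg
    · obtain ⟨Θ, hΘ⟩ := hZ n
      refine ⟨AddMonoidAlgebra.single (Function.update m i 0) c * Θ, _, ?_, hsupp (c * (-1) ^ n)⟩
      rw [← hneg, hm (n * 1) (by simpa using hn.symm), ← hpow]
      change _ * coord i ^ n = _
      rw [hΘ]; ring
    · obtain ⟨Θ, hΘ⟩ := hWn n
      refine ⟨AddMonoidAlgebra.single (Function.update m i 0) c * Θ, _, ?_, hsupp (c * (-1) ^ n)⟩
      rw [← hneg, hm (n * (-1)) (by simpa using hn.symm), ← hpow]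
      change _ * W ^ n = _
      rw [hΘ]; ring

end
end ADEPeriodicity

/-! ### Laurent polynomials up to factors 1 + y -/

namespace ADEPeriodicity
open Finset
set_option linter.unusedSectionVars false

section
variable {V : Type} [Fintype V] [DecidableEq V] {A B : V → V → ℕ}

/-- A function of solutions given by a Laurent polynomial in the initial data. -/
def Laur (g : UG A B) : Prop :=
  ∃ Φ : Laurent (V ⊕ V), ∀ σ, (g σ : σ.F) = ev σ.z Φ

/-- A function of solutions given by a Laurent polynomial in the initial data divided by a
monomial in the `1 + y 1 v`. -/
def LocLaur (f : ∀ σ : NSol A B, σ.F) : Prop :=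
  ∃ (k : V → ℕ) (Φ : Laurent (V ⊕ V)), ∀ σ : NSol A B,
    f σ * ∏ v, (σ.l 1 v : σ.F) ^ k v = ev σ.z Φ

theorem ev_l (σ : NSol A B) (v : V) : ev σ.z (1 + coord (Sum.inr v)) = σ.l 1 v := by
  rw [map_add, map_one, ev_coord, σ.hl]; rfl

theorem ev_l_prod (σ : NSol A B) (k : V → ℕ) :
    ev σ.z (∏ v, (1 + coord (Sum.inr v)) ^ k v) = ∏ v, (σ.l 1 v : σ.F) ^ k v := by
  simp only [map_prod, map_pow, ev_l]

theorem LocLaur.zero : LocLaur (fun σ : NSol A B => (0 : σ.F)) :=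
  ⟨0, 0, fun σ => by simp⟩

theorem LocLaur.add {f g : ∀ σ : NSol A B, σ.F} (hf : LocLaur f) (hg : LocLaur g) :
    LocLaur (fun σ => f σ + g σ) := by
  obtain ⟨k, Φ, h⟩ := hf
  obtain ⟨k', Φ', h'⟩ := hg
  refine ⟨k + k', Φ * ∏ v, (1 + coord (Sum.inr v)) ^ k' v +
    Φ' * ∏ v, (1 + coord (Sum.inr v)) ^ k v, fun σ => ?_⟩
  rw [map_add, map_mul, map_mul, ev_l_prod, ev_l_prod, ← h, ← h']
  simp only [Pi.add_apply, pow_add, prod_mul_distrib]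
  ring

theorem LocLaur.int_mul {f : ∀ σ : NSol A B, σ.F} (c : ℤ) (hf : LocLaur f) :
    LocLaur (fun σ => c * f σ) := by
  obtain ⟨k, Φ, h⟩ := hf
  refine ⟨k, c * Φ, fun σ => ?_⟩
  rw [map_mul, map_intCast, mul_assoc, h]

theorem LocLaur.sum {ι : Type*} (s : Finset ι) (f : ι → ∀ σ : NSol A B, σ.F)
    (hf : ∀ i ∈ s, LocLaur (f i)) : LocLaur (fun σ => ∑ i ∈ s, f i σ) := by
  classical
  induction s using Finset.induction_on with
  | empty => simpa using LocLaur.zero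
  | insert i s hi ih =>
    simp only [sum_insert hi]
    exact (hf i (mem_insert_self i s)).add (ih fun j hj => hf j (mem_insert_of_mem hj))

/-- The group of monomials in the initial data and the `1 + y 1 v`. -/
def monoGroup (A B : V → V → ℕ) : Subgroup (UG A B) where
  carrier := {g | ∃ (m : V ⊕ V → ℤ) (e : V → ℤ), ∀ σ,
    g σ = mono σ.z (Multiplicative.ofAdd m) * ∏ v, σ.l 1 v ^ e v}
  one_mem' := ⟨0, 0, fun σ => by simp⟩
  mul_mem' := by
    rintro a b ⟨m, e, h⟩ ⟨m', e', h'⟩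
    refine ⟨m + m', e + e', fun σ => ?_⟩
    simp only [Pi.mul_apply, h, h', ofAdd_add, map_mul, Pi.add_apply, zpow_add, prod_mul_distrib]
    exact mul_mul_mul_comm _ _ _ _
  inv_mem' := by
    rintro a ⟨m, e, h⟩
    refine ⟨-m, -e, fun σ => ?_⟩
    simp only [Pi.inv_apply, h, ofAdd_neg, map_inv, Pi.neg_apply, zpow_neg, prod_inv_distrib]
    exact mul_inv _ _

theorem locLaur_of_mem {g : UG A B} (hg : g ∈ monoGroup A B) :
    LocLaur (fun σ => (g σ : σ.F)) := by
  obtain ⟨m, e, h⟩ := hg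
  refine ⟨fun v => (-e v).toNat, AddMonoidAlgebra.single m 1 *
    ∏ v, (1 + coord (Sum.inr v)) ^ (e v).toNat, fun σ => ?_⟩
  rw [map_mul, ev_l_prod, ev_single_one]
  beta_reduce
  rw [h]
  have : ∀ v, σ.l 1 v ^ e v * σ.l 1 v ^ (-e v).toNat = σ.l 1 v ^ (e v).toNat := by
    intro v
    rw [← zpow_natCast, ← zpow_natCast, ← zpow_add]
    congr 1
    omega
  have e2 : (∏ v, σ.l 1 v ^ e v) * ∏ v, σ.l 1 v ^ (-e v).toNat = ∏ v, σ.l 1 v ^ (e v).toNat := by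
    rw [← prod_mul_distrib]
    exact prod_congr rfl fun v _ => this v
  have e3 := congrArg (Units.val) e2
  push_cast at e3
  push_cast
  rw [mul_assoc, e3]

theorem l_mem (v : V) : (lU 1 v : UG A B) ∈ monoGroup A B :=
  ⟨0, Pi.single v 1, fun σ => by simp [Pi.single_apply, lU]⟩

theorem z_mem (i : V ⊕ V) : (fun σ => σ.z i : UG A B) ∈ monoGroup A B :=
  ⟨Pi.single i 1, 0, fun σ => by
    have : mono σ.z (Multiplicative.ofAdd (Pi.single i 1)) = σ.z i := by
      simp only [mono, MonoidHom.coe_mk, OneHom.coe_mk, toAdd_ofAdd]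
      rw [prod_eq_single i (fun j _ hj => by simp [hj]) (by simp)]
      simp
    simp [this]⟩

theorem shift_z_mem (i : V ⊕ V) : (fun σ => σ.shift.z i : UG A B) ∈ monoGroup A B := by
  rcases i with v | v
  · exact (monoGroup A B).inv_mem (z_mem (Sum.inr v))
  · have : (fun σ => σ.shift.z (Sum.inr v) : UG A B) =
        (∏ u, lU 1 u ^ B v u) / (∏ u, (lU 1 u / fun σ => σ.z (Sum.inr u)) ^ A v u) *
          fun σ => σ.z (Sum.inl v) := by
      funext σ
      have := eq_mul_inv_of_mul_eq (σ.step 0 v)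
      simpa [NSol.z, lU] using this
    rw [this]
    exact mul_mem (div_mem (prod_mem fun u _ => pow_mem (l_mem u) _)
      (prod_mem fun u _ => pow_mem (div_mem (l_mem u) (z_mem _)) _)) (z_mem _)

theorem mono_shift_mem (m : V ⊕ V → ℤ) :
    (fun σ => mono σ.shift.z (Multiplicative.ofAdd m) : UG A B) ∈ monoGroup A B := by
  have : (fun σ => mono σ.shift.z (Multiplicative.ofAdd m) : UG A B) =
      ∏ i, (fun σ => σ.shift.z i : UG A B) ^ m i := by
    funext σ
    simp [mono]
  rw [this]
  exact prod_mem fun i _ => zpow_mem (shift_z_mem i) _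

/-- Laurent polynomials in the shifted initial data are Laurent up to the `1 + y 1 v`. -/
theorem Laur.locLaur_shift {g w : UG A B} (hg : Laur g) (hw : w ∈ monoGroup A B) :
    LocLaur (fun σ => ((sh g σ * w σ : σ.Fˣ) : σ.F)) := by
  obtain ⟨Φ, h⟩ := hg
  have := LocLaur.sum Φ.coeff.support (fun m σ => (Φ.coeff m : σ.F) *
      (((fun σ => mono σ.shift.z (Multiplicative.ofAdd m)) * w : UG A B) σ : σ.F))
    (fun m _ => (locLaur_of_mem (mul_mem (mono_shift_mem m) hw)).int_mul _)
  convert this using 2 with σ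
  rw [Units.val_mul]
  change (g σ.shift : σ.shift.F) * _ = _
  rw [h, ev_apply, sum_mul]
  refine sum_congr rfl fun m _ => ?_
  rw [mul_assoc]; rfl

theorem ratio_step {G : Type*} [CommGroup G] {e : V → ℕ} {a a' b b' c : G} {x y : V → G}
    (h1 : a' * a = (∏ u, x u ^ e u) * c) (h2 : b' * b = (∏ u, y u ^ e u) * c) :
    a' / b' = (∏ u, (x u / y u) ^ e u) / (a / b) := by
  simp only [div_pow, prod_div_distrib]
  rw [eq_mul_inv_of_mul_eq h1, eq_mul_inv_of_mul_eq h2]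
  generalize ∏ u, x u ^ e u = p
  generalize ∏ u, y u ^ e u = q
  rw [div_eq_div_iff_mul_eq_mul, div_eq_mul_inv p q, div_eq_mul_inv a b]
  group

/-- The `F`-polynomials at consecutive times differ by the time shift and a monomial in the
`1 + y 1 v`. -/
theorem FF_succ (n : ℕ) : ∃ w : V → UG A B, (∀ v, w v ∈ monoGroup A B) ∧
    ∀ v, FF (n + 1) v = sh (FF n v) * w v := by
  have key : ∀ n : ℕ, (∀ v, FF (n + 1) v / sh (FF n v) ∈ monoGroup A B) ∧
      ∀ v, FF (n + 2) v / sh (FF (n + 1) v) ∈ monoGroup A B := by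
    intro n
    induction n with
    | zero =>
      refine ⟨fun v => by simp [FF], fun v => ?_⟩
      simpa [FF] using l_mem v
    | succ n ih =>
      refine ⟨ih.2, fun v => ?_⟩
      have e1 := FF_step (A := A) (B := B) (n + 1) v
      have e2 := congrArg sh (FF_step (A := A) (B := B) n v)
      simp only [map_mul, map_prod, map_pow] at e2
      rw [ratio_step e1 e2]
      exact div_mem (prod_mem fun u _ => pow_mem (ih.2 u) _) (ih.1 v)
  exact ⟨fun v => FF (n + 1) v / sh (FF n v), (key n).1, fun v => (mul_div_cancel _ _).symm⟩

end
end ADEPeriodicity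

/-! ### The Laurent phenomenon -/

namespace ADEPeriodicity
open Finset
set_option linter.unusedSectionVars false

/-- Values with first coordinate at least `a`. -/
def Jf (a : ℝ) : Set Gm := {x | a ≤ gfst x}

theorem Jf_upper (a : ℝ) : IsUpperSet (Jf a) := fun _ _ hxy hx =>
  le_trans (show a ≤ _ from hx) (gfst_mono hxy)

theorem fst_dot_eq_zero {I : Type} [Fintype I] {γ : I → Gm} (hγ : ∀ i, gfst (γ i) = 0)
    (m : I → ℤ) : gfst (dot γ m) = 0 := by
  rw [map_dot]; simp [dot, hγ]

/-- Laurent polynomials have no pole in first coordinate at variables whose values have first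
coordinate zero. -/
theorem mem_ev_zero {F : Type*} [Field F] (ν : OrdVal F Gm) {I : Type} [Fintype I] (z : I → Fˣ)
    (hz : ∀ i, gfst (ν.u (z i)) = 0) (Θ : Laurent I) : ν.Mem (Jf 0) (ev z Θ) := by
  rw [ev_apply]
  refine OrdVal.Mem.sum ν (Jf_upper 0) _ _ fun m hm => Or.inr ?_
  have hc := ν.v_int (Θ.coeff m) (Finsupp.mem_support_iff.1 hm)
  rw [ν.v_mul _ _ hc.1 (Units.ne_zero _), hc.2, zero_add]
  change 0 ≤ gfst (ν.u _)
  rw [ν.u_mono, fst_dot_eq_zero hz]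

section
variable {V : Type} [Fintype V] [DecidableEq V] {A B : V → V → ℕ}

/-- A solution over a valued field at which exactly the divisor `1 + y 1 v₀ = 0` is seen by the
first coordinate of the valuation, and which has returned to general position at times `3, 4`. -/
structure Special (A B : V → V → ℕ) (v₀ : V) where
  σ : NSol A B
  ν : OrdVal σ.F Gm
  z_fst : ∀ i, gfst (ν.u (σ.z i)) = 0
  l_fst : ∀ w, gfst (ν.u (σ.l 1 w)) = if w = v₀ then 1 else 0
  wt : V ⊕ V → Gm
  wt_indep : Indep wt
  wt_fst : ∀ i, gfst (wt i) = 0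
  wt_eq : ∀ i, i ≠ Sum.inr v₀ → ν.u (σ.z i) = wt i
  y3 : ∀ v, gfst (ν.u (σ.y 3 v)) = 0
  y4 : ∀ v, gfst (ν.u (σ.y 4 v)) = 0
  FF3 : ∀ v, gfst (ν.u (FF 3 v σ)) = 0
  FF4 : ∀ v, gfst (ν.u (FF 4 v σ)) = 0

/-- A Laurent polynomial vanishing to positive order along `1 + y 1 v₀ = 0` is divisible by
`1 + X (inr v₀)`. -/
theorem Special.dvd {v₀ : V} (S : Special A B v₀) (Ψ : Laurent (V ⊕ V))
    (h : S.ν.Mem (Jf 1) (ev S.σ.z Ψ)) : ∃ Θ, Ψ = (1 + coord (Sum.inr v₀)) * Θ := by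
  obtain ⟨Θ, Ψ', hΨ, hs⟩ := exists_division (Sum.inr v₀) Ψ
  have h1 : S.ν.Mem (Jf 1) (ev S.σ.z Ψ') := by
    have : ev S.σ.z Ψ' = ev S.σ.z Ψ - ev S.σ.z Θ * S.σ.l 1 v₀ := by
      rw [hΨ, map_add, map_mul, ev_l]; ring
    rw [this]
    refine OrdVal.Mem.sub S.ν (Jf_upper 1) h
      (OrdVal.Mem.mul_unit S.ν (J := Jf 0) _ (fun a ha => ?_) (mem_ev_zero S.ν _ S.z_fst _))
    have ha' : 0 ≤ gfst a := ha
    have := S.l_fst v₀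
    simp only [if_true] at this
    simp only [Jf, Set.mem_ofPred_eq, map_add, this]
    linarith
  rw [OrdVal.mem_ev S.ν _ S.wt_indep _ (fun m hm => ?_) (Jf_upper 1)] at h1
  · have : Ψ'.coeff.support = ∅ := by
      refine eq_empty_of_forall_notMem fun m hm => ?_
      have := h1 m hm
      simp only [Jf, Set.mem_ofPred_eq, fst_dot_eq_zero S.wt_fst] at this
      linarith
    have h0 : Ψ' = 0 := by
      rw [Finsupp.support_eq_empty] at this
      exact AddMonoidAlgebra.coeff_eq_zero.1 this
    exact ⟨Θ, by rw [hΨ, h0, add_zero]⟩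
  · rw [S.ν.u_mono]
    refine sum_congr rfl fun i _ => ?_
    by_cases hi : i = Sum.inr v₀
    · rw [hi, hs m hm, zero_smul, zero_smul]
    · simp only [S.wt_eq i hi]

/-- A function with possible poles only along `1 + y 1 v = 0` is a Laurent polynomial if it has no
pole at the special solutions. -/
theorem laur_of_locLaur (S : ∀ v₀ : V, Special A B v₀) (g : UG A B)
    (hg : LocLaur (fun σ => (g σ : σ.F)))
    (hS : ∀ v₀, 0 ≤ gfst ((S v₀).ν.u (g (S v₀).σ))) : Laur g := by
  obtain ⟨k, Ψ, h⟩ := hg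
  induction hn : ∑ v, k v generalizing k Ψ with
  | zero =>
    have hk : ∀ v, k v = 0 := by simpa using hn
    exact ⟨Ψ, fun σ => by simpa [hk] using h σ⟩
  | succ n ih =>
    obtain ⟨v₀, hv₀⟩ : ∃ v, k v ≠ 0 := by
      by_contra! hcon
      simp [hcon] at hn
    have hk : k = Function.update k v₀ (k v₀ - 1) + Pi.single v₀ 1 := by
      funext v
      by_cases hv : v = v₀
      · subst hv; simp; omega
      · simp [hv]
    generalize Function.update k v₀ (k v₀ - 1) = k' at hk
    subst hk
    have hprod : ∀ σ : NSol A B, ∏ v, (σ.l 1 v : σ.F) ^ (k' + Pi.single v₀ 1 : V → ℕ) v =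
        (∏ v, (σ.l 1 v : σ.F) ^ k' v) * σ.l 1 v₀ := by
      intro σ
      simp only [Pi.add_apply, pow_add, prod_mul_distrib]
      congr 1
      rw [prod_eq_single v₀ (fun v _ hv => by simp [hv]) (by simp)]
      simp
    obtain ⟨Θ, rfl⟩ := (S v₀).dvd Ψ (by
      have e := h (S v₀).σ
      rw [hprod] at e
      have e2 : ev (S v₀).σ.z Ψ = (((g (S v₀).σ * ∏ v, (S v₀).σ.l 1 v ^ k' v) *
        (S v₀).σ.l 1 v₀ : (S v₀).σ.Fˣ) : (S v₀).σ.F) := by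
        rw [← e]; push_cast; ring
      rw [e2]
      right
      change (1 : ℝ) ≤ gfst ((S v₀).ν.u _)
      rw [OrdVal.u_mul, OrdVal.u_mul, OrdVal.u_prod, map_add, map_add, map_sum, (S v₀).l_fst]
      have h0 : 0 ≤ ∑ v, gfst ((S v₀).ν.u ((S v₀).σ.l 1 v ^ k' v)) := by
        refine sum_nonneg fun v _ => ?_
        rw [OrdVal.u_pow, map_nsmul, (S v₀).l_fst]
        split_ifs <;> simp
      have := hS v₀
      simp only [if_true]
      linarith)
    refine ih k' Θ (fun σ => ?_) ?_
    · have e := h σ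
      rw [hprod, map_mul, ev_l] at e
      exact mul_right_cancel₀ (σ.l 1 v₀).ne_zero (by linear_combination e)
    · simpa [sum_add_distrib] using hn

theorem Laur.ofOne : Laur (1 : UG A B) := ⟨1, fun σ => by simp⟩

/-- The Laurent phenomenon for the `F`-polynomials.  Inductively `FF (n + 1)` is the time shift of
`FF n` up to a monomial in the initial data and the `1 + y 1 v`, hence has poles at most along the
divisors `1 + y 1 v₀ = 0`.  At such a divisor it is compared with the threefold time shift of
`FF n`, which has no pole there because the solution has returned to general position at times
`3` and `4`. -/
theorem laur_FF (S : ∀ v₀ : V, Special A B v₀) (n : ℕ) : ∀ v, Laur (FF n v : UG A B) := by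
  induction n using Nat.strong_induction_on with
  | _ n ih =>
    intro v
    match n, ih with
    | 0, _ => exact Laur.ofOne
    | 1, _ => exact Laur.ofOne
    | 2, _ => exact ⟨1 + coord (Sum.inr v), fun σ => by rw [ev_l]; simp [FF, lU]⟩
    | n + 3, ih =>
      have hloc : LocLaur (fun σ => ((FF (n + 3) v : UG A B) σ : σ.F)) := by
        obtain ⟨w, hw, e⟩ := FF_succ (A := A) (B := B) (n + 2)
        rw [show n + 3 = n + 2 + 1 from rfl, e v]
        exact (ih (n + 2) (by omega) v).locLaur_shift (hw v)
      refine laur_of_locLaur S _ hloc fun v₀ => ?_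
      -- the values of `FF (n + 3) / sh³ (FF n)` solve a homogeneous wave equation
      have key : ∀ n : ℕ, (∀ v, gfst ((S v₀).ν.u ((FF (n + 3) v / sh (sh (sh (FF n v))) : UG A B)
          (S v₀).σ)) = 0) ∧ ∀ v, gfst ((S v₀).ν.u
            ((FF (n + 4) v / sh (sh (sh (FF (n + 1) v))) : UG A B) (S v₀).σ)) = 0 := by
        intro n
        induction n with
        | zero =>
          exact ⟨fun v => by simpa [FF] using (S v₀).FF3 v, fun v => by
            simpa [FF] using (S v₀).FF4 v⟩
        | succ n ih =>
          refine ⟨ih.2, fun v => ?_⟩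
          have e1 := FF_step (A := A) (B := B) (n + 3) v
          have e2 := congrArg (fun x => sh (sh (sh x))) (FF_step (A := A) (B := B) n v)
          simp only [map_mul, map_prod, map_pow] at e2
          rw [ratio_step e1 e2]
          simp only [Pi.div_apply, Finset.prod_apply, Pi.pow_apply, OrdVal.u_div, OrdVal.u_prod,
            OrdVal.u_pow, map_sub, map_sum, map_nsmul]
          have h1 := ih.1
          have h2 := ih.2
          simp only [Pi.div_apply, OrdVal.u_div, map_sub] at h1 h2
          simp [h1, h2]
      have := (key n).1 v
      rw [Pi.div_apply, OrdVal.u_div, map_sub, sub_eq_zero] at this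
      rw [this]
      obtain ⟨Φ, hΦ⟩ := ih n (by omega) v
      have hz : ∀ i, gfst ((S v₀).ν.u ((S v₀).σ.shift.shift.shift.z i)) = 0 := by
        rintro (w | w)
        · change gfst ((S v₀).ν.u ((S v₀).σ.y 3 w)⁻¹) = 0
          rw [OrdVal.u_inv, map_neg, (S v₀).y3, neg_zero]
        · exact (S v₀).y4 w
      have hm := mem_ev_zero (S v₀).ν (S v₀).σ.shift.shift.shift.z hz Φ
      have e := hΦ (S v₀).σ.shift.shift.shift
      change (((sh (sh (sh (FF n v)))) (S v₀).σ : (S v₀).σ.Fˣ) : (S v₀).σ.F) = _ at e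
      rw [← e] at hm
      exact hm.resolve_left (Units.ne_zero _)

end
end ADEPeriodicity

/-! ### Special charts -/

namespace ADEPeriodicity
open Finset
set_option linter.unusedSectionVars false

section
variable {V : Type} [Fintype V] [DecidableEq V] {A B : V → V → ℕ} {h h' : ℕ}

/-- The second coordinate of the value of `y 2 u` when `y 0` and `y 1` have weights given by `p`
and `y 1 v₀` is close to `-1`. -/
def base (A : V → V → ℕ) (v₀ : V) (p : V ⊕ V → ℝ) (u : V) : ℝ :=
  p (Sum.inl u) + ∑ w, A u w * (if w = v₀ then 0 else p (Sum.inr w))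

theorem gmk_add (a b c d : ℝ) : gmk a b + gmk c d = gmk (a + c) (b + d) := rfl

theorem gfst_min {x : Gm} (hx : gfst x = 0) : gfst (min 0 x) = 0 := by
  rcases min_choice 0 x with e | e <;> rw [e]
  · exact map_zero _
  · exact hx

/-- Independent weights, positive at time `1`, for which the values `base` are negative at the
neighbours of `v₀` in `A` and positive elsewhere.  They are obtained from independent positive
weights `q` by replacing the time `0` weight at each of these neighbours by a large negative integer
multiple of itself. -/
theorem exists_weights (A : V → V → ℕ) (v₀ : V) : ∃ p : V ⊕ V → ℝ, Indep p ∧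
    (∀ w, 0 < p (Sum.inr w)) ∧ (∀ u, A u v₀ = 0 → 0 < base A v₀ p u) ∧
    ∀ u, A u v₀ ≠ 0 → base A v₀ p u < 0 := by
  obtain ⟨q, hq, hi⟩ := exists_indep (V ⊕ V)
  have hS : ∀ u, 0 ≤ ∑ w, (A u w : ℝ) * (if w = v₀ then 0 else q (Sum.inr w)) := by
    intro u
    refine sum_nonneg fun w _ => mul_nonneg (Nat.cast_nonneg _) ?_
    split_ifs
    · exact le_rfl
    · exact (hq _).le
  have hN : ∀ u, ∃ N : ℕ,
      ∑ w, (A u w : ℝ) * (if w = v₀ then 0 else q (Sum.inr w)) < N * q (Sum.inl u) := by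
    intro u
    obtain ⟨N, hN⟩ := exists_nat_gt
      ((∑ w, (A u w : ℝ) * (if w = v₀ then 0 else q (Sum.inr w))) / q (Sum.inl u))
    exact ⟨N, (div_lt_iff₀ (hq _)).1 hN⟩
  choose N hN using hN
  have hN0 : ∀ u, 0 < N u := by
    intro u
    rcases Nat.eq_zero_or_pos (N u) with e | e
    · have := hN u
      rw [e] at this
      have := hS u
      simp only [Nat.cast_zero, zero_mul] at *
      linarith
    · exact e
  let n : V ⊕ V → ℤ := Sum.elim (fun u => if A u v₀ = 0 then 1 else -(N u : ℤ)) fun _ => 1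
  have hn : ∀ i, n i ≠ 0 := by
    rintro (u | w)
    · have := hN0 u
      simp only [n, Sum.elim_inl]
      split_ifs <;> omega
    · simp [n]
  refine ⟨fun i => n i * q i, fun m hm => ?_, fun w => by simpa [n] using hq _, fun u hu => ?_,
    fun u hu => ?_⟩
  · have := hi (fun i => m i * n i) (by
      rw [← hm]
      refine sum_congr rfl fun i _ => ?_
      simp [mul_assoc])
    funext i
    exact (mul_eq_zero.1 (congrFun this i)).resolve_right (hn i)
  · have := hS u
    have := hq (Sum.inl u)
    simp only [base, n, Sum.elim_inl, Sum.elim_inr, hu, if_true, Int.cast_one, one_mul]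
    linarith
  · have := hN u
    simp only [base, n, Sum.elim_inl, Sum.elim_inr, hu, if_false, Int.cast_one, one_mul,
      Int.cast_neg, Int.cast_natCast, neg_mul]
    linarith

/-- A solution is special at `v₀` when its initial values have the weights `p` in second coordinate,
except that `y 1 v₀` has value zero and `1 + y 1 v₀` has the infinitely larger value `(1, 0)`.
In first coordinate `y 2 u` vanishes along the divisor at the `B`-neighbours of `v₀` and has a pole at
the `A`-neighbours; commutation of `A` and `B` makes these contributions cancel in `y 3`, and the
only remaining trace is that `1 + y 3 v₀` vanishes as well, which makes `y 4` and `FF 4` regular. -/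
theorem special_of (H : Adm A B h h') (v₀ : V) {p : V ⊕ V → ℝ} (hp : Indep p)
    (hr : ∀ w, 0 < p (Sum.inr w)) (hb0 : ∀ u, A u v₀ = 0 → 0 < base A v₀ p u)
    (hb1 : ∀ u, A u v₀ ≠ 0 → base A v₀ p u < 0) (σ : NSol A B) (ν : OrdVal σ.F Gm)
    (h0 : ∀ u, ν.u (σ.y 0 u) = -gmk 0 (p (Sum.inl u)))
    (h1 : ∀ w, ν.u (σ.y 1 w) = gmk 0 (if w = v₀ then 0 else p (Sum.inr w)))
    (hl : ν.u (σ.l 1 v₀) = gmk 1 0) : Nonempty (Special A B v₀) := by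
  have l1 : ∀ w, ν.u (σ.l 1 w) = gmk (if w = v₀ then 1 else 0) 0 := by
    intro w
    by_cases hw : w = v₀
    · subst hw; simpa using hl
    · have : 0 < ν.u (σ.y 1 w) := by
        rw [h1, gm_lt]
        simp [hw, hr]
      rw [σ.u_l ν this.ne', min_eq_left this.le]
      simp only [hw, if_false]; rfl
  have hAB : ∀ u v, A u v = 0 ∧ B u v = 0 ∨ A u v = 1 ∧ B u v = 0 ∨ A u v = 0 ∧ B u v = 1 := by
    intro u v
    have := H.leA u v
    have := H.leB u v
    have := H.disj u v
    rcases Nat.mul_eq_zero.1 this with e | e <;> omega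
  have y2 : ∀ u, ν.u (σ.y 2 u) = gmk ((B u v₀ : ℝ) - A u v₀) (base A v₀ p u) := by
    intro u
    have e := σ.u_step ν 0 u
    simp only [zero_add] at e
    have e1 := congrArg gfst e
    have e2 := congrArg gsnd e
    simp only [h0, h1, l1, map_add, map_sub, map_neg, map_sum, map_nsmul, gfst_mk, gsnd_mk] at e1 e2
    apply gm_ext
    · simp at e1 ⊢
      exact e1
    · simp only [base, gsnd_mk]
      simp only [smul_zero, sum_const_zero, zero_sub, smul_neg, sum_neg_distrib, nsmul_eq_mul] at e2
      linarith
  have l2 : ∀ u, ν.u (σ.l 2 u) = gmk (-(A u v₀ : ℝ)) (A u v₀ * base A v₀ p u) := by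
    intro u
    rcases Nat.eq_zero_or_pos (A u v₀) with e | e
    · have hpos : 0 < ν.u (σ.y 2 u) := by
        rw [y2, gm_lt, e]
        have := hb0 u e
        rcases Nat.eq_zero_or_pos (B u v₀) with e' | e'
        · right; simp [e', this]
        · left; simpa using e'
      rw [σ.u_l ν hpos.ne', min_eq_left hpos.le, e]
      simp; rfl
    · have e1 : A u v₀ = 1 := by have := H.leA u v₀; omega
      have e2 : B u v₀ = 0 := by have := hAB u v₀; omega
      have hneg : ν.u (σ.y 2 u) < 0 := by
        rw [y2, gm_lt, e1, e2]
        left; simp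
      rw [σ.u_l ν hneg.ne, min_eq_right hneg.le, y2, e1, e2]
      simp
  have y3f : ∀ v, gfst (ν.u (σ.y 3 v)) = 0 := by
    intro v
    have e1 := congrArg gfst (σ.u_step ν 1 v)
    simp only [l2, h1, y2, map_add, map_sub, map_sum, map_nsmul, gfst_mk, Nat.reduceAdd] at e1
    have hc : ∑ u, (A v u : ℝ) * B u v₀ = ∑ u, (B v u : ℝ) * A u v₀ := by
      exact_mod_cast H.comm v v₀
    simp only [nsmul_eq_mul, mul_neg, sum_neg_distrib, add_zero, mul_sub, sum_sub_distrib] at e1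
    linarith
  -- the coefficients of `base` in the second coordinate of the value of `y 3 v`
  have y3s : ∀ v, ∃ c : V → ℤ, gsnd (ν.u (σ.y 3 v)) =
      ∑ u, c u * base A v₀ p u - if v = v₀ then 0 else p (Sum.inr v) := by
    intro v
    refine ⟨fun u => B v u * A u v₀ + A v u * (1 - A u v₀), ?_⟩
    have e1 := congrArg gsnd (σ.u_step ν 1 v)
    simp only [l2, h1, y2, map_add, map_sub, map_sum, map_nsmul, gsnd_mk, Nat.reduceAdd] at e1
    rw [eq_sub_of_add_eq e1, ← sum_sub_distrib]
    congr 1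
    refine sum_congr rfl fun u _ => ?_
    push_cast
    simp only [nsmul_eq_mul]
    ring
  have l3 : ∀ w, gfst (ν.u (σ.l 3 w)) = if w = v₀ then 1 else 0 := by
    intro w
    by_cases hw : w = v₀
    · subst hw
      let U := ν.U (Set.Ioi (gmk 1 0)) (isUpperSet_Ioi _)
        (fun a ha => lt_trans (gm_lt.2 (Or.inl (by simp))) (Set.mem_Ioi.1 ha))
      -- `y 3 v₀ * y 1 v₀` is congruent to `1` beyond the value `(1, 0)`, so that in
      -- `(1 + y 3 v₀) * y 1 v₀ = (1 + y 1 v₀) + (y 3 v₀ * y 1 v₀ - 1)` the first summand dominates.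
      have hW : σ.y 3 w * σ.y 1 w ∈ U := by
        rw [σ.step 1 w]
        refine div_mem (prod_mem fun u _ => ?_) (prod_mem fun u _ => ?_)
        · rcases hAB u w with ⟨e1, e2⟩ | ⟨e1, e2⟩ | ⟨e1, e2⟩
          · rw [H.symmB w u, e2, pow_zero]; exact one_mem _
          · rw [H.symmB w u, e2, pow_zero]; exact one_mem _
          · refine pow_mem ?_ _
            rw [OrdVal.mem_U, σ.hl, add_sub_cancel_left]
            right
            change gmk 1 0 < ν.u (σ.y 2 u)
            rw [y2, gm_lt, e1, e2]
            right
            simpa using hb0 u e1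
        · rcases hAB u w with ⟨e1, e2⟩ | ⟨e1, e2⟩ | ⟨e1, e2⟩
          · rw [H.symmA w u, e1, pow_zero]; exact one_mem _
          · refine pow_mem ?_ _
            rw [OrdVal.mem_U]
            have e : ((σ.l (1 + 1) u / σ.y (1 + 1) u : σ.Fˣ) : σ.F) - 1 =
                ((σ.y (1 + 1) u)⁻¹ : σ.Fˣ) := by
              have := (σ.y (1 + 1) u).ne_zero
              push_cast
              rw [σ.hl]
              field_simp
              ring
            rw [e]
            right
            change gmk 1 0 < ν.u (σ.y 2 u)⁻¹
            rw [ν.u_inv, y2, gm_lt, e1, e2]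
            right
            simpa using hb1 u (by omega)
          · rw [H.symmA w u, e1, pow_zero]; exact one_mem _
      have hW' := (OrdVal.mem_U ν).1 hW
      have hv1 : ν.v (σ.l 1 w : σ.F) = gmk 1 0 := hl
      have := (ν.add_of_lt (x := (σ.l 1 w : σ.F)) (σ.l 1 w).ne_zero (by rw [hv1]; exact hW')).2
      have e : (σ.l 1 w : σ.F) + (((σ.y 3 w * σ.y 1 w : σ.Fˣ) : σ.F) - 1) =
          ((σ.l 3 w * σ.y 1 w : σ.Fˣ) : σ.F) := by
        push_cast
        rw [σ.hl, σ.hl]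
        ring
      rw [e, hv1] at this
      have this : ν.u (σ.l 3 w * σ.y 1 w) = gmk 1 0 := this
      rw [ν.u_mul, h1] at this
      have := congrArg gfst this
      simpa using this
    -- Independence of the weights excludes a zero value: the coefficients at time `0` would force
    -- `c = 0`, and then the weight of `inr w` would remain.
    · have hne : ν.u (σ.y 3 w) ≠ 0 := by
        intro hz
        obtain ⟨c, hc⟩ := y3s w
        rw [hz, map_zero] at hc
        simp only [hw, if_false] at hc
        have := hp (Sum.elim c fun w' => (if w' = v₀ then 0 else ∑ u, c u * A u w') -
          if w' = w then 1 else 0) (by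
          simp only [dot, Fintype.sum_sum_type, Sum.elim_inl, Sum.elim_inr, zsmul_eq_mul]
          refine Eq.trans ?_ hc.symm
          simp only [base, mul_add, sum_add_distrib, add_sub_assoc]
          congr 1
          push_cast
          simp only [sub_mul, sum_sub_distrib]
          congr 1
          · simp only [mul_sum]
            rw [sum_comm]
            refine sum_congr rfl fun w' _ => ?_
            split_ifs
            · simp
            · rw [sum_mul]
              exact sum_congr rfl fun u _ => by ring
          · simp)
        have hc0 : ∀ u, c u = 0 := fun u => congrFun this (Sum.inl u)
        have := congrFun this (Sum.inr w)
        simp [hc0] at this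
      rw [σ.u_l ν hne, if_neg hw]
      exact gfst_min (y3f w)
  have F2 : ∀ v, gfst (ν.u ((FF 2 v : UG A B) σ)) = if v = v₀ then 1 else 0 := by
    intro v
    have : (FF 2 v : UG A B) σ = σ.l 1 v := by simp [FF, lU]
    rw [this, l1, gfst_mk]
  have hFF : ∀ n v, gfst (ν.u ((FF (n + 2) v : UG A B) σ)) + gfst (ν.u ((FF n v : UG A B) σ)) =
      ∑ u, A v u * gfst (ν.u ((FF (n + 1) u : UG A B) σ)) + gfst (ν.u (σ.l (n + 1) v)) := by
    intro n v
    have := congrArg (fun x => gfst (ν.u x)) (congrFun (FF_step (A := A) (B := B) n v) σ)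
    simp only [Pi.mul_apply, Finset.prod_apply, Pi.pow_apply, ν.u_mul, ν.u_prod, ν.u_pow, map_add,
      map_sum, map_nsmul, lU] at this
    simpa only [nsmul_eq_mul] using this
  have F3 : ∀ v, gfst (ν.u ((FF 3 v : UG A B) σ)) = 0 := by
    intro v
    have := hFF 1 v
    simp only [Nat.reduceAdd, F2, l2, gfst_mk] at this
    have e : gfst (ν.u ((FF 1 v : UG A B) σ)) = 0 := by
      change gfst (ν.u (1 : σ.Fˣ)) = 0
      rw [ν.u_one, map_zero]
    rw [e] at this
    simpa using this
  have F4 : ∀ v, gfst (ν.u ((FF 4 v : UG A B) σ)) = 0 := by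
    intro v
    have := hFF 2 v
    simp only [Nat.reduceAdd, F2, F3, l3] at this
    simpa using this
  have y4 : ∀ v, gfst (ν.u (σ.y 4 v)) = 0 := by
    intro v
    have e1 := congrArg gfst (σ.u_step ν 2 v)
    simp only [y2, l3, y3f, map_add, map_sub, map_sum, map_nsmul, gfst_mk, Nat.reduceAdd] at e1
    simpa using e1
  exact ⟨{
    σ := σ
    ν := ν
    z_fst := by
      rintro (u | w)
      · change gfst (ν.u (σ.y 0 u)⁻¹) = 0
        rw [ν.u_inv, h0]; simp
      · change gfst (ν.u (σ.y 1 w)) = 0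
        rw [h1]; simp
    l_fst := fun w => by rw [l1]; simp
    wt := fun i => gmk 0 (p i)
    wt_indep := indep_gm hp _ fun i => rfl
    wt_fst := fun i => rfl
    wt_eq := by
      rintro (u | w) hi
      · change ν.u (σ.y 0 u)⁻¹ = _
        rw [ν.u_inv, h0, neg_neg]
      · change ν.u (σ.y 1 w) = _
        have : w ≠ v₀ := fun e => hi (by rw [e])
        rw [h1, if_neg this]
    y3 := y3f
    y4 := y4
    FF3 := F3
    FF4 := F4 }⟩

/-- A special solution exists over the Hahn series field: start from monomials with the weights of
`exists_weights` and put `-1 + q ^ (1, 0)` in place of `y 1 v₀`. -/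
theorem exists_special (H : Adm A B h h') (v₀ : V) : Nonempty (Special A B v₀) := by
  obtain ⟨p, hp, hr, hb0, hb1⟩ := exists_weights A v₀
  have hκ : ordVal.v ((qpow (gmk 1 0) : HFˣ) : HF) = gmk 1 0 := u_qpow _
  -- `-1 + q ^ κ`, whose value is zero although `1 + y` has value `κ`
  have hne : (-1 : HF) + (qpow (gmk 1 0) : HFˣ) ≠ 0 ∧
      ordVal.v ((-1 : HF) + (qpow (gmk 1 0) : HFˣ)) = 0 := by
    have := ordVal.add_of_lt (x := (-1 : HF)) (y := (qpow (gmk 1 0) : HFˣ)) (by simp) (by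
      right
      rw [hκ, ordVal.v_neg_one]
      exact gm_lt.2 (Or.inl (by simp)))
    rw [ordVal.v_neg_one] at this
    exact this
  let z₀ : V ⊕ V → HFˣ := fun i => qpow (if i = Sum.inr v₀ then gmk 1 0 else gmk 0 (p i))
  let z : V ⊕ V → HFˣ := Function.update z₀ (Sum.inr v₀) (Units.mk0 _ hne.1)
  have hz₀ : Indep fun i => ordVal.u (z₀ i) := by
    simp only [z₀, u_qpow]
    intro m hm
    have m0 : m (Sum.inr v₀) = 0 := by
      have := congrArg gfst hm
      rw [map_dot, dot, sum_eq_single (Sum.inr v₀) (fun i _ hi => by simp [hi]) (by simp)] at this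
      simpa using this
    apply hp
    have := congrArg gsnd hm
    rw [map_dot, map_zero] at this
    rw [← this]
    refine sum_congr rfl fun i _ => ?_
    by_cases hi : i = Sum.inr v₀
    · rw [hi, m0]; simp
    · simp [hi]
  have hz : Function.Injective
      (MvPolynomial.aeval (R := ℤ) (fun i => (z i : HF)) : MvPolynomial (V ⊕ V) ℤ → HF) := by
    have := aeval_injective_translate (fun i => (z₀ i : HF)) (Sum.inr v₀)
      (ordVal.aeval_injective z₀ hz₀)
    have e : (fun i => (z i : HF)) = Function.update (fun i => (z₀ i : HF)) (Sum.inr v₀)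
        (-1 + (z₀ (Sum.inr v₀) : HF)) := by
      funext i
      by_cases hi : i = Sum.inr v₀
      · subst hi; simp [z, z₀]
      · simp [z, hi]
    rw [e]
    exact this
  obtain ⟨y, l, hl, hs, hy0, hy1⟩ := exists_sol A B z hz
  refine special_of H v₀ hp hr hb0 hb1 ⟨HF, y, l, hl, hs⟩ ordVal (fun u => ?_) (fun w => ?_) ?_
  · change ordVal.u (y 0 u) = _
    rw [hy0, OrdVal.u_inv]
    simp [z, z₀, u_qpow]
  · change ordVal.u (y 1 w) = _
    rw [hy1]
    by_cases hw : w = v₀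
    · subst hw
      have : z (Sum.inr w) = Units.mk0 _ hne.1 := by simp [z]
      rw [this, if_pos rfl]
      exact hne.2
    · simp [z, z₀, hw, u_qpow]
  · change ordVal.v (l 1 v₀ : HF) = _
    rw [hl, hy1]
    have : z (Sum.inr v₀) = Units.mk0 _ hne.1 := by simp [z]
    rw [this, Units.val_mk0, add_neg_cancel_left]
    exact hκ

end
end ADEPeriodicity

/-! ### The support argument -/

namespace ADEPeriodicity
open Finset
set_option linter.unusedSectionVars false

section
variable {V : Type} [Fintype V] [DecidableEq V] {A B : V → V → ℕ} {h h' : ℕ}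

/-- Initial data with arbitrary independent values. -/
theorem exists_chart (A B : V → V → ℕ) (γ : V ⊕ V → Gm) (hγ : Indep γ) :
    ∃ (σ : NSol A B) (ν : OrdVal σ.F Gm), ∀ i, ν.u (σ.z i) = γ i := by
  obtain ⟨y, l, hl, hs, hy0, hy1⟩ := exists_sol A B (fun i => qpow (γ i))
    (ordVal.aeval_injective _ (by simpa only [u_qpow] using hγ))
  refine ⟨⟨HF, y, l, hl, hs⟩, ordVal, ?_⟩
  rintro (v | v)
  · change ordVal.u (y 0 v)⁻¹ = _
    rw [hy0, inv_inv, u_qpow]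
  · change ordVal.u (y 1 v) = _
    rw [hy1, u_qpow]

theorem NSol.u_zero (σ : NSol A B) (ν : OrdVal σ.F Gm) (v : V) :
    ν.u (σ.y 0 v) = -ν.u (σ.z (Sum.inl v)) := by
  change _ = -ν.u (σ.y 0 v)⁻¹
  rw [ν.u_inv, neg_neg]

/-- For two families of Laurent polynomials in the initial data, a single finite set `S` of exponents,
namely those occurring when `1` is subtracted, decides at every valuation with independent initial
values how closely all of them are congruent to `1`. -/
theorem exists_support {E₀ E₁ : V → UG A B} (h0 : ∀ v, Laur (E₀ v)) (h1 : ∀ v, Laur (E₁ v)) :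
    ∃ S : Finset (V ⊕ V → ℤ),
      (∀ (σ : NSol A B) (ν : OrdVal σ.F Gm), (Indep fun i => ν.u (σ.z i)) → ∀ (J : Set Gm)
        (hJ : IsUpperSet J) (hpos : ∀ a ∈ J, 0 < a),
        ((∀ v, E₀ v σ ∈ ν.U J hJ hpos ∧ E₁ v σ ∈ ν.U J hJ hpos) ↔
          ∀ m ∈ S, dot (fun i => ν.u (σ.z i)) m ∈ J)) ∧
      (S = ∅ → ∀ v σ, E₀ v σ = 1 ∧ E₁ v σ = 1) := by
  classical
  choose Φ hΦ using h0
  choose Ψ hΨ using h1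
  refine ⟨univ.biUnion fun v => (Φ v - 1).coeff.support ∪ (Ψ v - 1).coeff.support, ?_, ?_⟩
  · intro σ ν hi J hJ hpos
    have key : ∀ (Θ : Laurent (V ⊕ V)) (g : σ.Fˣ), (g : σ.F) = ev σ.z Θ →
        (g ∈ ν.U J hJ hpos ↔
          ∀ m ∈ (Θ - 1).coeff.support, dot (fun i => ν.u (σ.z i)) m ∈ J) := by
      intro Θ g hg
      rw [OrdVal.mem_U, hg, ← map_one (ev σ.z), ← map_sub]
      exact ν.mem_ev _ hi _ (fun m _ => ν.u_mono _ _) hJ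
    simp only [key _ _ (hΦ _ σ), key _ _ (hΨ _ σ), mem_biUnion, mem_univ, true_and, mem_union]
    constructor
    · rintro h m ⟨v, hm | hm⟩
      · exact (h v).1 m hm
      · exact (h v).2 m hm
    · exact fun h v => ⟨fun m hm => h m ⟨v, Or.inl hm⟩, fun m hm => h m ⟨v, Or.inr hm⟩⟩
  · intro hS v σ
    have h0 : ∀ Θ : Laurent (V ⊕ V), Θ.coeff.support = ∅ → Θ = 0 := fun Θ h =>
      AddMonoidAlgebra.coeff_eq_zero.1 (Finsupp.support_eq_empty.1 h)
    have h1 := eq_empty_of_forall_notMem (s := (Φ v - 1).coeff.support ∪ (Ψ v - 1).coeff.support)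
      fun m hm => by
        have := mem_biUnion (t := fun v => (Φ v - 1).coeff.support ∪ (Ψ v - 1).coeff.support).2
          ⟨v, mem_univ v, hm⟩
        rw [hS] at this
        exact notMem_empty _ this
    rw [union_eq_empty] at h1
    constructor
    · apply Units.ext
      rw [hΦ, sub_eq_zero.1 (h0 _ h1.1), map_one, Units.val_one]
    · apply Units.ext
      rw [hΨ, sub_eq_zero.1 (h0 _ h1.2), map_one, Units.val_one]

theorem Laur.of_mono {g f : UG A B} (hf : Laur f) (m : V ⊕ V → ℤ)
    (h : ∀ σ, g σ = mono σ.z (Multiplicative.ofAdd m) * f σ) : Laur g := by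
  obtain ⟨Φ, hΦ⟩ := hf
  exact ⟨AddMonoidAlgebra.single m 1 * Φ, fun σ => by
    rw [h, map_mul, ev_single_one, ← hΦ, Units.val_mul]⟩

/-- Congruences between `y` and its translate pass to `1 + y`. -/
theorem mem_U_one_add {F : Type*} [Field F] (ν : OrdVal F Gm) {J : Set Gm} {hJ : IsUpperSet J}
    {hpos : ∀ a ∈ J, 0 < a} {y y' l l' : Fˣ} (hl : (l : F) = 1 + y) (hl' : (l' : F) = 1 + y')
    (hν : ν.u l ≤ ν.u y) (hy : y' / y ∈ ν.U J hJ hpos) : l' / l ∈ ν.U J hJ hpos := by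
  rw [OrdVal.mem_U] at hy ⊢
  have e : ((l' / l : Fˣ) : F) - 1 = (((y' / y : Fˣ) : F) - 1) * (y / l : Fˣ) := by
    have := l.ne_zero
    have := y.ne_zero
    push_cast
    field_simp
    rw [hl, hl']
    ring
  rw [e]
  refine OrdVal.Mem.mul_unit ν (J := J) _ (fun a ha => ?_) hy
  rw [ν.u_div]
  exact hJ (le_add_of_nonneg_right (sub_nonneg.2 hν)) ha

theorem NSol.u_l_le (σ : NSol A B) (ν : OrdVal σ.F Gm) {t : ℕ} {v : V}
    (hv : ν.u (σ.y t v) ≠ 0) : ν.u (σ.l t v) ≤ ν.u (σ.y t v) := by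
  rw [σ.u_l ν hv]; exact min_le_right _ _

theorem dot_sum {Γ : Type*} [AddCommGroup Γ] {γ : V ⊕ V → Γ} (m : V ⊕ V → ℤ) :
    dot γ m = ∑ u, m (Sum.inl u) • γ (Sum.inl u) + ∑ u, m (Sum.inr u) • γ (Sum.inr u) := by
  rw [dot, Fintype.sum_sum_type]

theorem map_dot_sum {Γ : Type*} [AddCommGroup Γ] (f : Γ →+ ℝ) (γ : V ⊕ V → Γ)
    (m : V ⊕ V → ℤ) : f (dot γ m) =
      ∑ u, (m (Sum.inl u) : ℝ) * f (γ (Sum.inl u)) +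
        ∑ u, (m (Sum.inr u) : ℝ) * f (γ (Sum.inr u)) := by
  simp only [dot_sum, map_add, map_sum, map_zsmul, zsmul_eq_mul]

theorem map_act_toZ {Γ : Type*} [AddCommGroup Γ] (f : Γ →+ ℝ) (M : V → V → ℕ) (x : V → Γ)
    (v : V) : f (act (toZ M) x v) = ∑ u, (M v u : ℝ) * f (x u) := by
  simp only [act, toZ, Matrix.of_apply, map_sum, map_zsmul, zsmul_eq_mul, Int.cast_natCast]

theorem act_neg {Γ : Type*} [AddCommGroup Γ] (M : Matrix V V ℤ) (x : V → Γ) (v : V) :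
    act M (fun u => -x u) v = -act M x v := by
  simp only [act, smul_neg, sum_neg_distrib]

theorem sum_act_comm {Γ : Type*} [AddCommGroup Γ] {M : V → V → ℕ} (hM : ∀ u v, M u v = M v u)
    (x : V → ℤ) (g : V → Γ) :
    ∑ u, x u • act (toZ M) g u = ∑ u, (∑ w, (M u w : ℤ) * x w) • g u := by
  simp only [act, toZ, Matrix.of_apply, smul_sum, sum_smul, smul_smul]
  rw [sum_comm]
  refine sum_congr rfl fun u _ => sum_congr rfl fun w _ => ?_
  rw [hM, mul_comm]

/-- Independence of the values which the initial variables take after one step forward from positive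
values `γ`. -/
theorem indep_forward {Γ : Type*} [AddCommGroup Γ] {M : V → V → ℕ}
    (hM : ∀ u v, M u v = M v u) {γ γ' : V ⊕ V → Γ}
    (hγ : Indep γ) (hl : ∀ u, γ' (Sum.inl u) = -γ (Sum.inr u))
    (hr : ∀ u, γ' (Sum.inr u) = act (toZ M) (fun w => γ (Sum.inr w)) u + γ (Sum.inl u)) :
    Indep γ' := by
  intro m hm
  have := hγ (Sum.elim (fun u => m (Sum.inr u))
    fun u => -m (Sum.inl u) + ∑ w, (M u w : ℤ) * m (Sum.inr w)) (by
      rw [← hm, dot_sum, dot_sum]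
      simp only [hl, hr, Sum.elim_inl, Sum.elim_inr, smul_add, sum_add_distrib, add_smul,
        sum_act_comm hM, smul_neg, neg_smul]
      abel)
  have h0 : ∀ u, m (Sum.inr u) = 0 := fun u => congrFun this (Sum.inl u)
  funext i
  rcases i with u | u
  · have := congrFun this (Sum.inr u)
    simpa [h0] using this
  · exact h0 u

/-- Independence of the values of the initial variables from which one step forward leads to positive
values `γ`. -/
theorem indep_backward {Γ : Type*} [AddCommGroup Γ] {M : V → V → ℕ}
    (hM : ∀ u v, M u v = M v u) {γ γ' : V ⊕ V → Γ}
    (hγ : Indep γ)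
    (hl : ∀ u, γ' (Sum.inl u) = act (toZ M) (fun w => γ (Sum.inl w)) u + γ (Sum.inr u))
    (hr : ∀ u, γ' (Sum.inr u) = -γ (Sum.inl u)) : Indep γ' := by
  intro m hm
  have := hγ (Sum.elim (fun u => -m (Sum.inr u) + ∑ w, (M u w : ℤ) * m (Sum.inl w))
    fun u => m (Sum.inl u)) (by
      rw [← hm, dot_sum, dot_sum]
      simp only [hl, hr, Sum.elim_inl, Sum.elim_inr, smul_add, sum_add_distrib, add_smul,
        sum_act_comm hM, smul_neg, neg_smul]
      abel)
  have h0 : ∀ u, m (Sum.inl u) = 0 := fun u => congrFun this (Sum.inr u)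
  funext i
  rcases i with u | u
  · exact h0 u
  · have := congrFun this (Sum.inl u)
    simpa [h0] using this

/-- A linear form which is nonnegative on the positive orthant has only nonnegative coefficients. -/
theorem nonneg_of_pos {I : Type} [Fintype I] [DecidableEq I] (m : I → ℤ)
    (h : ∀ r : I → ℝ, (∀ i, 0 < r i) → 0 ≤ dot r m) (i : I) : 0 ≤ m i := by
  by_contra! hi
  have hS : (0 : ℝ) ≤ ∑ j, |(m j : ℝ)| := sum_nonneg fun j _ => abs_nonneg _
  have := h (fun j => 1 + if j = i then ∑ j, |(m j : ℝ)| else 0) (fun j => by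
    split_ifs <;> linarith)
  simp only [dot, zsmul_eq_mul, mul_add, sum_add_distrib, mul_one, mul_ite, mul_zero,
    sum_ite_eq', mem_univ, if_true] at this
  have hm : (m i : ℝ) ≤ -1 := by exact_mod_cast (by omega : m i ≤ -1)
  have h1 : ∑ j, (m j : ℝ) ≤ m i + (∑ j, |(m j : ℝ)| - |(m i : ℝ)|) := by
    rw [← add_sum_erase _ _ (mem_univ i), ← add_sum_erase (f := fun j => |(m j : ℝ)|) _ (mem_univ i)]
    have := sum_le_sum fun j (_ : j ∈ univ.erase i) => le_abs_self (m j : ℝ)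
    linarith
  have h2 : |(m i : ℝ)| = -m i := abs_of_neg (by linarith)
  nlinarith

/-- Periodicity of every nondegenerate solution, without parity restriction, stated at time `1`. -/
theorem periodic (H : Adm A B h h') (σ : NSol A B) (v : V) :
    σ.y (1 + 2 * (h + h')) v = σ.y 1 v := by
  obtain ⟨E, e1, e2, e3, e4, e5⟩ := exists_E A B H.commute (le_trans one_le_two H.two_le)
    (le_trans one_le_two H.two_le') H.chebA.2 H.chebB.2
  have hF := laur_FF (fun v₀ => (exists_special H v₀).some)
  obtain ⟨S, hS, hS0⟩ := exists_support (E₀ := E 0) (E₁ := E 1)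
    (fun v => by obtain ⟨⟨m, hm⟩, -⟩ := e4 v; exact (hF _ v).of_mono m hm)
    (fun v => by obtain ⟨-, m, hm⟩ := e4 v; exact (hF _ v).of_mono m hm)
  suffices hE : S = ∅ by
    have := e2 0 v σ
    simp only [zero_add, (hS0 hE _ σ).2, one_zpow, prod_const_one] at this
    rwa [div_eq_one] at this
  -- congruences propagate through one time step in both directions
  have hstep : ∀ (σ : NSol A B) (ν : OrdVal σ.F Gm) (J : Set Gm) (hJ : IsUpperSet J)
      (hpos : ∀ a ∈ J, 0 < a), (∀ v, ν.u (σ.y 1 v) ≠ 0) → (∀ v, E 1 v σ ∈ ν.U J hJ hpos) →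
      ∀ v, E 2 v σ ∈ ν.U J hJ hpos ↔ E 0 v σ ∈ ν.U J hJ hpos := by
    intro σ ν J hJ hpos hy hE v
    have e := e1 0 v σ
    simp only [zero_add] at e
    have hm : E 2 v σ * E 0 v σ ∈ ν.U J hJ hpos := by
      rw [e]
      refine mul_mem (prod_mem fun u _ => pow_mem (hE u) _) ?_
      refine mem_U_one_add ν (σ.hl _ _) (σ.hl _ _) (σ.u_l_le ν (hy v)) ?_
      have := e2 0 v σ
      rw [zero_add] at this
      rw [this]
      exact prod_mem fun u _ => zpow_mem (hE u) _
    exact ⟨fun h => (Subgroup.mul_mem_cancel_left _ h).1 hm,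
      fun h => (Subgroup.mul_mem_cancel_right _ h).1 hm⟩
  have hpos : ∀ γ : V ⊕ V → Gm, Indep γ → (∀ i, 0 < γ i) → ∀ m ∈ S, 0 < dot γ m := by
    intro γ hγ hp
    obtain ⟨σ, ν, hz⟩ := exists_chart A B γ hγ
    have hw := positive_chart H σ ν (fun v => by rw [σ.u_zero, hz]; exact neg_neg_of_pos (hp _))
      (fun v => by rw [show σ.y 1 v = σ.z (Sum.inr v) from rfl, hz]; exact hp _)
    have := (hS σ ν (by simpa only [hz] using hγ) _ _ _).1 (e3 σ (U0 ν) hw.1 hw.2)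
    simpa only [hz, Set.mem_Ioi] using this
  obtain ⟨p, hp, hpi⟩ := exists_indep (V ⊕ V)
  have hnn : ∀ m ∈ S, ∀ i, 0 ≤ m i := by
    intro m hm
    refine nonneg_of_pos m fun r hr => ?_
    have := gfst_mono (hpos (fun i => gmk (r i) (p i)) (indep_gm hpi _ fun i => rfl)
      (fun i => gm_lt.2 (Or.inl (hr i))) m hm).le
    rwa [map_zero, map_dot] at this
  by_contra hne
  obtain ⟨ξ, hξ, hBξ⟩ := H.perronB
  -- The leading weights are a Perron eigenvector of `B` on the time `0` variables and zero on the
  -- time `1` variables; the infinitesimal weights `p` ensure independence and positivity.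
  let γ : V ⊕ V → Gm := Sum.elim (fun u => gmk (ξ u) (p (Sum.inl u))) fun u => gmk 0 (p (Sum.inr u))
  have hγ : Indep γ := indep_gm hpi _ (by rintro (u | u) <;> rfl)
  have hγp : ∀ i, 0 < γ i := by
    rintro (u | u)
    · exact gm_lt.2 (Or.inl (hξ u))
    · exact gm_lt.2 (Or.inr ⟨rfl, hp _⟩)
  obtain ⟨m₀, hm₀, hmin⟩ := exists_min_image S (dot γ) (nonempty_iff_ne_empty.2 hne)
  have hd : 0 < dot γ m₀ := hpos γ hγ hγp m₀ hm₀
  have hJp : ∀ a ∈ Set.Ici (dot γ m₀), 0 < a := fun a ha => lt_of_lt_of_le hd ha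
  have hsum : ∀ m : V ⊕ V → ℤ, gfst (dot γ m) = ∑ u, m (Sum.inl u) * ξ u := by
    intro m
    rw [map_dot_sum gfst]
    simp only [γ, Sum.elim_inl, Sum.elim_inr, gfst_mk, mul_zero, sum_const_zero, add_zero]
  -- move one step forward from the chart `γ`
  have hfw : ∑ u, m₀ (Sum.inl u) * ξ u ≤ ∑ u, m₀ (Sum.inr u) * ξ u := by
    obtain ⟨σ, ν, hz⟩ := exists_chart A B γ hγ
    have hy1 : ∀ v, ν.u (σ.y 1 v) = γ (Sum.inr v) := fun v => hz (Sum.inr v)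
    have hU := (hS σ ν (by simpa only [hz] using hγ) _ (isUpperSet_Ici _) hJp).2
      (by simpa only [hz, Set.mem_Ici] using hmin)
    have hU2 := fun v => (hstep σ ν _ (isUpperSet_Ici _) hJp
      (fun v => by rw [hy1]; exact (hγp _).ne') (fun v => (hU v).2) v).2 (hU v).1
    have hl : ∀ u, ν.u (σ.shift.z (Sum.inl u)) = -γ (Sum.inr u) := by
      intro u
      change ν.u (σ.y 1 u)⁻¹ = _
      rw [ν.u_inv, hy1]
    have hr : ∀ u, ν.u (σ.shift.z (Sum.inr u)) =
        act (toZ A) (fun w => γ (Sum.inr w)) u + γ (Sum.inl u) := by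
      intro u
      have := σ.u_step_pos ν 0 (fun v => by rw [zero_add, hy1]; exact hγp _) u
      simp only [zero_add, hy1, σ.u_zero, hz] at this
      change ν.u (σ.y 2 u) = _
      rw [← this, neg_add_cancel_right]
    have := (hS σ.shift ν (indep_forward H.symmA hγ hl hr) _ (isUpperSet_Ici _) hJp).1
      (fun v => by rw [e5, e5]; exact ⟨(hU v).2, hU2 v⟩) m₀ hm₀
    have := gfst_mono (Set.mem_Ici.1 this)
    rw [hsum, map_dot_sum gfst] at this
    refine this.trans_eq ?_
    simp only [hl, hr, map_add, map_neg, map_act_toZ gfst, γ, Sum.elim_inl, Sum.elim_inr, gfst_mk,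
      mul_zero, sum_const_zero, neg_zero, zero_add]
  -- move one step backward from the chart `γ`
  have hbw : ∑ u, m₀ (Sum.inl u) * ξ u ≤ 2 * Real.cos (Real.pi / h') *
      ∑ u, m₀ (Sum.inl u) * ξ u - ∑ u, m₀ (Sum.inr u) * ξ u := by
    let γ' : V ⊕ V → Gm := Sum.elim
      (fun u => act (toZ B) (fun w => γ (Sum.inl w)) u + γ (Sum.inr u)) fun u => -γ (Sum.inl u)
    have hγ' : Indep γ' := indep_backward H.symmB hγ (fun _ => rfl) fun _ => rfl
    obtain ⟨σ, ν, hz⟩ := exists_chart A B γ' hγ'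
    have hy1 : ∀ v, ν.u (σ.y 1 v) = -γ (Sum.inl v) := fun v => hz (Sum.inr v)
    have hl : ∀ u, ν.u (σ.shift.z (Sum.inl u)) = γ (Sum.inl u) := by
      intro u
      change ν.u (σ.y 1 u)⁻¹ = _
      rw [ν.u_inv, hy1, neg_neg]
    have hr : ∀ u, ν.u (σ.shift.z (Sum.inr u)) = γ (Sum.inr u) := by
      intro u
      have := σ.u_step_neg ν 0 (fun v => by rw [zero_add, hy1]; exact neg_neg_of_pos (hγp _)) u
      simp only [zero_add, hy1, σ.u_zero, hz] at this
      change ν.u (σ.y 2 u) = _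
      simp only [γ', Sum.elim_inl, act_neg] at this
      rw [← sub_eq_add_neg, sub_eq_iff_eq_add, neg_add_cancel_left] at this
      exact this
    have hzs : ∀ i, ν.u (σ.shift.z i) = γ i := by
      rintro (u | u)
      · exact hl u
      · exact hr u
    have hU := (hS σ.shift ν (by simpa only [hzs] using hγ) _ (isUpperSet_Ici _) hJp).2
      (by simpa only [hzs, Set.mem_Ici] using hmin)
    simp only [e5] at hU
    have hU0 := fun v => (hstep σ ν _ (isUpperSet_Ici _) hJp
      (fun v => by rw [hy1]; exact (neg_neg_of_pos (hγp _)).ne) (fun v => (hU v).1) v).1 (hU v).2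
    have := (hS σ ν (by simpa only [hz] using hγ') _ (isUpperSet_Ici _) hJp).1
      (fun v => ⟨hU0 v, (hU v).1⟩) m₀ hm₀
    have := gfst_mono (Set.mem_Ici.1 this)
    rw [hsum, map_dot_sum gfst] at this
    refine this.trans_eq ?_
    simp only [hz, γ', γ, map_add, map_neg, map_act_toZ gfst, Sum.elim_inl, Sum.elim_inr,
      gfst_mk, hBξ, add_zero, mul_neg, sum_neg_distrib, ← sub_eq_add_neg, mul_sum]
    congr 1
    exact sum_congr rfl fun u _ => by ring
  have hρ : 2 * Real.cos (Real.pi / h') < 2 := by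
    have h2 : (2 : ℝ) ≤ h' := by exact_mod_cast H.two_le'
    have := Real.cos_lt_cos_of_nonneg_of_le_pi (x := 0) (y := Real.pi / h') le_rfl
      (div_le_self Real.pi_pos.le (by linarith)) (by have := Real.pi_pos; positivity)
    rw [Real.cos_zero] at this
    linarith
  have ha : 0 ≤ ∑ u, (m₀ (Sum.inl u) : ℝ) * ξ u :=
    sum_nonneg fun u _ => mul_nonneg (by exact_mod_cast hnn m₀ hm₀ _) (hξ u).le
  -- With `a` and `b` the two `ξ`-weighted sums and `ρ` the Perron eigenvalue, `hfw` and `hbw`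
  -- read `a ≤ b` and `a ≤ ρ a - b`; as `0 ≤ a` and `ρ < 2`, both sums vanish.
  have ha0 : ∑ u, (m₀ (Sum.inl u) : ℝ) * ξ u = 0 := by nlinarith
  have hb0 : ∑ u, (m₀ (Sum.inr u) : ℝ) * ξ u = 0 := by nlinarith
  have hz : ∀ f : V → ℤ, (∀ u, 0 ≤ f u) → ∑ u, (f u : ℝ) * ξ u = 0 → ∀ u, f u = 0 := by
    intro f hf hs u
    have := (sum_eq_zero_iff_of_nonneg fun u _ =>
      mul_nonneg (by exact_mod_cast hf u) (hξ u).le).1 hs u (mem_univ u)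
    exact_mod_cast (mul_eq_zero.1 this).resolve_right (hξ u).ne'
  have hm0 : m₀ = 0 := by
    funext i
    rcases i with u | u
    · exact hz (fun u => m₀ (Sum.inl u)) (fun u => hnn m₀ hm₀ _) ha0 u
    · exact hz (fun u => m₀ (Sum.inr u)) (fun u => hnn m₀ hm₀ _) hb0 u
  rw [hm0] at hd
  simp [dot] at hd

end
end ADEPeriodicity

/-! ### Reduction of the Y-system -/

namespace ADEPeriodicity
open Finset
set_option linter.unusedSectionVars false

section
variable {V : Type} [Fintype V] [DecidableEq V] {eps : V → ℤ} {A B : V → V → ℕ}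

theorem parity_of_ne (hbip : BipartiteData eps A B) {t : ℤ} {u v : V} (hv : Odd (t + eps v))
    (huv : A v u ≠ 0 ∨ B v u ≠ 0) : Even (t + eps u) := by
  obtain ⟨h01, -, -, -, -, hne, -⟩ := hbip
  have : eps v ≠ eps u := fun h => by
    have := hne v u h
    omega
  have := h01 u
  have := h01 v
  rw [Int.odd_iff] at hv
  rw [Int.even_iff]
  omega

theorem mem_prod_pow {F : Type*} [Field F] {P : F → Prop} (h1 : P 1)
    (hmul : ∀ x y, P x → P y → P (x * y)) (f : V → F) (n : V → ℕ)
    (h : ∀ u, n u ≠ 0 → P (f u)) : P (∏ u, f u ^ n u) := by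
  refine prod_induction _ P hmul h1 fun u _ => ?_
  by_cases hn : n u = 0
  · rwa [hn, pow_zero]
  · generalize n u = k
    induction k with
    | zero => rwa [pow_zero]
    | succ k ih => rw [pow_succ]; exact hmul _ _ ih (h u hn)

/-- Every value of the `Y`-system at a site of the correct parity is a subtraction-free
expression, hence satisfies any predicate closed under the semifield operations. -/
theorem ysystem_pos (hbip : BipartiteData eps A B)
    {Y : ℤ → V → FractionRing (MvPolynomial V ℚ)} (hY : IsYSystem eps A B Y)
    {P : FractionRing (MvPolynomial V ℚ) → Prop} (h1 : P 1) (hadd : ∀ x y, P x → P y → P (x + y))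
    (hmul : ∀ x y, P x → P y → P (x * y)) (hinv : ∀ x, P x → P x⁻¹) (h0 : ∀ x, P x → x ≠ 0)
    (hX : ∀ v, P (algebraMap (MvPolynomial V ℚ) _ (MvPolynomial.X v))) :
    ∀ t v, Even (t + eps v) → P (Y t v) := by
  have hR : ∀ t, (∀ v, Even (t + eps v) → P (Y t v)) → ∀ v, Odd (t + eps v) →
      P (Y (t + 1) v * Y (t - 1) v) := by
    intro t ht v hv
    rw [hY.2 t v hv, div_eq_mul_inv]
    refine hmul _ _ (mem_prod_pow h1 hmul _ _ fun u hu => hadd _ _ h1 ?_)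
      (hinv _ (mem_prod_pow h1 hmul _ _ fun u hu => hadd _ _ h1 (hinv _ ?_)))
    · exact ht u (parity_of_ne hbip hv (Or.inr hu))
    · exact ht u (parity_of_ne hbip hv (Or.inl hu))
  have hinit : (∀ v, Even (0 + eps v) → P (Y 0 v)) ∧ ∀ v, Even (1 + eps v) → P (Y 1 v) := by
    constructor
    · intro v hv
      have := hY.1 v
      rcases hbip.1 v with e | e
      · rw [← e, this]; exact hX v
      · rw [e] at hv; exact absurd hv (by decide)
    · intro v hv
      have := hY.1 v
      rcases hbip.1 v with e | e
      · rw [e] at hv; exact absurd hv (by decide)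
      · rw [← e, this]; exact hX v
  have hfw : ∀ n : ℕ, (∀ v, Even ((n : ℤ) + eps v) → P (Y n v)) ∧
      ∀ v, Even ((n : ℤ) + 1 + eps v) → P (Y (n + 1) v) := by
    intro n
    induction n with
    | zero => simpa using hinit
    | succ n ih =>
      push_cast
      refine ⟨ih.2, fun v hv => ?_⟩
      have hv' : Odd ((n : ℤ) + 1 + eps v) := by
        rw [Int.even_iff] at hv; rw [Int.odd_iff]; omega
      have hv0 : Even ((n : ℤ) + eps v) := by
        rw [Int.even_iff] at hv ⊢; omega
      have := hR _ ih.2 v hv'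
      rw [add_sub_cancel_right] at this
      have hz := h0 _ (ih.1 v hv0)
      rw [← mul_inv_cancel_right₀ hz (Y (n + 1 + 1) v)]
      exact hmul _ _ this (hinv _ (ih.1 v hv0))
  have hbw : ∀ n : ℕ, (∀ v, Even (-(n : ℤ) + eps v) → P (Y (-n) v)) ∧
      ∀ v, Even (-(n : ℤ) + 1 + eps v) → P (Y (-n + 1) v) := by
    intro n
    induction n with
    | zero => simpa using hinit
    | succ n ih =>
      have e : -((n + 1 : ℕ) : ℤ) = -n - 1 := by push_cast; ring
      rw [e, sub_add_cancel]
      refine ⟨fun v hv => ?_, ih.1⟩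
      have hv' : Odd (-(n : ℤ) + eps v) := by
        rw [Int.even_iff] at hv; rw [Int.odd_iff]; omega
      have hv0 : Even (-(n : ℤ) + 1 + eps v) := by
        rw [Int.even_iff] at hv ⊢; omega
      have := hR _ ih.1 v hv'
      have hz := h0 _ (ih.2 v hv0)
      rw [← inv_mul_cancel_left₀ hz (Y (-n - 1) v)]
      exact hmul _ _ (hinv _ (ih.2 v hv0)) this
  intro t
  obtain ⟨n, rfl | rfl⟩ := Int.eq_nat_or_neg t
  · exact (hfw n).1
  · exact (hbw n).1

end

theorem Adm.of_quiver {V : Type} [Fintype V] [DecidableEq V] {eps : V → ℤ} {A B : V → V → ℕ}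
    (hbip : BipartiteData eps A B) (hrec : RecurrentQuiver A B) (hadm : AdmissibleADE A B)
    {h h' : ℕ}
    (hcoxG : ∀ c : (graphOf A).ConnectedComponent,
      HasCoxeterNumber ((graphOf A).induce c.supp) h)
    (hcoxD : ∀ c : (graphOf B).ConnectedComponent,
      HasCoxeterNumber ((graphOf B).induce c.supp) h') (v : V) : Adm A B h h' := by
  obtain ⟨-, hA, hB, hA0, hB0, -, hdisj⟩ := hbip
  have pA := exists_perron A hA hA0 hadm.1 h hcoxG
  have pB := exists_perron B hB hB0 hadm.2.1 h' hcoxD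
  exact ⟨hA, hB, hadm.1, hadm.2.1, hdisj, hrec, pA.1 ⟨v⟩, pB.1 ⟨v⟩, pA.2, pB.2⟩

end ADEPeriodicity

open ADEPeriodicity in
/-- if `G(Q)` is an admissible ADE bigraph with Coxeter numbers `h` and `h'`, then
the `Y`-system associated with `Q` is periodic with period `2(h + h')`. -/
theorem ysystem_periodicity_of_admissibleADE
    {V : Type} [Fintype V] [DecidableEq V]
    (eps : V → ℤ) (A B : V → V → ℕ)
    (hbip : BipartiteData eps A B) (hrec : RecurrentQuiver A B)
    (hadm : AdmissibleADE A B)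
    (h h' : ℕ)
    (hcoxG : ∀ c : (graphOf A).ConnectedComponent,
      HasCoxeterNumber ((graphOf A).induce c.supp) h)
    (hcoxD : ∀ c : (graphOf B).ConnectedComponent,
      HasCoxeterNumber ((graphOf B).induce c.supp) h')
    (Y : ℤ → V → FractionRing (MvPolynomial V ℚ))
    (hY : IsYSystem eps A B Y) :
    ∀ (v : V) (t : ℤ), Even (t + eps v) → Y (t + 2 * ((h : ℤ) + h')) v = Y t v := by
  intro v t htv
  classical
  obtain ⟨P, h1, hadd, hmul, hinv, h0, hX⟩ := exists_pos V ℚ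
  have hP := ysystem_pos hbip hY h1 hadd hmul hinv h0 hX
  -- values at sites of the wrong parity are irrelevant and are replaced by `1`
  have hP' : ∀ t v, P (if Even (t + eps v) then Y t v else 1) := fun t v => by
    split_ifs with hv
    · exact hP t v hv
    · exact h1
  obtain ⟨y, l, hl, hs, hy0, hy1⟩ := exists_sol_of_pos A B P h1 hadd hmul hinv h0
    (fun u => if Even (t - 1 + eps u) then Y (t - 1) u else 1)
    (fun u => if Even (t + eps u) then Y t u else 1) (hP' _) (hP' _)
  have key : ∀ n : ℕ, (∀ u, Even (t - 1 + n + eps u) → (y n u : FractionRing _) = Y (t - 1 + n) u) ∧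
      ∀ u, Even (t + n + eps u) → (y (n + 1) u : FractionRing _) = Y (t + n) u := by
    intro n
    induction n with
    | zero =>
      simp only [Nat.cast_zero, add_zero, zero_add]
      exact ⟨fun u hu => by rw [hy0, if_pos hu], fun u hu => by rw [hy1, if_pos hu]⟩
    | succ n ih =>
      have e : t - 1 + ((n + 1 : ℕ) : ℤ) = t + n := by push_cast; ring
      rw [e]
      refine ⟨ih.2, fun u hu => ?_⟩
      have e' : t + ((n + 1 : ℕ) : ℤ) = t + n + 1 := by push_cast; ring
      have hodd : Odd (t + n + eps u) := by
        rw [Int.even_iff] at hu; rw [Int.odd_iff]; push_cast at hu; omega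
      have hev : Even (t - 1 + n + eps u) := by
        rw [Int.even_iff] at hu ⊢; push_cast at hu; omega
      have st := congrArg Units.val (hs n u)
      have sY := hY.2 _ u hodd
      rw [show t + n - 1 = t - 1 + n by ring, ← ih.1 u hev] at sY
      refine mul_right_cancel₀ (y n u).ne_zero ?_
      rw [e', sY, ← Units.val_mul, st, div_eq_mul_inv, div_eq_mul_inv, Units.val_mul]
      rw [Units.val_inv_eq_inv_val, Units.coe_prod, Units.coe_prod]
      congr 1
      · refine Finset.prod_congr rfl fun w _ => ?_
        by_cases hw : B u w = 0
        · rw [hw, pow_zero, pow_zero, Units.val_one]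
        · rw [Units.val_pow_eq_pow_val, hl, ih.2 w (parity_of_ne hbip hodd (Or.inr hw))]
      · congr 1
        refine Finset.prod_congr rfl fun w _ => ?_
        by_cases hw : A u w = 0
        · rw [hw, pow_zero, pow_zero, Units.val_one]
        · rw [Units.val_pow_eq_pow_val, Units.val_div_eq_div_val, hl, add_div,
            div_self (y (n + 1) w).ne_zero, one_div, add_comm,
            ih.2 w (parity_of_ne hbip hodd (Or.inl hw))]
  have hper := periodic (Adm.of_quiver hbip hrec hadm hcoxG hcoxD v)
    (⟨_, y, l, hl, hs⟩ : NSol A B) v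
  have hper' : y (1 + 2 * (h + h')) v = y 1 v := hper
  have k0 := (key 0).2 v (by simpa using htv)
  have k1 := (key (2 * (h + h'))).2 v (by
    rw [Int.even_iff] at htv ⊢; push_cast; omega)
  rw [add_comm, hper', ← zero_add 1, k0] at k1
  simpa using k1.symm
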